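/- Let k ≥ 2. There are no integers n, b, d with n > 5, 1 ≤ b ≤ 9 and d ≥ 2 such that L_n^{(k)} = b·10^{d}. In particular, no k-generalized Lucas number with at least three decimal digits is a power of 10 times a single digit (and in particular none is a power of 10). -/

import Mathlib

/-- Shifted `k`-generalized Lucas sequence: `genLucas k m` equals `L^{(k)}_{m - (k-2)}`,
so that index `m = 0` corresponds to `n = 2 - k`.  The initial values are
`L^{(k)}_{2-k} = ⋯ = L^{(k)}_{-1} = 0`, `L^{(k)}_0 = 2`, `L^{(k)}_1 = 1`, and each term
afterwards is the sum of the `k` preceding terms. -/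
def genLucas (k : ℕ) : ℕ → ℤ := fun m =>
  if h1 : m < k - 2 then 0
  else if h2 : m = k - 2 then 2
  else if h3 : m = k - 1 then 1
  else ∑ i ∈ Finset.range k, genLucas k (m - 1 - i)
decreasing_by omega

/-- The `k`-generalized Lucas number `L^{(k)}_n` for `n ≥ 0`. -/
def lucasL (k n : ℕ) : ℤ := genLucas k (n + k - 2)

/-!
If `k = 2`, or if `n ≤ k`, where `L_n = 3 * 2 ^ (n - 2)`, then `5 ∤ L_n`. For the
other indices let `α` be the dominant root of the `k`-step recurrence. The Binet-type estimate
`|L_n - c * α ^ (n - 1)| ≤ 3`, with `c = binetCoeff k α`, shows that `L_n = b * 10 ^ d` makes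
the linear form `log (c / b) - (d * log 10 - (n - 1) * log α)` exponentially small in `n`. When
`2 ^ k` is large compared with `n`, one has `L_n ≈ 3 * 2 ^ (n - 2)`, and `(3, 2, n - 2)` may take
the place of `(c, α, n - 1)`, with a form of size about `n / 2 ^ k`.

Baker's method bounds such forms from below. Its auxiliary function is an integral combination of
`A ^ x * α ^ y * γ ^ z` in which `log γ` is eliminated through the assumed smallness of the form.
The pigeonhole principle makes it vanish to high order at the first integers, and the Schwarz lemma
together with Liouville's inequality for the conjugates propagates the zeros, until a Vandermonde
determinant forces all coefficients to vanish. For `n ≥ 2 ^ 601` the resulting bound contradicts the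
upper bound in two ranges. If `2 ^ k ≤ 21 * n ^ 3`, the degree of `α` is only logarithmic in `n`.
Otherwise a congruence for `L_n` modulo a power of two shows that `2 ^ (2 * k - 2)` does not divide
`L_n`, while `2 ^ d` does; hence `n ≤ 8 * k`, and the form at `α = 2` is exponentially small in `n`.

For `n ≤ 2 ^ 601` the lower bounds come from Baker–Davenport reduction in fixed-point arithmetic,
for each `k < 1233` separately and with `α = 2` for all larger `k`. A second reduction leaves
`k < 43` and `n ≤ 105`, where the terms are computed.
-/

/-! ### Interpolation -/

section HermiteInterpolation

open Polynomial

theorem count_cons_le_analyticOrderAt_sub_mul {m : Multiset ℂ} {g : ℂ → ℂ} {t : ℂ} (s : ℂ)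
    (hg : Differentiable ℂ g) (ht : m.count t ≤ analyticOrderAt g t) :
    (s ::ₘ m).count t ≤ analyticOrderAt (fun z ↦ (z - s) * g z) t := by
  have hsub : AnalyticAt ℂ (fun z : ℂ ↦ z - s) t := by fun_prop
  rw [show (fun z ↦ (z - s) * g z) = (fun z ↦ z - s) * g from rfl,
    analyticOrderAt_mul hsub (hg.analyticAt t)]
  rcases eq_or_ne t s with rfl | hts
  · rw [Multiset.count_cons_self, analyticOrderAt_id_sub_const_self, add_comm]
    push_cast
    gcongr
  · rw [Multiset.count_cons_of_ne hts]
    exact ht.trans le_add_self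

theorem exists_taylor_polynomial {F : ℂ → ℂ} (hF : Differentiable ℂ F) (s : ℂ) (n : ℕ)
    {R δ : ℝ} (hR : 1 ≤ R) (hδ : 0 ≤ δ) (hs : ‖s‖ ≤ R)
    (hsmall : ∀ i < n, ‖iteratedDeriv i F s‖ ≤ δ) :
    ∃ H : ℂ[X], n ≤ analyticOrderAt (fun z ↦ F z - H.eval z) s ∧
      ∀ z : ℂ, ‖z‖ ≤ R → ‖H.eval z‖ ≤ (4 * R) ^ n * δ := by
  refine ⟨∑ i ∈ Finset.range n, C (iteratedDeriv i F s / i.factorial) * (X - C s) ^ i, ?_, ?_⟩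
  · have hshift : AnalyticAt ℂ (fun z ↦ F (z + s)) 0 := by
      have : Differentiable ℂ (fun z ↦ F (z + s)) := by fun_prop
      exact this.analyticAt 0
    obtain ⟨g, hg, hgF⟩ := hshift.exists_eq_sum_add_pow_mul n
    refine (natCast_le_analyticOrderAt
      ((hF.sub (Polynomial.differentiable _)).analyticAt s)).2 ?_
    refine ⟨fun z ↦ g (z - s), ?_, Filter.Eventually.of_forall fun z ↦ ?_⟩
    · have hg' : AnalyticAt ℂ g (s - s) := by simpa using hg
      exact hg'.comp_of_eq (f := fun z ↦ z - s) (by fun_prop) rfl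
    · have := hgF (z - s)
      simp only [sub_add_cancel, iteratedDeriv_comp_add_const, zero_add, smul_eq_mul] at this
      simp only [Pi.sub_apply, this, eval_finsetSum, eval_mul, eval_C, eval_pow, eval_sub,
        eval_X, smul_eq_mul]
      rw [sub_eq_iff_eq_add', add_left_inj]
      exact Finset.sum_congr rfl fun i _ ↦ by ring
  · intro z hz
    have hzs : ‖z - s‖ ≤ 2 * R := (norm_sub_le _ _).trans (by linarith)
    have hterm : ∀ i ∈ Finset.range n,
        ‖iteratedDeriv i F s / i.factorial * (z - s) ^ i‖ ≤ δ * (2 * R) ^ i := by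
      intro i hi
      have hfac : (1 : ℝ) ≤ i.factorial := by exact_mod_cast i.factorial_pos
      rw [norm_mul, norm_div, norm_pow, Complex.norm_natCast]
      gcongr
      exact (div_le_self (norm_nonneg _) hfac).trans (hsmall i (Finset.mem_range.1 hi))
    have hgeom : ∑ i ∈ Finset.range n, (2 * R) ^ i ≤ (4 * R) ^ n := by
      rw [geom_sum_eq (by linarith)]
      have hpow : (2 * R) ^ n ≤ (4 * R) ^ n := by gcongr; norm_num
      have : 0 ≤ (2 * R) ^ n := by positivity
      rw [div_le_iff₀ (by linarith)]
      nlinarith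
    simp only [eval_finsetSum, eval_mul, eval_C, eval_pow, eval_sub, eval_X]
    calc _ ≤ ∑ i ∈ Finset.range n, δ * (2 * R) ^ i := norm_sum_le_of_le _ hterm
      _ = δ * ∑ i ∈ Finset.range n, (2 * R) ^ i := by rw [Finset.mul_sum]
      _ ≤ (4 * R) ^ n * δ := by rw [mul_comm]; gcongr

/-- Neville's recursion: the interpolants obtained by leaving out `s` and `s'` combine to
`((z - s) H₁ - (z - s') H₂) / (s' - s)`. -/
theorem exists_hermite_interpolant_of_erase {F : ℂ → ℂ} (hF : Differentiable ℂ F) {R B : ℝ}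
    {m : Multiset ℂ} {s s' : ℂ} (hs : s ∈ m) (hs' : s' ∈ m) (hsR : ‖s‖ ≤ R) (hsR' : ‖s'‖ ≤ R)
    (hdist : 1 ≤ ‖s' - s‖) {H₁ H₂ : ℂ[X]}
    (hord₁ : ∀ t, (m.erase s).count t ≤ analyticOrderAt (fun z ↦ F z - H₁.eval z) t)
    (hord₂ : ∀ t, (m.erase s').count t ≤ analyticOrderAt (fun z ↦ F z - H₂.eval z) t)
    (hbd₁ : ∀ z : ℂ, ‖z‖ ≤ R → ‖H₁.eval z‖ ≤ B) (hbd₂ : ∀ z : ℂ, ‖z‖ ≤ R → ‖H₂.eval z‖ ≤ B) :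
    ∃ H : ℂ[X], (∀ t, m.count t ≤ analyticOrderAt (fun z ↦ F z - H.eval z) t) ∧
      ∀ z : ℂ, ‖z‖ ≤ R → ‖H.eval z‖ ≤ 4 * R * B := by
  have hne : s' - s ≠ 0 := norm_pos_iff.1 (by linarith)
  have hH₁ := H₁.differentiable
  have hH₂ := H₂.differentiable
  refine ⟨C (s' - s)⁻¹ * ((X - C s) * H₁ - (X - C s') * H₂), fun t ↦ ?_, fun z hz ↦ ?_⟩
  · have hcomb : (fun z ↦ F z - (C (s' - s)⁻¹ * ((X - C s) * H₁ - (X - C s') * H₂)).eval z) =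
        (fun _ ↦ (s' - s)⁻¹) * ((fun z ↦ (z - s) * (F z - H₁.eval z)) -
          fun z ↦ (z - s') * (F z - H₂.eval z)) := by
      ext z
      simp only [eval_mul, eval_C, eval_sub, eval_X, Pi.mul_apply, Pi.sub_apply]
      field_simp
      ring
    have h₁ := count_cons_le_analyticOrderAt_sub_mul s (hF.sub hH₁) (hord₁ t)
    have h₂ := count_cons_le_analyticOrderAt_sub_mul s' (hF.sub hH₂) (hord₂ t)
    rw [Multiset.cons_erase hs] at h₁
    rw [Multiset.cons_erase hs'] at h₂
    rw [hcomb, analyticOrderAt_mul (by fun_prop) (Differentiable.analyticAt (by fun_prop) t)]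
    exact ((le_min h₁ h₂).trans le_analyticOrderAt_sub).trans le_add_self
  · have hinv : ‖(s' - s)⁻¹‖ ≤ 1 := by rw [norm_inv]; exact inv_le_one_of_one_le₀ hdist
    have hR : 0 ≤ 2 * R := by linarith [norm_nonneg z]
    have hfactor : ∀ t, ‖t‖ ≤ R → ∀ H : ℂ[X], ‖H.eval z‖ ≤ B →
        ‖(z - t) * H.eval z‖ ≤ 2 * R * B := by
      intro t ht H hH
      rw [norm_mul]
      gcongr
      exact (norm_sub_le _ _).trans (by linarith)
    simp only [eval_mul, eval_C, eval_sub, eval_X]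
    rw [norm_mul]
    calc _ ≤ 1 * (‖(z - s) * H₁.eval z‖ + ‖(z - s') * H₂.eval z‖) := by
          gcongr; exact norm_sub_le _ _
      _ ≤ 1 * (2 * R * B + 2 * R * B) := by
          gcongr
          · exact hfactor s hsR H₁ (hbd₁ z hz)
          · exact hfactor s' hsR' H₂ (hbd₂ z hz)
      _ = 4 * R * B := by ring

theorem exists_hermite_interpolant {F : ℂ → ℂ} (hF : Differentiable ℂ F) {R δ : ℝ}
    (hR : 1 ≤ R) (hδ : 0 ≤ δ) (m : Multiset ℂ) (hm : ∀ s ∈ m, ‖s‖ ≤ R)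
    (hsep : ∀ s ∈ m, ∀ s' ∈ m, s ≠ s' → 1 ≤ ‖s - s'‖)
    (hsmall : ∀ s ∈ m, ∀ i < m.count s, ‖iteratedDeriv i F s‖ ≤ δ) :
    ∃ H : ℂ[X], (∀ s, m.count s ≤ analyticOrderAt (fun z ↦ F z - H.eval z) s) ∧
      ∀ z : ℂ, ‖z‖ ≤ R → ‖H.eval z‖ ≤ (4 * R) ^ m.card * δ := by
  induction hw : m.card generalizing m with
  | zero =>
    obtain rfl := Multiset.card_eq_zero.1 hw
    exact ⟨0, by simp, by simp [hδ]⟩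
  | succ w ih =>
    have ih_erase : ∀ s ∈ m, ∃ H : ℂ[X],
        (∀ t, (m.erase s).count t ≤ analyticOrderAt (fun z ↦ F z - H.eval z) t) ∧
        ∀ z : ℂ, ‖z‖ ≤ R → ‖H.eval z‖ ≤ (4 * R) ^ w * δ := by
      intro s hs
      have hsub {t : ℂ} (ht : t ∈ m.erase s) : t ∈ m := Multiset.mem_of_mem_erase ht
      refine ih (m.erase s) (fun t ht ↦ hm t (hsub ht))
        (fun t ht t' ht' ↦ hsep t (hsub ht) t' (hsub ht')) (fun t ht i hi ↦ hsmall t (hsub ht) i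
          (hi.trans_le (Multiset.count_le_of_le t (Multiset.erase_le s m)))) ?_
      rw [Multiset.card_erase_of_mem hs, hw, Nat.pred_succ]
    by_cases hne : ∃ s ∈ m, ∃ s' ∈ m, s ≠ s'
    · obtain ⟨s, hs, s', hs', hss⟩ := hne
      obtain ⟨H₁, hord₁, hbd₁⟩ := ih_erase s hs
      obtain ⟨H₂, hord₂, hbd₂⟩ := ih_erase s' hs'
      rw [pow_succ', mul_assoc]
      exact exists_hermite_interpolant_of_erase hF hs hs' (hm s hs) (hm s' hs')
        (hsep s' hs' s hs hss.symm) hord₁ hord₂ hbd₁ hbd₂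
    · push Not at hne
      obtain ⟨s, hs⟩ := Multiset.card_pos_iff_exists_mem.1 (by rw [hw]; exact w.succ_pos)
      obtain rfl : m = Multiset.replicate (w + 1) s :=
        Multiset.eq_replicate.2 ⟨hw, fun t ht ↦ hne t ht s hs⟩
      obtain ⟨H, hord, hbound⟩ := exists_taylor_polynomial hF s (w + 1) hR hδ (hm s hs)
        (by simpa using hsmall s hs)
      refine ⟨H, fun t ↦ ?_, hbound⟩
      rcases eq_or_ne t s with rfl | hts
      · simpa using hord
      · rw [Multiset.count_eq_zero.2 (mt Multiset.eq_of_mem_replicate hts)]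
        exact zero_le

end HermiteInterpolation

section SchwarzLemma

theorem exists_eq_sub_mul_of_count_cons_le_analyticOrderAt {G : ℂ → ℂ} (hG : Differentiable ℂ G)
    {s : ℂ} {m : Multiset ℂ} (hm : ∀ t, (s ::ₘ m).count t ≤ analyticOrderAt G t) :
    ∃ g : ℂ → ℂ, Differentiable ℂ g ∧ (∀ z, G z = (z - s) * g z) ∧
      ∀ t, m.count t ≤ analyticOrderAt g t := by
  have hGs : G s = 0 := by
    refine apply_eq_zero_of_analyticOrderAt_ne_zero fun h ↦ ?_
    simpa [h] using hm s
  have hd : Differentiable ℂ (dslope G s) := by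
    rw [← differentiableOn_univ]
    exact (Complex.differentiableOn_dslope Filter.univ_mem).2 hG.differentiableOn
  have hfactor : ∀ z, G z = (z - s) * dslope G s z := fun z ↦ by
    simpa [hGs] using (sub_smul_dslope G s z).symm
  refine ⟨dslope G s, hd, hfactor, fun t ↦ ?_⟩
  have ht := hm t
  rw [show G = (fun z ↦ z - s) * dslope G s from funext hfactor,
    analyticOrderAt_mul (by fun_prop) (hd.analyticAt t)] at ht
  rcases eq_or_ne t s with rfl | hts
  · rw [Multiset.count_cons_self, analyticOrderAt_id_sub_const_self, add_comm] at ht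
    push_cast at ht
    exact (ENat.add_le_add_iff_left ENat.one_ne_top).1 ht
  · rwa [Multiset.count_cons_of_ne hts, analyticOrderAt_id_sub_const_of_ne hts, zero_add] at ht

/-- Dividing by `z - s` costs a factor `4 r` on the circle `‖z‖ = 5 r`, hence on the whole disc by
the maximum principle, while multiplying back at `x` gains at most `r`. -/
theorem norm_le_div_four_pow_of_count_le_analyticOrderAt {G : ℂ → ℂ} (hG : Differentiable ℂ G)
    {r V : ℝ} (hr : 0 < r) (hV : ∀ z, ‖z‖ ≤ 5 * r → ‖G z‖ ≤ V) {x : ℂ} (hx : ‖x‖ ≤ 5 * r)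
    (m : Multiset ℂ) (hm : ∀ s ∈ m, ‖s‖ ≤ r) (hxm : ∀ s ∈ m, ‖x - s‖ ≤ r)
    (hord : ∀ t, m.count t ≤ analyticOrderAt G t) : ‖G x‖ ≤ V / 4 ^ m.card := by
  induction m using Multiset.induction generalizing G V with
  | empty => simpa using hV x hx
  | cons s m ih =>
    obtain ⟨g, hg, hGg, hgord⟩ := exists_eq_sub_mul_of_count_cons_le_analyticOrderAt hG hord
    have hs := hm s (Multiset.mem_cons_self s m)
    have hcircle : ∀ z ∈ frontier (Metric.ball (0 : ℂ) (5 * r)), ‖g z‖ ≤ V / (4 * r) := by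
      intro z hz
      rw [frontier_ball _ (by positivity), mem_sphere_zero_iff_norm] at hz
      have hzs : 4 * r ≤ ‖z - s‖ := by linarith [norm_sub_norm_le z s]
      rw [le_div_iff₀ (by positivity), mul_comm]
      calc 4 * r * ‖g z‖ ≤ ‖z - s‖ * ‖g z‖ := by gcongr
        _ = ‖G z‖ := by rw [hGg, norm_mul]
        _ ≤ V := hV z hz.le
    have hdisc : ∀ z, ‖z‖ ≤ 5 * r → ‖g z‖ ≤ V / (4 * r) := fun z hz ↦
      Complex.norm_le_of_forall_mem_frontier_norm_le Metric.isBounded_ball hg.diffContOnCl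
        hcircle (by simpa [closure_ball (0 : ℂ) (by positivity : 5 * r ≠ 0)] using hz)
    have hgx := ih hg hdisc (fun t ht ↦ hm t (Multiset.mem_cons_of_mem ht))
      (fun t ht ↦ hxm t (Multiset.mem_cons_of_mem ht)) hgord
    rw [hGg, norm_mul, Multiset.card_cons]
    calc ‖x - s‖ * ‖g x‖ ≤ r * (V / (4 * r) / 4 ^ m.card) := by
          gcongr; exact hxm s (Multiset.mem_cons_self s m)
      _ = V / 4 ^ (m.card + 1) := by field_simp; ring

theorem norm_le_of_small_iteratedDeriv {F : ℂ → ℂ} (hF : Differentiable ℂ F) {r V δ : ℝ}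
    (hr : 1 ≤ r) (hδ : 0 ≤ δ) (hV : ∀ z, ‖z‖ ≤ 5 * r → ‖F z‖ ≤ V) {x : ℂ} (hx : ‖x‖ ≤ r)
    (m : Multiset ℂ) (hm : ∀ s ∈ m, ‖s‖ ≤ r) (hxm : ∀ s ∈ m, ‖x - s‖ ≤ r)
    (hsep : ∀ s ∈ m, ∀ s' ∈ m, s ≠ s' → 1 ≤ ‖s - s'‖)
    (hsmall : ∀ s ∈ m, ∀ i < m.count s, ‖iteratedDeriv i F s‖ ≤ δ) :
    ‖F x‖ ≤ V / 4 ^ m.card + 2 * ((20 * r) ^ m.card * δ) := by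
  obtain ⟨H, hord, hH⟩ := exists_hermite_interpolant hF (R := 5 * r) (by linarith) hδ m
    (fun s hs ↦ (hm s hs).trans (by linarith)) hsep hsmall
  rw [show 4 * (5 * r) = 20 * r by ring] at hH
  set ε := (20 * r) ^ m.card * δ
  have hremainder := norm_le_div_four_pow_of_count_le_analyticOrderAt
    (hF.sub H.differentiable) (by linarith) (V := V + ε)
    (fun z hz ↦ (norm_sub_le _ _).trans (add_le_add (hV z hz) (hH z hz)))
    (by linarith) m hm hxm hord
  have hε : ε / 4 ^ m.card ≤ ε :=
    div_le_self (by positivity) (one_le_pow₀ (by norm_num))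
  calc ‖F x‖ = ‖(F x - H.eval x) + H.eval x‖ := by rw [sub_add_cancel]
    _ ≤ (V + ε) / 4 ^ m.card + ε :=
      (norm_add_le _ _).trans (add_le_add hremainder (hH x (by linarith)))
    _ ≤ V / 4 ^ m.card + 2 * ε := by rw [add_div]; linarith

/-- The nodes are `0, 1, …, S - 1`, each with multiplicity `τ`. -/
theorem norm_apply_natCast_le_of_small_iteratedDeriv {F : ℂ → ℂ} (hF : Differentiable ℂ F)
    {S S' τ : ℕ} (hS : S ≤ S') (hS' : 1 ≤ S') {V δ : ℝ} (hδ : 0 ≤ δ)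
    (hV : ∀ z : ℂ, ‖z‖ ≤ 5 * S' → ‖F z‖ ≤ V)
    (hsmall : ∀ s < S, ∀ i < τ, ‖iteratedDeriv i F (s : ℂ)‖ ≤ δ) {x : ℕ} (hx : x ≤ S') :
    ‖F x‖ ≤ V / 4 ^ (S * τ) + 2 * ((20 * S') ^ (S * τ) * δ) := by
  set nodes : Multiset ℂ := τ • (Multiset.range S).map (Nat.cast : ℕ → ℂ) with hnodes
  have hmem : ∀ s ∈ nodes, ∃ j < S, (j : ℂ) = s := fun s hs ↦ by
    simpa using Multiset.mem_of_mem_nsmul hs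
  have hcard : nodes.card = S * τ := by simp [hnodes, mul_comm]
  have hdist : ∀ a b : ℕ, ‖(a : ℂ) - b‖ = (|(a - b : ℤ)| : ℤ) := fun a b ↦ by
    rw [Int.cast_abs, ← Complex.norm_intCast]
    push_cast
    rfl
  have hle : ∀ a b : ℕ, a ≤ S' → b ≤ S' → ‖(a : ℂ) - b‖ ≤ S' := fun a b ha hb ↦ by
    rw [hdist]
    exact_mod_cast abs_le.2 ⟨by lia, by lia⟩
  rw [← hcard]
  refine norm_le_of_small_iteratedDeriv hF (by exact_mod_cast hS') hδ hV (by simpa using hx)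
    nodes ?_ ?_ ?_ ?_
  · intro s hs
    obtain ⟨j, hj, rfl⟩ := hmem s hs
    simpa using hle j 0 (hj.le.trans hS) (Nat.zero_le _)
  · intro s hs
    obtain ⟨j, hj, rfl⟩ := hmem s hs
    exact hle x j hx (hj.le.trans hS)
  · intro s hs s' hs' hss
    obtain ⟨j, -, rfl⟩ := hmem s hs
    obtain ⟨j', -, rfl⟩ := hmem s' hs'
    have hjj' : (j : ℤ) - j' ≠ 0 := sub_ne_zero.2 fun h ↦ hss (by exact_mod_cast h)
    rw [hdist]
    exact Int.cast_one_le_of_pos (abs_pos.2 hjj')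
  · intro s hs i hi
    obtain ⟨j, hj, rfl⟩ := hmem s hs
    refine hsmall j hj i (hi.trans_le ?_)
    have hnodup := (Multiset.nodup_range S).map (Nat.cast_injective (R := ℂ))
    rw [hnodes, Multiset.count_nsmul]
    exact mul_le_of_le_one_right' (Multiset.nodup_iff_count_le_one.1 hnodup _)

end SchwarzLemma

/-! ### Auxiliary functions -/

section Vandermonde

open Polynomial

/-- Test the vanishing power sums against the polynomial `∏ (X - y)` over the nodes `y ≠ r`. -/
theorem sum_filter_eq_zero_of_sum_mul_pow_eq_zero {ι K : Type*} [Field K] [DecidableEq K]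
    (Λ : Finset ι) (c x : ι → K) {N : ℕ} (hN : (Λ.image x).card ≤ N)
    (h : ∀ s < N, ∑ i ∈ Λ, c i * x i ^ s = 0) (r : K) :
    ∑ i ∈ Λ with x i = r, c i = 0 := by
  by_cases hr : r ∈ Λ.image x
  swap
  · rw [Finset.filter_false_of_mem fun i hi hir ↦
      hr (Finset.mem_image.2 ⟨i, hi, hir⟩), Finset.sum_empty]
  set Q : K[X] := ∏ y ∈ (Λ.image x).erase r, (X - C y) with hQ
  have hdeg : Q.natDegree < N := by
    rw [hQ, natDegree_finsetProd_X_sub_C_eq_card]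
    exact (Finset.card_erase_lt_of_mem hr).trans_le hN
  have hpoly : ∑ i ∈ Λ, c i * Q.eval (x i) = 0 := by
    simp_rw [Polynomial.eval_eq_sum_range' hdeg, Finset.mul_sum]
    rw [Finset.sum_comm]
    refine Finset.sum_eq_zero fun s hs ↦ ?_
    simp_rw [mul_left_comm (c _), ← Finset.mul_sum]
    rw [h s (Finset.mem_range.1 hs), mul_zero]
  have hQr : Q.eval r ≠ 0 := by
    rw [hQ, eval_prod, Finset.prod_ne_zero_iff]
    intro y hy
    rw [eval_sub, eval_X, eval_C]
    exact sub_ne_zero.2 (Finset.ne_of_mem_erase hy).symm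
  have hfiber : ∑ i ∈ Λ, c i * Q.eval (x i) = (∑ i ∈ Λ with x i = r, c i) * Q.eval r := by
    rw [Finset.sum_mul, Finset.sum_filter]
    refine Finset.sum_congr rfl fun i hi ↦ ?_
    split_ifs with hir
    · rw [hir]
    · rw [hQ, eval_prod, Finset.prod_eq_zero (Finset.mem_erase.2
        ⟨hir, Finset.mem_image_of_mem x hi⟩) (by simp), mul_zero]
  exact (mul_eq_zero.1 (hfiber.symm.trans hpoly)).resolve_right hQr

end Vandermonde

section Pigeonhole

theorem exists_int_combination_le {ι κ : Type*} [Fintype ι] [Fintype κ]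
    (w : κ → ι → ℝ) {X K : ℕ} {ε : ℝ} (hε : 0 < ε) (hw : ∀ k, ∑ i, X * |w k i| ≤ K * ε)
    (hcard : (2 * K + 1) ^ Fintype.card κ < X ^ Fintype.card ι) :
    ∃ p : ι → ℤ, p ≠ 0 ∧ (∀ i, |p i| ≤ X) ∧ ∀ k, |∑ i, p i * w k i| ≤ ε := by
  classical
  let value (p : ι → Fin X) (k : κ) : ℝ := ∑ i, ((p i : ℕ) : ℝ) * w k i
  let cell (p : ι → Fin X) (k : κ) : ℤ := ⌊value p k / ε⌋
  have hvalue : ∀ p k, |value p k| ≤ K * ε := by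
    intro p k
    refine (Finset.abs_sum_le_sum_abs _ _).trans ((Finset.sum_le_sum fun i _ ↦ ?_).trans (hw k))
    rw [abs_mul, Nat.abs_cast]
    gcongr
    exact (p i).2.le
  have hcell : ∀ p ∈ (Finset.univ : Finset (ι → Fin X)),
      cell p ∈ Fintype.piFinset fun _ ↦ Finset.Icc (-(K : ℤ)) K := by
    intro p _
    rw [Fintype.mem_piFinset]
    intro k
    obtain ⟨hlow, hupp⟩ := abs_le.1 (hvalue p k)
    rw [Finset.mem_Icc]
    constructor
    · rw [Int.le_floor, le_div_iff₀ hε]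
      push_cast
      linarith
    · have : (cell p k : ℝ) ≤ K := (Int.floor_le _).trans ((div_le_iff₀ hε).2 hupp)
      exact_mod_cast this
  have hcells : (Fintype.piFinset fun _ : κ ↦ Finset.Icc (-(K : ℤ)) K).card <
      (Finset.univ : Finset (ι → Fin X)).card := by
    rw [Fintype.card_piFinset]
    simp only [Int.card_Icc, Finset.prod_const, Finset.card_univ, Fintype.card_fun,
      Fintype.card_fin]
    rwa [show ((K : ℤ) + 1 - -K).toNat = 2 * K + 1 by lia]
  obtain ⟨p, -, q, -, hpq, hsame⟩ := Finset.exists_ne_map_eq_of_card_lt_of_maps_to hcells hcell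
  refine ⟨fun i ↦ (p i : ℕ) - (q i : ℕ), fun h ↦ hpq ?_, fun i ↦ ?_, fun k ↦ ?_⟩
  · funext i
    have := congrFun h i
    simp only [Pi.zero_apply] at this
    exact Fin.ext (by lia)
  · have := (p i).2
    have := (q i).2
    exact abs_le.2 ⟨by lia, by lia⟩
  · have hdiff : |value p k / ε - value q k / ε| < 1 :=
      Int.abs_sub_lt_one_of_floor_eq_floor (congrFun hsame k)
    rw [← sub_div, abs_div, abs_of_pos hε, div_lt_one hε, ← Finset.sum_sub_distrib] at hdiff
    simpa [sub_mul] using hdiff.le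

end Pigeonhole

section AuxiliaryFunctions

variable {ι : Type*}

/-- Coefficient of the `i`-th exponential in the mixed partial derivative of order `(m₁, m₂)` of
Baker's auxiliary function; `u i` and `v i` are its frequencies in the two variables. -/
def auxCoeff (p u v : ι → ℤ) (m₁ m₂ : ℕ) (i : ι) : ℤ := p i * (u i ^ m₁ * v i ^ m₂)

variable [Fintype ι]

/-- Value at the integer `s` of the mixed derivative of order `(m₁, m₂)` of the auxiliary function,
with the `i`-th exponential evaluated at `1` replaced by the algebraic number `ρ i`. -/
def auxSum (p u v : ι → ℤ) (ρ : ι → ℝ) (m₁ m₂ s : ℕ) : ℝ :=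
  ∑ i, auxCoeff p u v m₁ m₂ i * ρ i ^ s

/-- Mixed derivative of order `(m₁, m₂)` of the auxiliary function, restricted to the complex line
in direction `(a, l)`. -/
noncomputable def auxFun (p u v : ι → ℤ) (a l : ℝ) (m₁ m₂ : ℕ) (z : ℂ) : ℂ :=
  ∑ i, auxCoeff p u v m₁ m₂ i * Complex.exp ((u i * a + v i * l : ℝ) * z)

variable {p u v : ι → ℤ} {ρ : ι → ℝ} {a l : ℝ}

theorem differentiable_auxFun (m₁ m₂ : ℕ) : Differentiable ℂ (auxFun p u v a l m₁ m₂) := by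
  unfold auxFun
  fun_prop

theorem deriv_auxFun (m₁ m₂ : ℕ) : deriv (auxFun p u v a l m₁ m₂) =
    fun z ↦ a * auxFun p u v a l (m₁ + 1) m₂ z + l * auxFun p u v a l m₁ (m₂ + 1) z := by
  ext z
  refine HasDerivAt.deriv ?_
  unfold auxFun
  rw [Finset.mul_sum, Finset.mul_sum, ← Finset.sum_add_distrib]
  refine HasDerivAt.fun_sum fun i _ ↦ ?_
  refine (((hasDerivAt_id' z).const_mul ((u i * a + v i * l : ℝ) : ℂ)).cexp.const_mul
    (auxCoeff p u v m₁ m₂ i : ℂ)).congr_deriv ?_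
  push_cast [auxCoeff]
  ring

theorem norm_iteratedDeriv_auxFun_le (ha : 0 ≤ a) (hl : 0 ≤ l) {δ : ℝ} {z : ℂ} (i m₁ m₂ : ℕ)
    (hδ : ∀ k₁ k₂, k₁ + k₂ = m₁ + m₂ + i → ‖auxFun p u v a l k₁ k₂ z‖ ≤ δ) :
    ‖iteratedDeriv i (auxFun p u v a l m₁ m₂) z‖ ≤ (a + l) ^ i * δ := by
  induction i generalizing m₁ m₂ with
  | zero => simpa using hδ m₁ m₂ rfl
  | succ i ih =>
    have hd (k₁ k₂ : ℕ) : ContDiffAt ℂ i (auxFun p u v a l k₁ k₂) z :=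
      (differentiable_auxFun k₁ k₂).contDiff.contDiffAt
    rw [iteratedDeriv_succ', deriv_auxFun, iteratedDeriv_fun_add
      (contDiffAt_const.mul (hd _ _)) (contDiffAt_const.mul (hd _ _)),
      iteratedDeriv_const_mul_field, iteratedDeriv_const_mul_field]
    have h₁ := ih (m₁ + 1) m₂ fun k₁ k₂ hk ↦ hδ k₁ k₂ (by lia)
    have h₂ := ih m₁ (m₂ + 1) fun k₁ k₂ hk ↦ hδ k₁ k₂ (by lia)
    refine (norm_add_le _ _).trans ?_
    rw [norm_mul, norm_mul, Complex.norm_real, Complex.norm_real, Real.norm_of_nonneg ha,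
      Real.norm_of_nonneg hl]
    calc _ ≤ a * ((a + l) ^ i * δ) + l * ((a + l) ^ i * δ) := by gcongr
      _ = (a + l) ^ (i + 1) * δ := by ring

/-- The zeros of the auxiliary sums at `0, …, S - 1` force the next ones to be too small for the
Liouville gap `κ`. -/
theorem auxSum_eq_zero_of_extrapolation (ha : 0 ≤ a) (hl : 0 ≤ l) (hal : a + l ≤ 4)
    {S S' τ T T' : ℕ} (hS : S ≤ S') (hS' : 1 ≤ S') (hT : T' ≤ T) {V ε κ : ℝ} (hε : 0 ≤ ε)
    (hzero : ∀ m₁ m₂ s, m₁ + m₂ < T' → s < S → auxSum p u v ρ m₁ m₂ s = 0)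
    (happrox : ∀ m₁ m₂ s, m₁ + m₂ < T → s ≤ S' →
      ‖(auxSum p u v ρ m₁ m₂ s : ℂ) - auxFun p u v a l m₁ m₂ s‖ ≤ ε)
    (hV : ∀ m₁ m₂, m₁ + m₂ < T → ∀ z : ℂ, ‖z‖ ≤ 5 * S' → ‖auxFun p u v a l m₁ m₂ z‖ ≤ V)
    (hgap : ∀ m₁ m₂ s, m₁ + m₂ < T → s ≤ S' → auxSum p u v ρ m₁ m₂ s ≠ 0 →
      κ ≤ |auxSum p u v ρ m₁ m₂ s|)
    (hκ : V / 4 ^ (S * τ) + 2 * ((20 * S') ^ (S * τ) * (4 ^ τ * ε)) + ε < κ)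
    {m₁ m₂ s : ℕ} (hm : m₁ + m₂ + τ ≤ T') (hmT : m₁ + m₂ < T) (hs : s ≤ S') :
    auxSum p u v ρ m₁ m₂ s = 0 := by
  by_contra hne
  have hderiv : ∀ t < S, ∀ i < τ,
      ‖iteratedDeriv i (auxFun p u v a l m₁ m₂) (t : ℂ)‖ ≤ 4 ^ τ * ε := by
    intro t ht i hi
    have hsmall : ∀ k₁ k₂, k₁ + k₂ = m₁ + m₂ + i → ‖auxFun p u v a l k₁ k₂ t‖ ≤ ε := by
      intro k₁ k₂ hk
      have := happrox k₁ k₂ t (by lia) (ht.le.trans hS)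
      rwa [hzero k₁ k₂ t (by lia) ht, Complex.ofReal_zero, zero_sub, norm_neg] at this
    refine (norm_iteratedDeriv_auxFun_le ha hl i m₁ m₂ hsmall).trans ?_
    gcongr ?_ * ε
    exact (pow_le_pow_left₀ (by positivity) hal i).trans
      (pow_le_pow_right₀ (by norm_num) hi.le)
  have hfun := norm_apply_natCast_le_of_small_iteratedDeriv (differentiable_auxFun m₁ m₂) hS hS'
    (by positivity) (hV m₁ m₂ hmT) hderiv hs
  have hsum : |auxSum p u v ρ m₁ m₂ s| ≤ ‖auxFun p u v a l m₁ m₂ s‖ + ε := by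
    have := norm_le_norm_add_norm_sub (auxFun p u v a l m₁ m₂ s) (auxSum p u v ρ m₁ m₂ s)
    rw [Complex.norm_real, Real.norm_eq_abs] at this
    exact this.trans (add_le_add le_rfl (by
      rw [norm_sub_rev]
      exact happrox m₁ m₂ s hmT hs))
  linarith [hgap m₁ m₂ s hmT hs hne]

end AuxiliaryFunctions

/-! ### Baker's lower bound -/

section SizeFunctions

/-- A notion of size for numbers in a ring `ℤ[α]` of degree `D`, encoded by the relation `P x a`:
"`x` has size at most `a`" (think of the house of a conjugate of `x`). The last field is the
Liouville inequality. -/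
structure SizeBound (P : ℝ → ℝ → Prop) (α : ℝ) (D : ℕ) : Prop where
  intCast (z : ℤ) : P z |(z : ℝ)|
  add {x y a b : ℝ} : P x a → P y b → P (x + y) (a + b)
  mul {x y a b : ℝ} : P x a → P y b → P (x * y) (a * b)
  generator : P α 1
  mono {x a b : ℝ} : P x a → a ≤ b → P x b
  liouville {x a : ℝ} : P x a → 1 ≤ a → x ≠ 0 → 1 ≤ |x| * a ^ D

/-- `γ` is a quotient of two numbers of size at most `c`, the denominator being at most `c` in
absolute value as well. -/
def IsSizedQuotient (P : ℝ → ℝ → Prop) (c γ : ℝ) : Prop :=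
  ∃ g q : ℝ, q ≠ 0 ∧ γ = g / q ∧ P g c ∧ P q c ∧ |q| ≤ c

namespace SizeBound

variable {P : ℝ → ℝ → Prop} {α : ℝ} {D : ℕ}

theorem pow (h : SizeBound P α D) {x a : ℝ} (hx : P x a) (n : ℕ) : P (x ^ n) (a ^ n) := by
  induction n with
  | zero => simpa using h.intCast 1
  | succ n ih =>
    rw [pow_succ, pow_succ]
    exact h.mul ih hx

theorem sum (h : SizeBound P α D) {ι : Type*} (s : Finset ι) {f : ι → ℝ} {b : ℝ}
    (hb : ∀ i ∈ s, P (f i) b) : P (∑ i ∈ s, f i) (s.card * b) := by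
  classical
  induction s using Finset.induction_on with
  | empty => simpa using h.intCast 0
  | insert i s hi ih =>
    rw [Finset.sum_insert hi, Finset.card_insert_of_notMem hi]
    convert h.add (hb i (Finset.mem_insert_self i s))
      (ih fun j hj ↦ hb j (Finset.mem_insert_of_mem hj)) using 1
    push_cast
    ring

end SizeBound

end SizeFunctions

section BakerParameters

theorem pow_fiftyEight_le_two_pow {M : ℕ} (hM : 600 ≤ M) : M ^ 58 ≤ 2 ^ M := by
  induction M, hM using Nat.le_induction with
  | base =>
    rw [show (600 : ℕ) = 200 * 3 from rfl, pow_mul]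
    norm_num
  | succ M hM ih =>
    have hratio : 600 ^ 58 * (M + 1) ^ 58 ≤ 600 ^ 58 * (2 * M ^ 58) := by
      calc 600 ^ 58 * (M + 1) ^ 58 = (600 * (M + 1)) ^ 58 := (mul_pow _ _ _).symm
        _ ≤ (601 * M) ^ 58 := Nat.pow_le_pow_left (by lia) _
        _ = 601 ^ 58 * M ^ 58 := mul_pow _ _ _
        _ ≤ 2 * 600 ^ 58 * M ^ 58 := Nat.mul_le_mul_right _ (by norm_num)
        _ = 600 ^ 58 * (2 * M ^ 58) := by ring
    have := Nat.le_of_mul_le_mul_left hratio (by positivity)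
    rw [pow_succ 2]
    lia

/-- Exponent such that `2 ^ bakerExponent M s` bounds the size of the auxiliary sums at `s`: the
summands account for the number of terms, the coefficients, the mixed derivative of order less than
`256 * M ^ 16`, and the `s`-th powers. -/
def bakerExponent (M s : ℕ) : ℕ := M + M ^ 18 + 512 * M ^ 17 + 2 * M ^ 14 * s

variable {M S : ℕ}

theorem bakerExponent_mono : Monotone (bakerExponent M) := fun s t hst ↦ by
  unfold bakerExponent
  gcongr

theorem bakerExponent_zero_le (hM : 600 ≤ M) (hS : M ^ 4 ≤ S) :
    M + M ^ 18 + 512 * M ^ 17 ≤ 2 * (M ^ 14 * S) := by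
  have hY : M ^ 18 ≤ M ^ 14 * S := by
    calc M ^ 18 = M ^ 14 * M ^ 4 := by ring
      _ ≤ M ^ 14 * S := by gcongr
  have h17 : 600 * M ^ 17 ≤ M ^ 18 := by
    calc 600 * M ^ 17 ≤ M * M ^ 17 := by gcongr
      _ = M ^ 18 := by ring
  have : M ≤ M ^ 17 := Nat.le_self_pow (by norm_num) M
  lia

theorem extrapolation_exponent_le (hM : 600 ≤ M) (hS : M ^ 4 ≤ S) :
    bakerExponent M 0 + 10 * M ^ 14 * (M * S) + 5 * M * bakerExponent M (M * S) + 2 ≤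
      2 * (S * (6 * M ^ 16)) := by
  have hY := bakerExponent_zero_le hM hS
  have hY1 : 1 ≤ M ^ 14 * S := Nat.mul_pos (by positivity) ((by positivity : 0 < M ^ 4).trans_le hS)
  set Y := M ^ 14 * S with hYdef
  have hβ : bakerExponent M (M * S) ≤ 2 * Y + 2 * M * Y := by
    calc bakerExponent M (M * S) = M + M ^ 18 + 512 * M ^ 17 + 2 * M * Y := by
          rw [hYdef, bakerExponent]
          ring
      _ ≤ _ := by lia
  have hMM : 600 * (M * Y) ≤ M ^ 2 * Y := by
    rw [sq, mul_assoc]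
    gcongr
  have hMY : 600 * Y ≤ M * Y := by gcongr
  calc bakerExponent M 0 + 10 * M ^ 14 * (M * S) + 5 * M * bakerExponent M (M * S) + 2
      = (M + M ^ 18 + 512 * M ^ 17) + 10 * (M * Y) + 5 * M * bakerExponent M (M * S) + 2 := by
        rw [hYdef, bakerExponent]
        ring
    _ ≤ 2 * Y + 10 * (M * Y) + 5 * M * (2 * Y + 2 * M * Y) + 2 := by gcongr
    _ = 2 * Y + 20 * (M * Y) + 10 * (M ^ 2 * Y) + 2 := by ring
    _ ≤ 12 * (M ^ 2 * Y) := by lia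
    _ = 2 * (S * (6 * M ^ 16)) := by
        rw [hYdef]
        ring

theorem approximation_exponent_le {e : ℕ} (hM : 600 ≤ M) (hS : M ^ 4 ≤ S) (hS' : S ≤ M ^ 39)
    (he : 2 ^ M ≤ 16 * e) :
    M * (S * (6 * M ^ 16)) + 2 * (6 * M ^ 16) + (bakerExponent M (M * S) + 2 * M) +
      5 * M * bakerExponent M (M * S) + 3 ≤ e := by
  have hext := extrapolation_exponent_le hM hS
  have hβ : bakerExponent M (M * S) ≤ M * bakerExponent M (M * S) :=
    Nat.le_mul_of_pos_left _ (by lia)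
  have hM0 : M ≤ bakerExponent M 0 := by
    unfold bakerExponent
    lia
  set Z := S * M ^ 16 with hZ
  have hSτ : S * (6 * M ^ 16) = 6 * Z := by
    rw [hZ]
    ring
  have hτ : M ^ 16 ≤ Z := Nat.le_mul_of_pos_left _ ((by positivity : 0 < M ^ 4).trans_le hS)
  have hMZ : 600 * Z ≤ M * Z := by gcongr
  have hZ56 : Z ≤ M ^ 39 * M ^ 16 := Nat.mul_le_mul_right _ hS'
  have he58 : 16 * (20 * (M * Z)) ≤ 16 * e := by
    calc 16 * (20 * (M * Z)) ≤ 600 * 600 * (M * Z) := by lia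
      _ ≤ M * M * (M * (M ^ 39 * M ^ 16)) := by gcongr
      _ = M ^ 58 := by ring
      _ ≤ 16 * e := (pow_fiftyEight_le_two_pow hM).trans he
  rw [mul_assoc 5] at hext
  rw [mul_assoc 5, hSτ, mul_left_comm]
  rw [hSτ] at hext
  lia

theorem pigeonhole_exponent_lt (hM : 600 ≤ M) :
    (bakerExponent M (M ^ 4) + 5 * M * bakerExponent M (M ^ 4) + 3) *
      ((256 * M ^ 16) ^ 2 * M ^ 4) < M ^ 18 * (M ^ 13 * (M ^ 14 * M ^ 13)) := by
  have hβ : bakerExponent M (M ^ 4) ≤ 4 * M ^ 18 := by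
    calc bakerExponent M (M ^ 4) = M + M ^ 18 + 512 * M ^ 17 + 2 * (M ^ 14 * M ^ 4) := by
          rw [bakerExponent]
          ring
      _ ≤ 4 * (M ^ 14 * M ^ 4) := by
          have := bakerExponent_zero_le hM le_rfl
          lia
      _ = 4 * M ^ 18 := by ring
  have h19 : 600 * M ^ 18 ≤ M * M ^ 18 := by gcongr
  have h18 : 1 ≤ M ^ 18 := Nat.one_le_pow _ _ (by lia)
  calc _ ≤ (4 * M ^ 18 + 5 * M * (4 * M ^ 18) + 3) * ((256 * M ^ 16) ^ 2 * M ^ 4) := by gcongr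
    _ ≤ (28 * (M * M ^ 18)) * ((256 * M ^ 16) ^ 2 * M ^ 4) := by
        gcongr
        lia
    _ = 28 * 65536 * M ^ 55 := by ring
    _ < 600 * 600 * 600 * M ^ 55 := Nat.mul_lt_mul_of_pos_right (by norm_num) (by positivity)
    _ ≤ M * M * M * M ^ 55 := by gcongr
    _ = _ := by ring

end BakerParameters

section BakerTheorem

open Real

/-- Indices `(x, y, z)` of the exponentials in Baker's auxiliary function, standing for the monomial
`A ^ x * α ^ y * γ ^ z`. -/
abbrev BakerIndex (M : ℕ) : Type := Fin (M ^ 13) × Fin (M ^ 14) × Fin (M ^ 13)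

variable {M A n d : ℕ} {α γ : ℝ}

/-- Frequency in the first variable after eliminating `log γ` through
`log γ ≈ d * log A - n * log α`. -/
def bakerFreqA (d : ℕ) (i : BakerIndex M) : ℤ := (i.1 : ℕ) + d * (i.2.2 : ℕ)

/-- Frequency in the second variable after eliminating `log γ` through
`log γ ≈ d * log A - n * log α`. -/
def bakerFreqα (n : ℕ) (i : BakerIndex M) : ℤ := (i.2.1 : ℕ) - n * (i.2.2 : ℕ)

/-- The monomial `A ^ x * α ^ y * γ ^ z` with index `(x, y, z)`. -/
def bakerMonomial (A : ℕ) (α γ : ℝ) (i : BakerIndex M) : ℝ :=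
  A ^ (i.1 : ℕ) * α ^ (i.2.1 : ℕ) * γ ^ (i.2.2 : ℕ)

/-- The range of parameters in which Baker's method is applied to the linear form
`log γ - (d * log A - n * log α)`; the integer `M` is essentially `log₂ n`. -/
structure BakerParameters (M A n d : ℕ) (α γ : ℝ) : Prop where
  le_M : 600 ≤ M
  two_le_A : 2 ≤ A
  A_le_ten : A ≤ 10
  one_lt_α : 1 < α
  α_le_two : α ≤ 2
  γ_pos : 0 < γ
  abs_log_γ_le : |log γ| ≤ 4
  n_lt : n < 2 ^ (M + 1)
  d_le : d ≤ n
  le_d : 2 ^ M ≤ 8 * d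

theorem exp_le_two_pow {N : ℕ} {x : ℝ} (hx : x ≤ N) : exp x ≤ 2 ^ (2 * N) := by
  calc exp x ≤ exp (N * 1) := exp_le_exp.2 (by simpa using hx)
    _ = exp 1 ^ N := exp_nat_mul 1 N
    _ ≤ 4 ^ N := pow_le_pow_left₀ (exp_pos _).le (by linarith [exp_one_lt_d9]) N
    _ = 2 ^ (2 * N) := by
        rw [pow_mul]
        norm_num

theorem card_bakerIndex (M : ℕ) : Fintype.card (BakerIndex M) = M ^ 40 := by
  simp only [Fintype.card_prod, Fintype.card_fin]
  ring

namespace BakerParameters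

variable (h : BakerParameters M A n d α γ)

include h

theorem M_pow_le {j : ℕ} (hj : j ≤ 58) : M ^ j ≤ 2 ^ M :=
  (Nat.pow_le_pow_right (by linarith [h.le_M]) hj).trans (pow_fiftyEight_le_two_pow h.le_M)

theorem sum_le {f : BakerIndex M → ℝ} {B : ℝ} (hB : 0 ≤ B) (hf : ∀ i, f i ≤ B) :
    ∑ i, f i ≤ 2 ^ M * B := by
  have hcard : (Fintype.card (BakerIndex M) : ℝ) ≤ 2 ^ M := by
    rw [card_bakerIndex]
    exact_mod_cast h.M_pow_le (by norm_num)
  calc ∑ i, f i ≤ Fintype.card (BakerIndex M) • B := Finset.sum_le_card_nsmul _ _ _ fun i _ ↦ hf i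
    _ ≤ 2 ^ M * B := by
        rw [nsmul_eq_mul]
        gcongr

section Frequencies

theorem pow_mul_le_two_pow : 2 ^ (M + 1) * M ^ 13 + M ^ 14 ≤ 2 ^ (2 * M) := by
  have hM := h.le_M
  have h15 : 3 * M ^ 14 ≤ 2 ^ M := by
    calc 3 * M ^ 14 ≤ M * M ^ 14 := by
          gcongr
          lia
      _ = M ^ 15 := by ring
      _ ≤ 2 ^ M := h.M_pow_le (by norm_num)
  have h13 : M ^ 13 ≤ M ^ 14 := Nat.pow_le_pow_right (by lia) (by norm_num)
  calc 2 ^ (M + 1) * M ^ 13 + M ^ 14 ≤ 2 ^ (M + 1) * M ^ 14 + 2 ^ M * M ^ 14 := by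
        gcongr
        exact Nat.le_mul_of_pos_left _ (by positivity)
    _ = 2 ^ M * (3 * M ^ 14) := by ring
    _ ≤ 2 ^ M * 2 ^ M := by gcongr
    _ = 2 ^ (2 * M) := by rw [two_mul, pow_add]

theorem abs_bakerFreqA_le (i : BakerIndex M) : |bakerFreqA d i| ≤ 2 ^ (2 * M) := by
  have hd : d * (i.2.2 : ℕ) ≤ 2 ^ (M + 1) * M ^ 13 :=
    Nat.mul_le_mul (h.d_le.trans h.n_lt.le) i.2.2.2.le
  have h13 : M ^ 13 ≤ M ^ 14 := Nat.pow_le_pow_right (by linarith [h.le_M]) (by norm_num)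
  rw [bakerFreqA, abs_of_nonneg (by positivity)]
  exact_mod_cast (add_comm _ _).trans_le
    ((Nat.add_le_add hd (i.1.2.le.trans h13)).trans h.pow_mul_le_two_pow)

theorem abs_bakerFreqα_le (i : BakerIndex M) : |bakerFreqα n i| ≤ 2 ^ (2 * M) := by
  have hn : n * (i.2.2 : ℕ) ≤ 2 ^ (M + 1) * M ^ 13 := Nat.mul_le_mul h.n_lt.le i.2.2.2.le
  have hy := i.2.1.2
  have hsum := h.pow_mul_le_two_pow
  zify at hn hy hsum
  rw [bakerFreqα, abs_le]
  constructor <;> lia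

theorem abs_freq_mul_le {m₁ m₂ : ℕ} (hm : m₁ + m₂ < 256 * M ^ 16) (i : BakerIndex M) :
    |bakerFreqA d i ^ m₁ * bakerFreqα n i ^ m₂| ≤ 2 ^ (512 * M ^ 17) := by
  rw [abs_mul, abs_pow, abs_pow]
  calc |bakerFreqA d i| ^ m₁ * |bakerFreqα n i| ^ m₂ ≤ (2 ^ (2 * M)) ^ m₁ * (2 ^ (2 * M)) ^ m₂ := by
        gcongr
        exacts [h.abs_bakerFreqA_le i, h.abs_bakerFreqα_le i]
    _ = (2 ^ (2 * M)) ^ (m₁ + m₂) := (pow_add _ _ _).symm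
    _ ≤ (2 ^ (2 * M)) ^ (256 * M ^ 16) :=
        pow_le_pow_right₀ (one_le_pow₀ (by norm_num)) hm.le
    _ = 2 ^ (512 * M ^ 17) := by
        rw [← pow_mul]
        congr 1
        ring

end Frequencies

section Exponents

theorem A_pos : (0 : ℝ) < A := by exact_mod_cast Nat.lt_of_lt_of_le two_pos h.two_le_A

theorem log_A_le : log A ≤ 3 := by
  have hexp : (10 : ℝ) ≤ exp 3 := by
    have := pow_le_pow_left₀ (by norm_num) exp_one_gt_d9.le 3
    rw [← exp_nat_mul] at this
    norm_num at this
    linarith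
  rw [log_le_iff_le_exp h.A_pos]
  exact le_trans (by exact_mod_cast h.A_le_ten) hexp

theorem log_α_le : log α ≤ 9 / 10 :=
  (log_le_log (by linarith [h.one_lt_α]) h.α_le_two).trans (by linarith [log_two_lt_d9])

theorem log_α_nonneg : 0 ≤ log α := log_nonneg h.one_lt_α.le

theorem abs_exponent_le (i : BakerIndex M) {t : ℝ} (ht : |t| ≤ 5) :
    |(i.1 : ℕ) * log A + (i.2.1 : ℕ) * log α + (i.2.2 : ℕ) * t| ≤ (M ^ 14 : ℕ) := by
  have hx : ((i.1 : ℕ) : ℝ) ≤ M ^ 13 := by exact_mod_cast i.1.2.le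
  have hy : ((i.2.1 : ℕ) : ℝ) ≤ M ^ 14 := by exact_mod_cast i.2.1.2.le
  have hz : ((i.2.2 : ℕ) : ℝ) ≤ M ^ 13 := by exact_mod_cast i.2.2.2.le
  have hM : (600 : ℝ) * M ^ 13 ≤ M ^ 14 := by
    rw [pow_succ' (M : ℝ) 13]
    gcongr
    exact_mod_cast h.le_M
  have hA := h.log_A_le
  have hα₀ := h.log_α_nonneg
  have hα := h.log_α_le
  calc _ ≤ |(i.1 : ℕ) * log A| + |(i.2.1 : ℕ) * log α| + |(i.2.2 : ℕ) * t| := abs_add_three _ _ _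
    _ = (i.1 : ℕ) * log A + (i.2.1 : ℕ) * log α + (i.2.2 : ℕ) * |t| := by
        rw [abs_mul, abs_mul, abs_mul, abs_of_nonneg hα₀,
          abs_of_nonneg (log_natCast_nonneg A)]
        simp only [Nat.abs_cast]
    _ ≤ M ^ 13 * 3 + M ^ 14 * (9 / 10) + M ^ 13 * 5 := by
        gcongr
    _ ≤ (M ^ 14 : ℕ) := by
        push_cast
        linarith

theorem bakerMonomial_eq_exp (i : BakerIndex M) : bakerMonomial A α γ i =
    exp ((i.1 : ℕ) * log A + (i.2.1 : ℕ) * log α + (i.2.2 : ℕ) * log γ) := by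
  rw [exp_add, exp_add, exp_nat_mul, exp_nat_mul, exp_nat_mul, exp_log h.A_pos,
    exp_log (by linarith [h.one_lt_α]), exp_log h.γ_pos, bakerMonomial]

theorem abs_bakerMonomial_pow_le (i : BakerIndex M) (s : ℕ) :
    |bakerMonomial A α γ i ^ s| ≤ 2 ^ (2 * M ^ 14 * s) := by
  rw [h.bakerMonomial_eq_exp, ← exp_nat_mul, abs_exp, mul_assoc]
  refine exp_le_two_pow ?_
  rw [Nat.cast_mul, mul_comm]
  gcongr
  exact (le_abs_self _).trans (h.abs_exponent_le i (h.abs_log_γ_le.trans (by norm_num)))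

omit h in
theorem freq_mul_log_add (a l : ℝ) (i : BakerIndex M) :
    (bakerFreqA d i : ℝ) * a + bakerFreqα n i * l =
      (i.1 : ℕ) * a + (i.2.1 : ℕ) * l + (i.2.2 : ℕ) * (d * a - n * l) := by
  push_cast [bakerFreqA, bakerFreqα]
  ring

theorem abs_linear_combination_le (hΛ : |log γ - (d * log A - n * log α)| ≤ 1) :
    |d * log A - n * log α| ≤ 5 := by
  have := abs_sub_abs_le_abs_sub (d * log A - n * log α) (log γ)
  rw [abs_sub_comm (log γ)] at hΛ
  linarith [h.abs_log_γ_le]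

theorem abs_freq_log_le (hΛ : |log γ - (d * log A - n * log α)| ≤ 1) (i : BakerIndex M) :
    |bakerFreqA d i * log A + bakerFreqα n i * log α| ≤ (M ^ 14 : ℕ) := by
  rw [freq_mul_log_add]
  exact h.abs_exponent_le i (h.abs_linear_combination_le hΛ)

end Exponents

end BakerParameters

/-- The auxiliary sums of Baker's method: mixed derivatives at `s`, with exact monomials. -/
abbrev bakerSum (A n d : ℕ) (α γ : ℝ) (p : BakerIndex M → ℤ) : ℕ → ℕ → ℕ → ℝ :=
  auxSum p (bakerFreqA d) (bakerFreqα n) (bakerMonomial A α γ)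

/-- The entire functions of Baker's method, which nearly interpolate `bakerSum`. -/
noncomputable abbrev bakerFun (A n d : ℕ) (α : ℝ) (p : BakerIndex M → ℤ) : ℕ → ℕ → ℂ → ℂ :=
  auxFun p (bakerFreqA d) (bakerFreqα n) (log A) (log α)

namespace BakerParameters

variable (h : BakerParameters M A n d α γ) {p : BakerIndex M → ℤ} {m₁ m₂ s S e : ℕ}

include h

section Estimates

variable (hp : ∀ i, |p i| ≤ 2 ^ M ^ 18) (hm : m₁ + m₂ < 256 * M ^ 16)

include hp hm

theorem abs_auxCoeff_le (i : BakerIndex M) :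
    |auxCoeff p (bakerFreqA d) (bakerFreqα n) m₁ m₂ i| ≤ 2 ^ (M ^ 18 + 512 * M ^ 17) := by
  rw [auxCoeff, abs_mul, pow_add]
  exact mul_le_mul (hp i) (h.abs_freq_mul_le hm i) (abs_nonneg _) (by positivity)

theorem norm_auxCoeff_le (i : BakerIndex M) :
    ‖(auxCoeff p (bakerFreqA d) (bakerFreqα n) m₁ m₂ i : ℂ)‖ ≤ 2 ^ (M ^ 18 + 512 * M ^ 17) := by
  rw [Complex.norm_intCast]
  exact_mod_cast h.abs_auxCoeff_le hp hm i

theorem norm_bakerFun_le (hΛ : |log γ - (d * log A - n * log α)| ≤ 1) {z : ℂ} (hz : ‖z‖ ≤ 5 * S) :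
    ‖bakerFun A n d α p m₁ m₂ z‖ ≤ 2 ^ (bakerExponent M 0 + 10 * M ^ 14 * S) := by
  refine (norm_sum_le _ _).trans ((h.sum_le (by positivity) fun i ↦ ?_).trans_eq
    (b := 2 ^ M * (2 ^ (M ^ 18 + 512 * M ^ 17) * 2 ^ (2 * (M ^ 14 * (5 * S))))) ?_)
  · rw [norm_mul]
    gcongr
    · exact h.norm_auxCoeff_le hp hm i
    · refine (Complex.norm_exp_le_exp_norm _).trans (exp_le_two_pow ?_)
      rw [norm_mul, Complex.norm_real, norm_eq_abs]
      push_cast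
      exact mul_le_mul (by exact_mod_cast h.abs_freq_log_le hΛ i) hz (norm_nonneg _) (by positivity)
  · rw [← pow_add, ← pow_add, bakerExponent]
    congr 1
    ring

end Estimates

section Approximation

omit h in
theorem bakerMonomial_pow_eq (h : BakerParameters M A n d α γ) (i : BakerIndex M) (s : ℕ) :
    bakerMonomial A α γ i ^ s =
      exp ((bakerFreqA d i * log A + bakerFreqα n i * log α) * s) *
        exp ((i.2.2 : ℕ) * s * (log γ - (d * log A - n * log α))) := by
  rw [h.bakerMonomial_eq_exp, ← exp_nat_mul, ← exp_add, freq_mul_log_add]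
  congr 1
  ring

theorem abs_monomial_sub_exp_le (he : 2 * M ≤ e)
    (hΛ : |log γ - (d * log A - n * log α)| ≤ 1 / 2 ^ e) (hs : s ≤ M ^ 40) (i : BakerIndex M) :
    |bakerMonomial A α γ i ^ s - exp ((bakerFreqA d i * log A + bakerFreqα n i * log α) * s)| ≤
      2 ^ (2 * M ^ 14 * s) * (2 ^ (2 * M) / 2 ^ e) := by
  have hΛ1 : |log γ - (d * log A - n * log α)| ≤ 1 :=
    hΛ.trans (div_le_self zero_le_one (one_le_pow₀ (by norm_num)))
  rw [h.bakerMonomial_pow_eq, ← mul_sub_one, abs_mul, abs_exp]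
  have hy : 2 * |(i.2.2 : ℕ) * s * (log γ - (d * log A - n * log α))| ≤ 2 ^ (2 * M) / 2 ^ e := by
    have hzs : 2 * ((i.2.2 : ℕ) * s) ≤ 2 ^ (2 * M) := by
      calc 2 * ((i.2.2 : ℕ) * s) ≤ M * (M ^ 13 * M ^ 40) := by
            gcongr
            exacts [by linarith [h.le_M], i.2.2.2.le]
        _ = M ^ 54 := by ring
        _ ≤ 2 ^ M := h.M_pow_le (by norm_num)
        _ ≤ 2 ^ (2 * M) := Nat.pow_le_pow_right two_pos (by lia)
    rw [abs_mul, ← Nat.cast_mul, Nat.abs_cast, ← mul_assoc, div_eq_mul_one_div]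
    gcongr
    exact_mod_cast hzs
  have hy1 : (2 : ℝ) ^ (2 * M) / 2 ^ e ≤ 1 :=
    div_le_one_of_le₀ (pow_le_pow_right₀ one_le_two he) (by positivity)
  gcongr
  · rw [mul_assoc 2]
    refine exp_le_two_pow ?_
    rw [Nat.cast_mul]
    gcongr
    exact (le_abs_self _).trans (h.abs_freq_log_le hΛ1 i)
  · have := abs_nonneg ((i.2.2 : ℕ) * s * (log γ - (d * log A - n * log α)))
    exact (abs_exp_sub_one_le (by linarith)).trans hy

theorem norm_bakerSum_sub_bakerFun_le (hp : ∀ i, |p i| ≤ 2 ^ M ^ 18)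
    (hm : m₁ + m₂ < 256 * M ^ 16) (he : 2 * M ≤ e)
    (hΛ : |log γ - (d * log A - n * log α)| ≤ 1 / 2 ^ e) (hs : s ≤ M ^ 40) :
    ‖(bakerSum A n d α γ p m₁ m₂ s : ℂ) - bakerFun A n d α p m₁ m₂ s‖ ≤
      2 ^ (bakerExponent M s + 2 * M) / 2 ^ e := by
  rw [bakerSum, auxSum, bakerFun, auxFun, Complex.ofReal_sum, ← Finset.sum_sub_distrib]
  refine (norm_sum_le _ _).trans ((h.sum_le (by positivity) fun i ↦ ?_).trans_eq
    (b := 2 ^ M * (2 ^ (M ^ 18 + 512 * M ^ 17) *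
      (2 ^ (2 * M ^ 14 * s) * (2 ^ (2 * M) / 2 ^ e)))) ?_)
  · rw [Complex.ofReal_mul, Complex.ofReal_intCast, ← mul_sub, norm_mul]
    gcongr
    · exact h.norm_auxCoeff_le hp hm i
    · have := h.abs_monomial_sub_exp_le he hΛ hs i
      rw [← norm_eq_abs, ← Complex.norm_real] at this
      push_cast at this ⊢
      exact this
  · rw [← mul_div_assoc, ← mul_div_assoc, ← mul_div_assoc, ← pow_add, ← pow_add, ← pow_add,
      bakerExponent]
    congr 2
    ring

end Approximation

section Liouville

theorem A_pow_pow_le (i : BakerIndex M) (s : ℕ) : (A ^ (i.1 : ℕ)) ^ s ≤ 2 ^ (M ^ 14 * s) := by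
  have hA : A ≤ 2 ^ 4 := h.A_le_ten.trans (by norm_num)
  have hM : 4 * M ^ 13 ≤ M ^ 14 := by
    rw [pow_succ' M 13]
    exact Nat.mul_le_mul_right _ (by linarith [h.le_M])
  rw [← pow_mul]
  calc A ^ ((i.1 : ℕ) * s) ≤ (2 ^ 4) ^ ((i.1 : ℕ) * s) := Nat.pow_le_pow_left hA _
    _ ≤ (2 ^ 4) ^ (M ^ 13 * s) :=
        Nat.pow_le_pow_right (by norm_num) (Nat.mul_le_mul_right _ i.1.2.le)
    _ = 2 ^ (4 * M ^ 13 * s) := by rw [← pow_mul, mul_assoc]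
    _ ≤ 2 ^ (M ^ 14 * s) := Nat.pow_le_pow_right two_pos (Nat.mul_le_mul_right _ hM)

variable {P : ℝ → ℝ → Prop} {D : ℕ} (hP : SizeBound P α D)

include hP

theorem size_term (hp : ∀ i, |p i| ≤ 2 ^ M ^ 18) (hm : m₁ + m₂ < 256 * M ^ 16) {g q : ℝ}
    (hg : P g (2 ^ M)) (hq : P q (2 ^ M)) (i : BakerIndex M) :
    P ((auxCoeff p (bakerFreqA d) (bakerFreqα n) m₁ m₂ i : ℝ) * (A ^ (i.1 : ℕ)) ^ s *
        ((α ^ (i.2.1 : ℕ)) ^ s * (g ^ ((i.2.2 : ℕ) * s) * q ^ ((M ^ 13 - (i.2.2 : ℕ)) * s))))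
      (2 ^ (M ^ 18 + 512 * M ^ 17 + M ^ 14 * s) * 2 ^ (M ^ 14 * s)) := by
  have hcoeff : |auxCoeff p (bakerFreqA d) (bakerFreqα n) m₁ m₂ i * ((A : ℤ) ^ (i.1 : ℕ)) ^ s| ≤
      2 ^ (M ^ 18 + 512 * M ^ 17 + M ^ 14 * s) := by
    rw [abs_mul, pow_add _ (_ + _)]
    gcongr
    · exact h.abs_auxCoeff_le hp hm i
    · rw [abs_of_nonneg (by positivity)]
      exact_mod_cast h.A_pow_pow_le i s
  have hsize : P ((auxCoeff p (bakerFreqA d) (bakerFreqα n) m₁ m₂ i : ℝ) * (A ^ (i.1 : ℕ)) ^ s)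
      (2 ^ (M ^ 18 + 512 * M ^ 17 + M ^ 14 * s)) := by
    have := hP.mono (hP.intCast _) (b := 2 ^ (M ^ 18 + 512 * M ^ 17 + M ^ 14 * s))
      (by exact_mod_cast hcoeff)
    push_cast at this
    exact this
  refine hP.mono (hP.mul hsize
    (hP.mul (hP.pow (hP.pow hP.generator _) _) (hP.mul (hP.pow hg _) (hP.pow hq _)))) ?_
  have hi := i.2.2.2.le
  rw [one_pow, one_pow, one_mul, ← pow_add, ← add_mul, Nat.add_sub_cancel' hi, ← pow_mul,
    ← mul_assoc M, ← pow_succ']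

/-- Multiplying by the power `q ^ (M ^ 13 * s)` of the denominator of `γ` clears denominators. -/
theorem size_bakerSum (hp : ∀ i, |p i| ≤ 2 ^ M ^ 18) (hm : m₁ + m₂ < 256 * M ^ 16) {g q : ℝ}
    (hq₀ : q ≠ 0) (hγ : γ = g / q) (hg : P g (2 ^ M)) (hq : P q (2 ^ M)) :
    P (q ^ (M ^ 13 * s) * bakerSum A n d α γ p m₁ m₂ s) (2 ^ bakerExponent M s) := by
  have hterms : q ^ (M ^ 13 * s) * bakerSum A n d α γ p m₁ m₂ s =
      ∑ i, (auxCoeff p (bakerFreqA d) (bakerFreqα n) m₁ m₂ i : ℝ) * (A ^ (i.1 : ℕ)) ^ s *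
        ((α ^ (i.2.1 : ℕ)) ^ s * (g ^ ((i.2.2 : ℕ) * s) * q ^ ((M ^ 13 - (i.2.2 : ℕ)) * s))) := by
    rw [bakerSum, auxSum, Finset.mul_sum]
    refine Finset.sum_congr rfl fun i _ ↦ ?_
    have hsplit : q ^ (M ^ 13 * s) = q ^ ((i.2.2 : ℕ) * s) * q ^ ((M ^ 13 - (i.2.2 : ℕ)) * s) := by
      rw [← pow_add, ← add_mul, Nat.add_sub_cancel' i.2.2.2.le]
    rw [hsplit, (eq_div_iff hq₀).1 hγ |>.symm, bakerMonomial, mul_pow, mul_pow, mul_pow,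
      ← pow_mul γ]
    ring
  rw [hterms]
  refine hP.mono (hP.sum Finset.univ fun i _ ↦ h.size_term hP hp hm hg hq i) ?_
  rw [← nsmul_eq_mul, ← Finset.sum_const]
  refine (h.sum_le (by positivity) fun _ ↦ le_rfl).trans_eq ?_
  rw [← pow_add, ← pow_add, bakerExponent]
  congr 1
  ring

theorem le_abs_bakerSum (hD : D ≤ 4 * M) (hγ : IsSizedQuotient P (2 ^ M) γ)
    (hp : ∀ i, |p i| ≤ 2 ^ M ^ 18) (hm : m₁ + m₂ < 256 * M ^ 16) (hs : s ≤ S)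
    (hne : bakerSum A n d α γ p m₁ m₂ s ≠ 0) :
    1 / 2 ^ (5 * M * bakerExponent M S) ≤ |bakerSum A n d α γ p m₁ m₂ s| := by
  obtain ⟨g, q, hq₀, hγ, hg, hq, hqM⟩ := hγ
  have hliouville := hP.liouville (h.size_bakerSum (s := s) hP hp hm hq₀ hγ hg hq)
    (one_le_pow₀ (by norm_num)) (mul_ne_zero (pow_ne_zero _ hq₀) hne)
  have hqpow : |q ^ (M ^ 13 * s)| ≤ 2 ^ (M ^ 14 * s) := by
    rw [abs_pow, pow_succ' M 13, mul_assoc, pow_mul 2]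
    gcongr
  have hexponent : M ^ 14 * s + bakerExponent M s * D ≤ 5 * M * bakerExponent M S := by
    have hexp : M ^ 14 * s ≤ M * bakerExponent M s := by
      have : M ^ 14 * s ≤ bakerExponent M s := by
        rw [bakerExponent]
        lia
      exact this.trans (Nat.le_mul_of_pos_left _ (by linarith [h.le_M]))
    calc M ^ 14 * s + bakerExponent M s * D ≤ M * bakerExponent M s + bakerExponent M s * (4 * M) :=
          by gcongr
      _ = 5 * M * bakerExponent M s := by ring
      _ ≤ 5 * M * bakerExponent M S := by
          gcongr
          exact bakerExponent_mono hs
  rw [div_le_iff₀ (by positivity)]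
  calc (1 : ℝ) ≤ 2 ^ (M ^ 14 * s) * |bakerSum A n d α γ p m₁ m₂ s| *
        (2 ^ bakerExponent M s) ^ D := by
        rw [abs_mul] at hliouville
        refine hliouville.trans ?_
        gcongr
    _ = |bakerSum A n d α γ p m₁ m₂ s| * 2 ^ (M ^ 14 * s + bakerExponent M s * D) := by
        rw [← pow_mul, pow_add]
        ring
    _ ≤ _ := by
        gcongr
        norm_num

end Liouville

end BakerParameters

namespace BakerParameters

variable {p : BakerIndex M → ℤ} {m₁ m₂ s S e : ℕ}

section Siegel

/-- Orders of derivation and nodes at which the auxiliary sums are required to vanish. -/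
abbrev BakerConditions (M : ℕ) : Type :=
  {k : Fin (256 * M ^ 16) × Fin (256 * M ^ 16) × Fin (M ^ 4) //
    (k.1 : ℕ) + (k.2.1 : ℕ) < 256 * M ^ 16}

theorem pigeonhole_card_lt (hM : 600 ≤ M) {β : ℕ} (hβ : β = bakerExponent M (M ^ 4)) :
    (2 * 2 ^ (β + 5 * M * β + 1) + 1) ^ Fintype.card (BakerConditions M) <
      (2 ^ M ^ 18) ^ Fintype.card (BakerIndex M) := by
  have hcard : Fintype.card (BakerConditions M) ≤ (256 * M ^ 16) ^ 2 * M ^ 4 := by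
    refine (Fintype.card_subtype_le _).trans_eq ?_
    simp only [Fintype.card_prod, Fintype.card_fin]
    ring
  have hbase : 2 * 2 ^ (β + 5 * M * β + 1) + 1 ≤ 2 ^ (β + 5 * M * β + 3) := by
    have := Nat.one_le_two_pow (n := β + 5 * M * β)
    rw [pow_succ, pow_add _ _ 3]
    lia
  calc _ ≤ (2 ^ (β + 5 * M * β + 3)) ^ Fintype.card (BakerConditions M) :=
        Nat.pow_le_pow_left hbase _
    _ ≤ (2 ^ (β + 5 * M * β + 3)) ^ ((256 * M ^ 16) ^ 2 * M ^ 4) :=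
        Nat.pow_le_pow_right (by positivity) hcard
    _ = 2 ^ ((β + 5 * M * β + 3) * ((256 * M ^ 16) ^ 2 * M ^ 4)) := (pow_mul _ _ _).symm
    _ < 2 ^ (M ^ 18 * (M ^ 13 * (M ^ 14 * M ^ 13))) := by
        rw [hβ]
        exact Nat.pow_lt_pow_right one_lt_two (pigeonhole_exponent_lt hM)
    _ = _ := by
        rw [← pow_mul]
        simp only [Fintype.card_prod, Fintype.card_fin]

theorem sum_abs_weight_le (h : BakerParameters M A n d α γ) (hm : m₁ + m₂ < 256 * M ^ 16)
    (hs : s ≤ M ^ 4) :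
    ∑ i : BakerIndex M, ((2 ^ M ^ 18 : ℕ) : ℝ) * |(bakerFreqA d i ^ m₁ * bakerFreqα n i ^ m₂ : ℤ) *
      bakerMonomial A α γ i ^ s| ≤ 2 ^ bakerExponent M (M ^ 4) := by
  refine (h.sum_le (B := 2 ^ M ^ 18 * (2 ^ (512 * M ^ 17) * 2 ^ (2 * M ^ 14 * M ^ 4)))
    (by positivity) fun i ↦ ?_).trans_eq ?_
  · push_cast [abs_mul]
    gcongr
    · rw [← abs_mul]
      exact_mod_cast h.abs_freq_mul_le hm i
    · refine (h.abs_bakerMonomial_pow_le i s).trans ?_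
      gcongr
      norm_num
  · rw [← pow_add, ← pow_add, ← pow_add, bakerExponent]
    congr 1
    ring

theorem exists_bakerSum_eq_zero (h : BakerParameters M A n d α γ) {P : ℝ → ℝ → Prop} {D : ℕ}
    (hP : SizeBound P α D) (hD : D ≤ 4 * M) (hγ : IsSizedQuotient P (2 ^ M) γ) :
    ∃ p : BakerIndex M → ℤ, p ≠ 0 ∧ (∀ i, |p i| ≤ 2 ^ M ^ 18) ∧
      ∀ m₁ m₂ s, m₁ + m₂ < 256 * M ^ 16 → s < M ^ 4 → bakerSum A n d α γ p m₁ m₂ s = 0 := by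
  obtain ⟨β, hβ⟩ : ∃ β, β = bakerExponent M (M ^ 4) := ⟨_, rfl⟩
  set ε : ℝ := 1 / 2 ^ (5 * M * β) / 2 with hε
  have hKε : ((2 ^ (β + 5 * M * β + 1) : ℕ) : ℝ) * ε = 2 ^ β := by
    push_cast [hε, pow_add]
    field_simp
  obtain ⟨p, hp₀, hp, hsmall⟩ := exists_int_combination_le (κ := BakerConditions M)
    (fun k i ↦ (bakerFreqA d i ^ (k.1.1 : ℕ) * bakerFreqα n i ^ (k.1.2.1 : ℕ) : ℤ) *
      bakerMonomial A α γ i ^ (k.1.2.2 : ℕ)) (by positivity : 0 < ε)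
    (fun k ↦ by
      rw [hKε, hβ]
      exact h.sum_abs_weight_le k.2 k.1.2.2.2.le)
    (pigeonhole_card_lt h.le_M hβ)
  have hp' : ∀ i, |p i| ≤ 2 ^ M ^ 18 := fun i ↦ by exact_mod_cast hp i
  refine ⟨p, hp₀, hp', fun m₁ m₂ s hm hs ↦ by_contra fun hne ↦ ?_⟩
  have hlower := h.le_abs_bakerSum hP hD hγ hp' hm hs.le hne
  have hupper := hsmall ⟨(⟨m₁, by lia⟩, ⟨m₂, by lia⟩, ⟨s, hs⟩), hm⟩
  have hsum : bakerSum A n d α γ p m₁ m₂ s = ∑ i, (p i : ℝ) *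
      ((bakerFreqA d i ^ m₁ * bakerFreqα n i ^ m₂ : ℤ) * bakerMonomial A α γ i ^ s) := by
    simp only [bakerSum, auxSum, auxCoeff, Int.cast_mul, mul_assoc]
  rw [← hsum] at hupper
  rw [← hβ] at hlower
  have : (0 : ℝ) < 1 / 2 ^ (5 * M * β) := by positivity
  linarith

end Siegel

section Extrapolation

theorem extrapolation_inequality {N : ℕ} (hM : 600 ≤ M) (hN : M ^ 4 ≤ N) (hN' : N ≤ M ^ 39)
    (he : 2 ^ M ≤ 16 * e) :
    (2 : ℝ) ^ (bakerExponent M 0 + 10 * M ^ 14 * (M * N : ℕ)) / 4 ^ (N * (6 * M ^ 16)) +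
        2 * ((20 * (M * N : ℕ)) ^ (N * (6 * M ^ 16)) *
          (4 ^ (6 * M ^ 16) * (2 ^ (bakerExponent M (M * N) + 2 * M) / 2 ^ e))) +
        2 ^ (bakerExponent M (M * N) + 2 * M) / 2 ^ e <
      1 / 2 ^ (5 * M * bakerExponent M (M * N)) := by
  have hextra := extrapolation_exponent_le hM hN
  have happrox := approximation_exponent_le hM hN hN' he
  set β := bakerExponent M (M * N)
  set κ : ℝ := 1 / 2 ^ (5 * M * β) with hκ
  have hκ₀ : 0 < κ := by positivity
  have hcompare {j k : ℕ} (hjk : j + 5 * M * β + 2 ≤ k) : (2 : ℝ) ^ j / 2 ^ k ≤ κ / 4 := by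
    rw [hκ, div_div, div_le_div_iff₀ (by positivity) (by positivity), one_mul,
      show (4 : ℝ) = 2 ^ 2 by norm_num, ← pow_add, ← pow_add]
    exact pow_le_pow_right₀ one_le_two (by lia)
  have hnodes : 20 * ((M * N : ℕ) : ℝ) ≤ 2 ^ M := by
    have : 20 * (M * N) ≤ 2 ^ M := by
      calc 20 * (M * N) ≤ M * (M * M ^ 39) := by
            gcongr
            lia
        _ = M ^ 41 := by ring
        _ ≤ M ^ 58 := Nat.pow_le_pow_right (by lia) (by norm_num)
        _ ≤ 2 ^ M := pow_fiftyEight_le_two_pow hM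
    exact_mod_cast this
  have hgrowth := hcompare (j := bakerExponent M 0 + 10 * M ^ 14 * (M * N))
    (k := 2 * (N * (6 * M ^ 16))) (by lia)
  have herror := hcompare (j := β + 2 * M) (k := e) (by lia)
  have hinterp : 2 * ((20 * ((M * N : ℕ) : ℝ)) ^ (N * (6 * M ^ 16)) *
      (4 ^ (6 * M ^ 16) * (2 ^ (β + 2 * M) / 2 ^ e))) ≤ κ / 4 := by
    calc _ ≤ 2 * (((2 : ℝ) ^ M) ^ (N * (6 * M ^ 16)) *
          ((2 ^ 2) ^ (6 * M ^ 16) * (2 ^ (β + 2 * M) / 2 ^ e))) := by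
          gcongr
          norm_num
      _ = 2 ^ (1 + M * (N * (6 * M ^ 16)) + 2 * (6 * M ^ 16) + (β + 2 * M)) / 2 ^ e := by
          rw [← pow_mul, ← pow_mul, pow_add _ (1 + _ + _) (β + 2 * M), pow_add _ (1 + _),
            pow_add _ 1]
          ring
      _ ≤ κ / 4 := hcompare (by lia)
  rw [pow_mul 2 2, show (2 : ℝ) ^ 2 = 4 by norm_num] at hgrowth
  linarith

/-- Each step costs `6 * M ^ 16` orders of derivation and multiplies the number of zeros
by `M`. -/
theorem bakerSum_eq_zero_of_lt_pow (h : BakerParameters M A n d α γ) {P : ℝ → ℝ → Prop} {D : ℕ}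
    (hP : SizeBound P α D) (hD : D ≤ 4 * M) (hγ : IsSizedQuotient P (2 ^ M) γ)
    (he : 2 ^ M ≤ 16 * e) (hΛ : |log γ - (d * log A - n * log α)| ≤ 1 / 2 ^ e)
    (hp : ∀ i, |p i| ≤ 2 ^ M ^ 18)
    (hzero : ∀ m₁ m₂ s, m₁ + m₂ < 256 * M ^ 16 → s < M ^ 4 → bakerSum A n d α γ p m₁ m₂ s = 0)
    {j : ℕ} (hj : j ≤ 36) (hm : m₁ + m₂ + j * (6 * M ^ 16) < 256 * M ^ 16)
    (hs : s < M ^ (4 + j)) : bakerSum A n d α γ p m₁ m₂ s = 0 := by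
  have hM := h.le_M
  induction j generalizing m₁ m₂ s with
  | zero => exact hzero m₁ m₂ s (by lia) hs
  | succ j ih =>
    have hN : M ^ 4 ≤ M ^ (4 + j) := Nat.pow_le_pow_right (by lia) (by lia)
    have hN' : M ^ (4 + j) ≤ M ^ 39 := Nat.pow_le_pow_right (by lia) (by lia)
    have hsN : s < M * M ^ (4 + j) := by rwa [← pow_succ']
    have hineq := extrapolation_inequality hM hN hN' he
    have hexp := approximation_exponent_le hM hN hN' he
    set N := M ^ (4 + j)
    have hMN : M * N ≤ M ^ 40 := by
      calc M * N ≤ M * M ^ 39 := by gcongr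
        _ = M ^ 40 := by ring
    have hΛ1 : |log γ - (d * log A - n * log α)| ≤ 1 :=
      hΛ.trans (div_le_self zero_le_one (one_le_pow₀ one_le_two))
    refine auxSum_eq_zero_of_extrapolation (T := 256 * M ^ 16)
      (T' := 256 * M ^ 16 - j * (6 * M ^ 16)) (log_natCast_nonneg A) h.log_α_nonneg
      (by linarith [h.log_A_le, h.log_α_le]) (Nat.le_mul_of_pos_left _ (by lia))
      (by lia) (Nat.sub_le _ _) (by positivity)
      (fun m₁ m₂ s hm hs ↦ ih (by lia) (by lia) hs) (fun m₁ m₂ s hm hs ↦ ?_)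
      (fun m₁ m₂ hm z hz ↦ h.norm_bakerFun_le hp hm hΛ1 hz)
      (fun m₁ m₂ s hm hs hne ↦ h.le_abs_bakerSum hP hD hγ hp hm hs hne) hineq (by lia) (by lia)
      hsN.le
    refine (h.norm_bakerSum_sub_bakerFun_le hp hm (by lia) hΛ (hs.trans hMN)).trans ?_
    gcongr
    · exact one_le_two
    · exact bakerExponent_mono hs

end Extrapolation

section ZeroEstimate

theorem pow_mul_pow_injective {A α : ℝ} (hA : 1 < A) (hα : 1 < α)
    (hind : ∀ x y : ℕ, 0 < x → A ^ x ≠ α ^ y) :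
    Function.Injective fun x : ℕ × ℕ ↦ A ^ x.1 * α ^ x.2 := by
  have hfst : ∀ x₁ x₂ y₁ y₂ : ℕ, A ^ x₁ * α ^ y₁ = A ^ x₂ * α ^ y₂ → x₂ ≤ x₁ := by
    intro x₁ x₂ y₁ y₂ heq
    by_contra! hlt
    obtain ⟨t, rfl⟩ := Nat.exists_eq_add_of_le hlt.le
    rw [pow_add, mul_assoc] at heq
    have heq' := mul_left_cancel₀ (by positivity) heq
    have ht : 1 < A ^ t := one_lt_pow₀ hA (by lia)
    rcases le_total y₂ y₁ with hy | hy
    · obtain ⟨r, rfl⟩ := Nat.exists_eq_add_of_le hy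
      rw [pow_add, mul_comm] at heq'
      exact hind t r (by lia) (mul_right_cancel₀ (by positivity) heq').symm
    · have hle : α ^ y₁ ≤ α ^ y₂ := pow_le_pow_right₀ hα.le hy
      have hpos : 0 < α ^ y₂ := by positivity
      nlinarith
  rintro ⟨x₁, y₁⟩ ⟨x₂, y₂⟩ (heq : A ^ x₁ * α ^ y₁ = A ^ x₂ * α ^ y₂)
  obtain rfl := le_antisymm (hfst x₂ x₁ y₂ y₁ heq.symm) (hfst x₁ x₂ y₁ y₂ heq)
  rw [pow_right_injective₀ (by positivity) hα.ne' (mul_left_cancel₀ (by positivity) heq)]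

variable (h : BakerParameters M A n d α γ) (hind : ∀ x y : ℕ, 0 < x → (A : ℝ) ^ x ≠ α ^ y)

include h hind

theorem eq_of_bakerMonomial_eq {i i' : BakerIndex M}
    (hmon : bakerMonomial A α γ i = bakerMonomial A α γ i') (hz : i.2.2 = i'.2.2) : i = i' := by
  have hA : (1 : ℝ) < A := by exact_mod_cast h.two_le_A
  have := h.γ_pos
  rw [bakerMonomial, bakerMonomial, hz] at hmon
  have heq := pow_mul_pow_injective hA h.one_lt_α hind
    (a₁ := (i.1, i.2.1)) (a₂ := (i'.1, i'.2.1)) (mul_right_cancel₀ (by positivity) hmon)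
  rw [Prod.mk.injEq] at heq
  exact Prod.ext (Fin.ext heq.1) (Prod.ext (Fin.ext heq.2) hz)

theorem card_filter_bakerMonomial_le (r : ℝ) :
    (Finset.univ.filter fun i : BakerIndex M ↦ bakerMonomial A α γ i = r).card ≤ M ^ 13 := by
  calc _ ≤ (Finset.univ : Finset (Fin (M ^ 13))).card := by
        refine Finset.card_le_card_of_injOn (fun i ↦ i.2.2) (fun _ _ ↦ Finset.mem_univ _)
          fun i hi i' hi' hz ↦ h.eq_of_bakerMonomial_eq hind ?_ hz
        rw [(Finset.mem_filter.1 hi).2, (Finset.mem_filter.1 hi').2]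
    _ = M ^ 13 := by rw [Finset.card_univ, Fintype.card_fin]

theorem eq_of_bakerMonomial_eq_of_bakerFreqA_eq {i i' : BakerIndex M}
    (hmon : bakerMonomial A α γ i = bakerMonomial A α γ i')
    (hfreq : bakerFreqA d i = bakerFreqA d i') : i = i' := by
  refine h.eq_of_bakerMonomial_eq hind hmon (Fin.ext ?_)
  have hd : M ^ 13 ≤ d := by
    have h14 : 8 * M ^ 13 ≤ M ^ 14 := by
      rw [pow_succ' M 13]
      exact Nat.mul_le_mul_right _ (by linarith [h.le_M])
    linarith [h.M_pow_le (j := 14) (by norm_num), h.le_d]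
  have hi := i.1.2
  have hi' := i'.1.2
  have hnat : (i.1 : ℕ) + d * (i.2.2 : ℕ) = i'.1 + d * (i'.2.2 : ℕ) := by
    unfold bakerFreqA at hfreq
    exact_mod_cast hfreq
  have hdiv := congrArg (· / d) hnat
  simp only [Nat.add_mul_div_left _ _ (by lia : 0 < d)] at hdiv
  rwa [Nat.div_eq_of_lt (by lia), Nat.div_eq_of_lt (by lia), zero_add, zero_add] at hdiv

/-- Separate first by the value of the monomial, then by the frequency. -/
theorem eq_zero_of_bakerSum_eq_zero
    (hzero : ∀ m < M ^ 13, ∀ s < M ^ 40, bakerSum A n d α γ p m 0 s = 0) : p = 0 := by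
  classical
  funext i₀
  have hmonomial : ∀ m < M ^ 13, ∑ i with bakerMonomial A α γ i = bakerMonomial A α γ i₀,
      (p i : ℝ) * (bakerFreqA d i : ℝ) ^ m = 0 := by
    intro m hm
    refine sum_filter_eq_zero_of_sum_mul_pow_eq_zero Finset.univ
      (fun i ↦ (p i : ℝ) * (bakerFreqA d i : ℝ) ^ m) (bakerMonomial A α γ) (N := M ^ 40)
      ?_ (fun s hs ↦ ?_) _
    · exact Finset.card_image_le.trans_eq (card_bakerIndex M)
    · simpa [auxSum, auxCoeff] using hzero m hm s hs
  have hfreq := sum_filter_eq_zero_of_sum_mul_pow_eq_zero _ (fun i ↦ (p i : ℝ))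
    (fun i ↦ (bakerFreqA d i : ℝ))
    (Finset.card_image_le.trans (h.card_filter_bakerMonomial_le hind _)) hmonomial
    (bakerFreqA d i₀)
  have hsingle : (Finset.univ.filter fun i : BakerIndex M ↦
      bakerMonomial A α γ i = bakerMonomial A α γ i₀).filter
        (fun i ↦ (bakerFreqA d i : ℝ) = bakerFreqA d i₀) = {i₀} := by
    ext i
    simp only [Finset.mem_filter, Finset.mem_univ, true_and, Finset.mem_singleton, Int.cast_inj]
    exact ⟨fun hi ↦ h.eq_of_bakerMonomial_eq_of_bakerFreqA_eq hind hi.1 hi.2,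
      by rintro rfl; exact ⟨rfl, rfl⟩⟩
  rw [hsingle, Finset.sum_singleton] at hfreq
  exact_mod_cast hfreq

end ZeroEstimate

/-- An effective form of Baker's theorem for the three logarithms of `γ`, `A` and `α`. -/
theorem lt_abs_linear_form (h : BakerParameters M A n d α γ) {P : ℝ → ℝ → Prop} {D : ℕ}
    (hP : SizeBound P α D) (hD : D ≤ 4 * M) (hγ : IsSizedQuotient P (2 ^ M) γ)
    (hind : ∀ x y : ℕ, 0 < x → (A : ℝ) ^ x ≠ α ^ y) (he : 2 ^ M ≤ 16 * e) :
    1 / 2 ^ e < |log γ - (d * log A - n * log α)| := by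
  by_contra! hΛ
  obtain ⟨p, hp₀, hp, hzero⟩ := h.exists_bakerSum_eq_zero hP hD hγ
  refine hp₀ (h.eq_zero_of_bakerSum_eq_zero hind fun m hm s hs ↦ ?_)
  have hM : M ^ 13 ≤ M ^ 16 := Nat.pow_le_pow_right (by linarith [h.le_M]) (by norm_num)
  exact h.bakerSum_eq_zero_of_lt_pow hP hD hγ he hΛ hp hzero (j := 36) le_rfl (by lia) hs

end BakerParameters

end BakerTheorem

/-! ### Certified reduction: the checks -/

/-- `force n f` is `f n`, arranged so that the kernel evaluates `n` to a literal before it unfolds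
`f`. -/
def force {β : Type} : ℕ → (ℕ → β) → β
  | 0, f => f 0
  | n + 1, f => f (n + 1)

@[simp]
theorem force_eq {β : Type} (n : ℕ) (f : ℕ → β) : force n f = f n := by
  cases n <;> rfl

/-- The loop of `fixedLog`: `t` approximates `O * (Y / O) ^ i` and `s` is the partial sum. -/
def fixedLogAux (O Y : ℕ) : ℕ → ℕ → ℕ → ℕ → ℕ
  | 0, _, _, s => s
  | fuel + 1, i, t, s => bif t.beq 0 then s else
      force (t * Y / O) fun t' ↦ force (s + t / i) fun s' ↦ force (i + 1) fun i' ↦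
        fixedLogAux O Y fuel i' t' s'

/-- The fixed-point value of `-log (1 - Y / O)`, in units of `1 / O`, from the Taylor series. -/
def fixedLog (O Y : ℕ) : ℕ := fixedLogAux O Y 1900 1 Y 0

/-- The fixed-point value of `(a / O) ^ k`, in units of `1 / O`, by repeated squaring; the fuel
bounds the number of binary digits of `k`. -/
def fixedPow (O a : ℕ) : ℕ → ℕ → ℕ
  | 0, _ => O
  | fuel + 1, k => bif k.beq 0 then O else
      force (fixedPow O a fuel (k / 2)) fun h ↦ force (h * h / O) fun h₂ ↦
        bif (k % 2).beq 1 then h₂ * a / O else h₂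

/-- Fixed-point iteration for the root `x` of `x * (1 - x) ^ k = 1 / 2 ^ (k + 1)`, where
`R = O ^ 2 / 2 ^ (k + 1)`. -/
def rootSearch (O k R : ℕ) : ℕ → ℕ → ℕ
  | 0, X => X
  | fuel + 1, X => force (R / fixedPow O (O - X) 12 k) fun Y ↦
      bif Y.ble X then X else rootSearch O k R fuel Y

/-- Checks that the root `x` of `x * (1 - x) ^ k = 1 / 2 ^ (k + 1)` lies between `X / O` and
`(X + 16) / O`, where `R = O ^ 2 / 2 ^ (k + 1)`. -/
def isRoot (O k R X : ℕ) : Bool :=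
  (2 * (k + 1) * (X + 16)).ble O && (X * (fixedPow O (O - X) 12 k + 3 * k)).ble R &&
    R.blt ((X + 16) * (fixedPow O (O - (X + 16)) 12 k - 3 * k))

/-- The Baker–Davenport test with multiplier `Q`: if `P * L₁` is the multiple of `L₁` nearest to
`Q * L₂` and `Q * G` is far from all multiples of `L₁`, then `G + m * L₂ - z * L₁` is never small
for `m ≤ N`. -/
def reductionTest (L₁ L₂ G N W Q : ℕ) : Bool :=
  force ((2 * (Q * L₂) + L₁) / (2 * L₁)) fun P ↦ force (Q * G % L₁) fun R ↦
    force (N * (Q * L₂).dist (P * L₁) + Q * W) fun B ↦ B.blt R && (B + R).blt L₁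

/-- The test for the homogeneous form `m * L₂ - z * L₁`: here `P / Q` is a good approximation to
`L₂ / L₁` in lowest terms with `Q > N`. -/
def homogeneousTest (L₁ L₂ N W Q : ℕ) : Bool :=
  force ((2 * (Q * L₂) + L₁) / (2 * L₁)) fun P ↦ (P.gcd Q).beq 1 && N.blt Q &&
    (N * (Q * L₂).dist (P * L₁) + Q * W).blt L₁

/-- Runs the Euclidean algorithm on `(a, b)` until `b ≤ T` and then applies `test`. -/
def euclidUntil (T : ℕ) (test : ℕ → ℕ → Bool) : ℕ → ℕ → ℕ → Bool
  | 0, _, _ => false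
  | fuel + 1, a, b => bif b.ble T then test a b else
      force (a % b) fun r ↦ euclidUntil T test fuel b r

/-- Searches for a multiplier passing `test` along the Euclidean algorithm started at
`(L₁ * S, L₂ * S + 1)`. As long as `S` is large, the remainders of this algorithm are congruent
modulo `S` to `±Q` with `Q` running over the denominators of the convergents of `L₂ / L₁`.
Soundness does not depend on this. -/
def euclidSearch (S : ℕ) (test : ℕ → Bool) : ℕ → ℕ → ℕ → Bool
  | 0, _, _ => false
  | fuel + 1, a, b => force (min (b % S) (S - b % S)) test ||
      force (a % b) fun r ↦ euclidSearch S test fuel b r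

/-- The fixed-point logarithm of a digit in terms of those of the primes below ten. -/
def digitLog (l₂ l₃ l₅ l₇ : ℕ) : ℕ → ℕ
  | 2 => l₂
  | 3 => l₃
  | 4 => 2 * l₂
  | 5 => l₅
  | 6 => l₂ + l₃
  | 7 => l₇
  | 8 => 3 * l₂
  | 9 => 2 * l₃
  | _ => 0

/-- Passes fixed-point values of `log 2`, `log 3`, `log 5` and `log 7` to `test`. -/
def withPrimeLogs (O : ℕ) (test : ℕ → ℕ → ℕ → ℕ → Bool) : Bool :=
  -- These arguments are used because the kernel hashes literals by their low bits and is slow on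
  -- the multiples of large powers of two which `fixedLog O (O / 2)` would produce.
  force (fixedLog O (O / 3)) fun a ↦ force (fixedLog O (O / 9)) fun c ↦
  force (2 * a - c) fun l₂ ↦ force (l₂ + a) fun l₃ ↦
  force (2 * l₃ - l₂ + fixedLog O (O / 10)) fun l₅ ↦ force (l₂ + l₃ + fixedLog O (O / 7)) fun l₇ ↦
  test l₂ l₃ l₅ l₇

/-- The reduction for one `k` and all digits, with `L₁`, `L₂` and `g` standing for `log 10`,
`log α` and `log (10 * binetCoeff k α)`. The digits `3` and `6` need larger multipliers, since for
large `k` the coefficient is close to `3 / 2`. -/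
def checkRoot (O S l₂ l₃ l₅ l₇ t N W k : ℕ) : Bool :=
  force (O ^ 2 / 2 ^ (k + 1)) fun R ↦ force (rootSearch O k R 1000 0 - 4) fun X ↦
  isRoot O k R X &&
  force (l₂ + l₅) fun L₁ ↦ force (l₂ - fixedLog O X) fun L₂ ↦
  force (L₁ + l₃ + fixedLog O ((k + 1) * X) -
    (fixedLog O (4 * X / 3) + fixedLog O (2 * X) + l₂)) fun g ↦
  force (O * S / 2 ^ t) fun T ↦ force (O * S / 2 ^ (k + 12)) fun T' ↦
  euclidUntil T (fun a b ↦
    ([1, 2, 4, 5, 7, 8, 9].all fun c ↦ force (g - digitLog l₂ l₃ l₅ l₇ c) fun G ↦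
      euclidSearch S (reductionTest L₁ L₂ G N W) 400 a b) &&
    euclidUntil T' (fun a b ↦
      [3, 6].all fun c ↦ force (g - digitLog l₂ l₃ l₅ l₇ c) fun G ↦
        euclidSearch S (reductionTest L₁ L₂ G N W) 400 a b) 3000 a b) 3000 (L₁ * S) (L₂ * S + 1)

/-- The denominator `O` of the fixed-point numbers in all the computations below. -/
def fixedPointScale : ℕ := 2 ^ 1900

/-- Runs `checkRoot` for all `j` with `k ≤ j < k + f`. -/
def checkRoots (t N W k f : ℕ) : Bool :=
  force fixedPointScale fun O ↦ force (2 ^ 1400) fun S ↦ force (W + (2 * N + 2) * 2 ^ 20) fun W' ↦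
  force N fun N ↦
  withPrimeLogs O fun l₂ l₃ l₅ l₇ ↦
    (List.range f).all fun i ↦ force (k + i) (checkRoot O S l₂ l₃ l₅ l₇ t N W')

/-- The reduction for the limit case `α = 2`, where the coefficient is `3 / 2`; for the digits `3`
and `6` the linear form degenerates to a homogeneous one. -/
def checkTwo (t N W : ℕ) : Bool :=
  force fixedPointScale fun O ↦ force (2 ^ 1400) fun S ↦ force (W + (2 * N + 2) * 2 ^ 20) fun W' ↦
  force N fun N ↦
  withPrimeLogs O fun l₂ l₃ l₅ l₇ ↦
  force (l₂ + l₅) fun L₁ ↦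
  force (O * S / 2 ^ t) fun T ↦
  euclidUntil T (fun a b ↦
    ([1, 2, 4, 5, 7, 8, 9].all fun c ↦ force (L₁ + l₃ - digitLog l₂ l₃ l₅ l₇ c) fun G ↦
      euclidSearch S (reductionTest L₁ l₂ G N W') 400 a b) &&
    euclidSearch S (homogeneousTest L₁ l₂ N W') 400 a b) 3000 (L₁ * S) (l₂ * S + 1)

theorem checkTwo_large : checkTwo 606 (2 ^ 601) (2 ^ 1280) = true := by
  decide +kernel

theorem checkTwo_small : checkTwo 16 1700 (2 ^ 1876) = true := by
  decide +kernel

theorem checkRoots_small : checkRoots 14 1700 (2 ^ 1820) 3 40 = true := by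
  decide +kernel

set_option maxHeartbeats 0 in
-- each of the 41 computations takes several seconds in the kernel
theorem checkRoots_large {j : ℕ} (hj : j < 41) :
    checkRoots 606 (2 ^ 601) (2 ^ 600) (3 + 30 * j) 30 = true := by
  interval_cases j <;> decide +kernel

/-! ### Certified reduction: soundness -/

section Tests

theorem natCast_dist (a b : ℕ) : (a.dist b : ℤ) = |(a : ℤ) - b| := by
  rcases le_total a b with h | h
  · rw [Nat.dist_eq_sub_of_le h, Nat.cast_sub h, abs_sub_comm, abs_of_nonneg (by lia)]
  · rw [Nat.dist_eq_sub_of_le_right h, Nat.cast_sub h, abs_of_nonneg (by lia)]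

theorem abs_mul_sub_mul_le {N W Q m : ℕ} {D E : ℤ} (hm : m ≤ N) (hD : |D| ≤ W) :
    |Q * D - m * E| ≤ N * |E| + Q * W := by
  calc |Q * D - m * E| ≤ |Q * D| + |m * E| := abs_sub _ _
    _ = Q * |D| + m * |E| := by simp [abs_mul]
    _ ≤ Q * W + N * |E| := by gcongr
    _ = N * |E| + Q * W := add_comm _ _

theorem lt_abs_of_reductionTest {L₁ L₂ G N W Q m : ℕ} (h : reductionTest L₁ L₂ G N W Q = true)
    (hm : m ≤ N) (z : ℤ) : (W : ℤ) < |G + m * L₂ - z * L₁| := by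
  simp only [reductionTest, force_eq, Bool.and_eq_true, Nat.blt_eq] at h
  generalize (2 * (Q * L₂) + L₁) / (2 * L₁) = P at h
  zify [natCast_dist] at h
  obtain ⟨hlow, hhigh⟩ := h
  by_contra! hD
  have hB := abs_le.1 (abs_mul_sub_mul_le (Q := Q) (E := Q * L₂ - P * L₁) hm hD)
  set R : ℤ := (Q * G : ℤ) % L₁
  have hmod : (Q * G : ℤ) = L₁ * (Q * G / L₁) + R := (Int.mul_ediv_add_emod _ _).symm
  have hmultiple : Q * (G + m * L₂ - z * L₁) - m * (Q * L₂ - P * L₁) - R =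
      L₁ * (Q * G / L₁ + m * P - Q * z) := by linear_combination hmod
  have hneg : (L₁ : ℤ) * (Q * G / L₁ + m * P - Q * z) < L₁ * 0 := by
    rw [← hmultiple]; linarith
  have hgt : (L₁ : ℤ) * (-1) < L₁ * (Q * G / L₁ + m * P - Q * z) := by
    rw [← hmultiple]; linarith
  have := lt_of_mul_lt_mul_left hneg (by positivity)
  have := lt_of_mul_lt_mul_left hgt (by positivity)
  lia

theorem lt_abs_of_homogeneousTest {L₁ L₂ N W Q m : ℕ} (h : homogeneousTest L₁ L₂ N W Q = true)
    (hm₀ : 0 < m) (hm : m ≤ N) (z : ℤ) : (W : ℤ) < |m * L₂ - z * L₁| := by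
  simp only [homogeneousTest, force_eq, Bool.and_eq_true, Nat.blt_eq, Nat.beq_eq] at h
  generalize (2 * (Q * L₂) + L₁) / (2 * L₁) = P at h
  obtain ⟨⟨hcoprime, hQ⟩, hlt⟩ := h
  zify [natCast_dist] at hlt
  by_contra! hD
  have hB := abs_le.1 (abs_mul_sub_mul_le (Q := Q) (E := Q * L₂ - P * L₁) hm hD)
  have hmultiple : Q * (m * L₂ - z * L₁) - m * (Q * L₂ - P * L₁) = L₁ * (m * P - Q * z) := by ring
  have hzero : (m * P : ℤ) = Q * z := by
    have hlt_one : (L₁ : ℤ) * (m * P - Q * z) < L₁ * 1 := by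
      rw [← hmultiple]; linarith
    have hgt : (L₁ : ℤ) * (-1) < L₁ * (m * P - Q * z) := by
      rw [← hmultiple]; linarith
    have := lt_of_mul_lt_mul_left hlt_one (by positivity)
    have := lt_of_mul_lt_mul_left hgt (by positivity)
    omega
  have hdvd : Q ∣ m := by
    have : Q ∣ m * P := Int.natCast_dvd_natCast.1 ⟨z, by exact_mod_cast hzero⟩
    exact Nat.Coprime.dvd_of_dvd_mul_right (Nat.coprime_comm.1 hcoprime) this
  exact absurd (Nat.le_of_dvd hm₀ hdvd) (by lia)

theorem exists_of_euclidUntil {T : ℕ} {test : ℕ → ℕ → Bool} {fuel a b : ℕ}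
    (h : euclidUntil T test fuel a b = true) : ∃ a b, test a b = true := by
  induction fuel generalizing a b with
  | zero => simp [euclidUntil] at h
  | succ fuel ih =>
    rw [euclidUntil, force_eq] at h
    cases hb : b.ble T with
    | true => exact ⟨a, b, by simpa [hb] using h⟩
    | false => exact ih (by simpa [hb] using h)

theorem exists_of_euclidSearch {S : ℕ} {test : ℕ → Bool} {fuel a b : ℕ}
    (h : euclidSearch S test fuel a b = true) : ∃ Q, test Q = true := by
  induction fuel generalizing a b with
  | zero => simp [euclidSearch] at h
  | succ fuel ih =>
    rw [euclidSearch, force_eq, force_eq, Bool.or_eq_true] at h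
    exact h.elim (fun hQ ↦ ⟨_, hQ⟩) ih

end Tests

section FixedPoint

variable {O n n₁ n₂ : ℕ} {e e' e₁ e₂ r r₁ r₂ : ℝ}

/-- `n` is a fixed-point approximation of `r` in units of `1 / O`, with an error of at most `e`
units. -/
def IsFixedPoint (O : ℕ) (e : ℝ) (n : ℕ) (r : ℝ) : Prop := |O * r - n| ≤ e

theorem IsFixedPoint.mono (h : IsFixedPoint O e n r) (he : e ≤ e') : IsFixedPoint O e' n r :=
  le_trans h he

theorem IsFixedPoint.congr (h : IsFixedPoint O e n r₁) (hr : r₁ = r₂) : IsFixedPoint O e n r₂ :=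
  hr ▸ h

theorem IsFixedPoint.one : IsFixedPoint O 0 O 1 := by
  simp [IsFixedPoint]

theorem IsFixedPoint.add (h₁ : IsFixedPoint O e₁ n₁ r₁) (h₂ : IsFixedPoint O e₂ n₂ r₂) :
    IsFixedPoint O (e₁ + e₂) (n₁ + n₂) (r₁ + r₂) := by
  unfold IsFixedPoint at *
  push_cast
  calc |O * (r₁ + r₂) - (n₁ + n₂)| = |(O * r₁ - n₁) + (O * r₂ - n₂)| := by ring_nf
    _ ≤ e₁ + e₂ := (abs_add_le _ _).trans (add_le_add h₁ h₂)

theorem IsFixedPoint.natMul (h : IsFixedPoint O e n r) (c : ℕ) :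
    IsFixedPoint O (c * e) (c * n) (c * r) := by
  unfold IsFixedPoint at *
  push_cast
  rw [mul_left_comm, ← mul_sub, abs_mul, Nat.abs_cast]
  gcongr

theorem IsFixedPoint.sub (h₁ : IsFixedPoint O e₁ n₁ r₁) (h₂ : IsFixedPoint O e₂ n₂ r₂)
    (hr : r₂ ≤ r₁) : IsFixedPoint O (e₁ + e₂) (n₁ - n₂) (r₁ - r₂) := by
  unfold IsFixedPoint at *
  have hpos : (O : ℝ) * r₂ ≤ O * r₁ := by gcongr
  rw [abs_le] at *
  rcases le_total n₂ n₁ with h | h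
  · rw [Nat.cast_sub h]
    constructor <;> linarith
  · have : (n₁ : ℝ) ≤ n₂ := mod_cast h
    rw [Nat.sub_eq_zero_of_le h, Nat.cast_zero]
    constructor <;> linarith

theorem abs_div_sub_natDiv_le_one (a b : ℕ) : |(a : ℝ) / b - (a / b : ℕ)| ≤ 1 := by
  have hlow : ((a / b : ℕ) : ℝ) ≤ a / b := Nat.cast_div_le
  have hhigh : (a : ℝ) / b < (a / b : ℕ) + 1 := by
    simpa [Nat.floor_div_eq_div] using Nat.lt_floor_add_one ((a : ℝ) / b)
  rw [abs_le]
  constructor <;> linarith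

theorem IsFixedPoint.natDiv (h : IsFixedPoint O e n r) (c : ℕ) :
    IsFixedPoint O (e / c + 1) (n / c) (r / c) := by
  unfold IsFixedPoint at *
  calc |O * (r / c) - (n / c : ℕ)| = |(O * r - n) / c + (n / c - (n / c : ℕ))| := by ring_nf
    _ ≤ |(O * r - n) / c| + |(n : ℝ) / c - (n / c : ℕ)| := abs_add_le _ _
    _ ≤ e / c + 1 := by
      rw [abs_div, Nat.abs_cast]
      gcongr
      exact abs_div_sub_natDiv_le_one n c

theorem IsFixedPoint.mul (h₁ : IsFixedPoint O e₁ n₁ r₁) (h₂ : IsFixedPoint O e₂ n₂ r₂)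
    (hn₁ : n₁ ≤ O) (hr₂ : |r₂| ≤ 1) :
    IsFixedPoint O (e₁ + e₂ + 1) (n₁ * n₂ / O) (r₁ * r₂) := by
  unfold IsFixedPoint at *
  have he₁ : 0 ≤ e₁ := (abs_nonneg _).trans h₁
  rcases O.eq_zero_or_pos with rfl | hO
  · have : 0 ≤ e₂ := (abs_nonneg _).trans h₂
    simpa using (by positivity : 0 ≤ e₁ + e₂ + 1)
  have hfrac : |(n₁ / O : ℝ)| ≤ 1 := by
    rw [abs_of_nonneg (by positivity), div_le_one (by positivity)]
    exact_mod_cast hn₁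
  have hfloor := abs_div_sub_natDiv_le_one (n₁ * n₂) O
  push_cast at hfloor
  calc |O * (r₁ * r₂) - (n₁ * n₂ / O : ℕ)|
      = |(O * r₁ - n₁) * r₂ + n₁ / O * (O * r₂ - n₂) +
          ((n₁ * n₂ / O : ℝ) - (n₁ * n₂ / O : ℕ))| := by
        congr 1
        field_simp
        ring
    _ ≤ |(O * r₁ - n₁) * r₂| + |(n₁ / O : ℝ) * (O * r₂ - n₂)| +
          |(n₁ * n₂ / O : ℝ) - (n₁ * n₂ / O : ℕ)| :=
        abs_add_three _ _ _
    _ ≤ e₁ * 1 + 1 * e₂ + 1 := by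
        rw [abs_mul, abs_mul]
        gcongr
    _ = e₁ + e₂ + 1 := by ring

end FixedPoint

open Real Finset

section FixedLog

variable {O X Y : ℕ} {x e : ℝ}

theorem fixedLogAux_succ (O Y fuel i t s : ℕ) :
    fixedLogAux O Y (fuel + 1) i t s = fixedLogAux O Y fuel (i + 1) (t * Y / O) (s + t / i) := by
  have hzero : ∀ fuel i, fixedLogAux O Y fuel i 0 s = s := by rintro (_ | _) _ <;> rfl
  rcases t with _ | t
  · simp [hzero]
  · rw [fixedLogAux, show (t + 1).beq 0 = false from rfl, cond_false]
    simp only [force_eq]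

theorem IsFixedPoint.natCast_div (hY : Y ≤ O) : IsFixedPoint O 0 Y (Y / O : ℝ) := by
  rcases O.eq_zero_or_pos with rfl | hO
  · simp [IsFixedPoint, Nat.le_zero.1 hY]
  · simp [IsFixedPoint, mul_div_cancel₀ (Y : ℝ) (mod_cast hO.ne' : (O : ℝ) ≠ 0)]

theorem abs_sum_sub_fixedLogAux_le (hY : Y ≤ O) (fuel : ℕ) {i t s : ℕ} (hi : 0 < i)
    (ht : IsFixedPoint O i t ((Y / O : ℝ) ^ i)) (htO : t ≤ O) :
    |s + ∑ j ∈ range fuel, O * ((Y / O : ℝ) ^ (i + j) / (i + j : ℕ)) -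
      fixedLogAux O Y fuel i t s| ≤ 2 * fuel := by
  induction fuel generalizing i t s with
  | zero => simp [fixedLogAux]
  | succ fuel ih =>
    have hle_one : |(Y / O : ℝ)| ≤ 1 := by
      rw [abs_of_nonneg (by positivity)]
      exact div_le_one_of_le₀ (mod_cast hY) (by positivity)
    have hnext : IsFixedPoint O ((i + 1 : ℕ) : ℝ) (t * Y / O) ((Y / O : ℝ) ^ (i + 1)) := by
      rw [pow_succ]
      exact (ht.mul (.natCast_div hY) htO hle_one).mono (by push_cast; linarith)
    have hrec := ih (s := s + t / i) i.succ_pos hnext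
      (Nat.div_le_of_le_mul (Nat.mul_le_mul htO hY))
    have hterm : |O * ((Y / O : ℝ) ^ i / i) - (t / i : ℕ)| ≤ 2 :=
      (ht.natDiv i).mono (by rw [div_self (mod_cast hi.ne')]; norm_num)
    rw [fixedLogAux_succ, sum_range_succ', add_zero]
    simp only [add_right_comm i 1, ← add_assoc] at hrec ⊢
    rw [abs_le] at *
    push_cast at hrec ⊢
    constructor <;> linarith

theorem isFixedPoint_fixedLogAux (hO₀ : 0 < O) {fuel : ℕ} (hO : O ≤ 2 ^ fuel) (hY : 2 * Y ≤ O) :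
    IsFixedPoint O (2 * fuel + 1) (fixedLogAux O Y fuel 1 Y 0) (-log (1 - Y / O)) := by
  have hYO : Y ≤ O := by lia
  have habs : |(Y / O : ℝ)| ≤ 1 / 2 := by
    rw [abs_of_nonneg (by positivity), div_le_div_iff₀ (by positivity) two_pos]
    exact_mod_cast (by lia : Y * 2 ≤ 1 * O)
  have hTaylor : O * |∑ j ∈ range fuel, (Y / O : ℝ) ^ (j + 1) / (j + 1) + log (1 - Y / O)| ≤ 1 :=
    calc _ ≤ O * (|(Y / O : ℝ)| ^ (fuel + 1) / (1 - |(Y / O : ℝ)|)) := by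
          gcongr
          exact abs_log_sub_add_sum_range_le (habs.trans_lt (by norm_num)) fuel
      _ ≤ 2 ^ fuel * ((1 / 2) ^ (fuel + 1) / (1 - 1 / 2)) := by
          gcongr
          · exact div_nonneg (by positivity) (by linarith)
          · exact_mod_cast hO
      _ = 1 := by
          rw [one_div, inv_pow, pow_succ]
          field_simp
          norm_num
  have hsum := abs_sum_sub_fixedLogAux_le hYO fuel one_pos (s := 0)
    (by rw [pow_one]; exact (IsFixedPoint.natCast_div hYO).mono (by simp)) hYO
  simp only [Nat.cast_zero, zero_add, add_comm 1, Nat.cast_add, Nat.cast_one, ← mul_sum] at hsum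
  calc |O * -log (1 - Y / O) - fixedLogAux O Y fuel 1 Y 0|
      = |(O * ∑ j ∈ range fuel, (Y / O : ℝ) ^ (j + 1) / (j + 1) - fixedLogAux O Y fuel 1 Y 0) -
          O * (∑ j ∈ range fuel, (Y / O : ℝ) ^ (j + 1) / (j + 1) + log (1 - Y / O))| := by ring_nf
    _ ≤ 2 * fuel + 1 := by
        refine (abs_sub _ _).trans (add_le_add hsum ?_)
        rwa [abs_mul, Nat.abs_cast]

theorem abs_log_sub_log_le {c u v : ℝ} (hc : 0 < c) (hu : c ≤ u) (hv : c ≤ v) :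
    |log u - log v| ≤ |u - v| / c := by
  wlog huv : v ≤ u generalizing u v
  · rw [abs_sub_comm, abs_sub_comm u]
    exact this hv hu (le_of_not_ge huv)
  have hv₀ : 0 < v := hc.trans_le hv
  have hu₀ : 0 < u := hc.trans_le hu
  rw [abs_of_nonneg (sub_nonneg.2 (log_le_log hv₀ huv)), abs_of_nonneg (sub_nonneg.2 huv),
    ← log_div hu₀.ne' hv₀.ne']
  calc log (u / v) ≤ u / v - 1 := log_le_sub_one_of_pos (by positivity)
    _ = (u - v) / v := by rw [sub_div, div_self hv₀.ne']
    _ ≤ (u - v) / c := by gcongr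

theorem IsFixedPoint.neg_log_one_sub (hO₀ : 0 < O) (hO : O ≤ 2 ^ 1900) (hX : 2 * X ≤ O)
    (hx : x ≤ 1 / 2) (h : IsFixedPoint O e X x) :
    IsFixedPoint O (3801 + 2 * e) (fixedLog O X) (-log (1 - x)) := by
  have hO' : (0 : ℝ) < O := mod_cast hO₀
  have hfrac : (X / O : ℝ) ≤ 1 / 2 := by
    rw [div_le_div_iff₀ hO' two_pos]
    exact_mod_cast (by lia : X * 2 ≤ 1 * O)
  have hlip : O * |log (1 - X / O) - log (1 - x)| ≤ 2 * e :=
    calc _ ≤ O * (|(1 - X / O) - (1 - x)| / (1 / 2)) := by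
          gcongr
          exact abs_log_sub_log_le (by norm_num) (by linarith) (by linarith)
      _ = 2 * |O * ((1 - X / O) - (1 - x))| := by rw [abs_mul, Nat.abs_cast]; ring
      _ = 2 * |O * x - X| := by congr 2; field_simp; ring
      _ ≤ 2 * e := by gcongr; exact h
  have hlog := isFixedPoint_fixedLogAux hO₀ hO hX
  calc |O * -log (1 - x) - fixedLog O X|
      = |(O * -log (1 - X / O) - fixedLog O X) +
          O * (log (1 - X / O) - log (1 - x))| := by ring_nf
    _ ≤ 3801 + 2 * e := by
        refine (abs_add_le _ _).trans (add_le_add (hlog.trans (by norm_num)) ?_)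
        rwa [abs_mul, Nat.abs_cast]

end FixedLog

section FixedPow

variable {O a k fuel : ℕ}

theorem fixedPow_le (ha : a ≤ O) (fuel k : ℕ) : fixedPow O a fuel k ≤ O := by
  induction fuel generalizing k with
  | zero => exact le_rfl
  | succ fuel ih =>
    have hsq := Nat.div_le_of_le_mul (Nat.mul_le_mul (ih (k / 2)) (ih (k / 2)))
    rw [fixedPow, force_eq, force_eq]
    cases k.beq 0 <;> cases (k % 2).beq 1
    · exact hsq
    · exact Nat.div_le_of_le_mul (Nat.mul_le_mul hsq ha)
    · exact le_rfl
    · exact le_rfl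

theorem isFixedPoint_fixedPow (ha : a ≤ O) (hk : k < 2 ^ fuel) :
    IsFixedPoint O (3 * k - 1 : ℕ) (fixedPow O a fuel k) ((a / O : ℝ) ^ k) := by
  induction fuel generalizing k with
  | zero =>
    obtain rfl : k = 0 := by lia
    simp [fixedPow, IsFixedPoint]
  | succ fuel ih =>
    have hpow_le : ∀ j, |(a / O : ℝ) ^ j| ≤ 1 := fun j ↦ by
      rw [abs_of_nonneg (by positivity)]
      exact pow_le_one₀ (by positivity) (div_le_one_of_le₀ (mod_cast ha) (by positivity))
    have hhalf := ih (k := k / 2) (by lia)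
    have hle := fixedPow_le ha fuel (k / 2)
    have hsquare := hhalf.mul hhalf hle (hpow_le _)
    have hodd := hsquare.mul (.natCast_div ha) (Nat.div_le_of_le_mul (Nat.mul_le_mul hle hle))
      (by simpa using hpow_le 1)
    rw [fixedPow, force_eq, force_eq]
    rcases k.eq_zero_or_pos with rfl | hk₀
    · simp [IsFixedPoint]
    have hne : k.beq 0 = false := Bool.eq_false_iff.2 fun h ↦ hk₀.ne' (Nat.eq_of_beq_eq_true h)
    rw [hne, cond_false]
    rcases Nat.mod_two_eq_zero_or_one k with hk₂ | hk₂
    · rw [hk₂, show Nat.beq 0 1 = false from rfl, cond_false]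
      refine (hsquare.mono ?_).congr ?_
      · exact_mod_cast (by lia : (3 * (k / 2) - 1) + (3 * (k / 2) - 1) + 1 ≤ 3 * k - 1)
      · rw [← pow_add]; congr 1; lia
    · rw [hk₂, show Nat.beq 1 1 = true from rfl, cond_true]
      refine (hodd.mono ?_).congr ?_
      · exact_mod_cast (by lia : (3 * (k / 2) - 1) + (3 * (k / 2) - 1) + 1 + 0 + 1 ≤ 3 * k - 1)
      · rw [← pow_add, ← pow_succ]; congr 1; lia

theorem isFixedPoint_fixedPow_sub {Z : ℕ} (hZ : Z ≤ O) (hk : k < 2 ^ fuel) :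
    IsFixedPoint O (3 * k) (fixedPow O (O - Z) fuel k) ((1 - Z / O : ℝ) ^ k) := by
  rcases O.eq_zero_or_pos with rfl | hO
  · obtain rfl := Nat.le_zero.1 hZ
    have : fixedPow 0 0 fuel k = 0 := Nat.le_zero.1 (fixedPow_le le_rfl fuel k)
    simp [IsFixedPoint, this]
  refine ((isFixedPoint_fixedPow (Nat.sub_le O Z) hk).mono ?_).congr ?_
  · exact_mod_cast Nat.sub_le (3 * k) 1
  · rw [Nat.cast_sub hZ, sub_div, div_self (mod_cast hO.ne')]

end FixedPow

section Root

variable {O k R X : ℕ} {x y α : ℝ}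

theorem mul_one_sub_pow_lt (hx : 0 ≤ x) (hxy : x < y) (hy : (k + 1) * y ≤ 1) (hy₁ : y < 1) :
    x * (1 - x) ^ k < y * (1 - y) ^ k := by
  have hx₁ : 0 < 1 - x := by linarith
  have hbernoulli : 1 + (k : ℝ) * ((1 - y) / (1 - x) - 1) ≤ ((1 - y) / (1 - x)) ^ k := by
    have := one_add_mul_le_pow (a := (1 - y) / (1 - x) - 1) ?_ k
    · simpa using this
    · have : 0 ≤ (1 - y) / (1 - x) := div_nonneg (by linarith) hx₁.le
      linarith
  have hgain : x < y * (1 + (k : ℝ) * ((1 - y) / (1 - x) - 1)) := by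
    have : y * (1 + (k : ℝ) * ((1 - y) / (1 - x) - 1)) - x =
        (y - x) * (1 - x - k * y) / (1 - x) := by field_simp; ring
    have : 0 < (y - x) * (1 - x - k * y) / (1 - x) :=
      div_pos (mul_pos (by linarith) (by linarith)) hx₁
    linarith
  calc x * (1 - x) ^ k < y * (1 + (k : ℝ) * ((1 - y) / (1 - x) - 1)) * (1 - x) ^ k := by gcongr
    _ ≤ y * ((1 - y) / (1 - x)) ^ k * (1 - x) ^ k := by gcongr; linarith
    _ = y * (1 - y) ^ k := by rw [div_pow]; field_simp

theorem le_of_mul_one_sub_pow_le (hx : 0 ≤ x) (hy : (k + 1) * y ≤ 1) (hy₁ : y < 1)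
    (h : y * (1 - y) ^ k ≤ x * (1 - x) ^ k) : y ≤ x :=
  le_of_not_gt fun hxy ↦ h.not_gt (mul_one_sub_pow_lt hx hxy hy hy₁)

/-- `α` is the dominant root of the characteristic polynomial of the `k`-step recurrence. It is
characterised as the root of `z ^ k * (2 - z) = 1` in `[2 - 1 / (k + 1), 2)`. -/
structure IsDominantRoot (k : ℕ) (α : ℝ) : Prop where
  pow_mul_eq : α ^ k * (2 - α) = 1
  lt_two : α < 2
  mul_le_one : (k + 1) * (2 - α) ≤ 1

theorem IsDominantRoot.mul_one_sub_pow (hα : IsDominantRoot k α) :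
    2 ^ (k + 1) * ((1 - α / 2) * (1 - (1 - α / 2)) ^ k) = 1 := by
  calc 2 ^ (k + 1) * ((1 - α / 2) * (1 - (1 - α / 2)) ^ k) = α ^ k * (2 - α) := by
        rw [sub_sub_self, div_pow, pow_succ]
        field_simp
    _ = 1 := hα.pow_mul_eq

theorem mul_one_sub_pow_le_of_isRoot (hO : 0 < O) (hk : k < 2 ^ 12)
    (h : isRoot O k (O ^ 2 / 2 ^ (k + 1)) X = true) :
    2 ^ (k + 1) * ((X / O : ℝ) * (1 - X / O) ^ k) ≤ 1 ∧
      1 ≤ 2 ^ (k + 1) * (((X + 16 : ℕ) / O : ℝ) * (1 - (X + 16 : ℕ) / O) ^ k) := by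
  simp only [isRoot, Bool.and_eq_true, Nat.ble_eq, Nat.blt_eq] at h
  obtain ⟨⟨hX, hlow⟩, hhigh⟩ := h
  have hXO : X + 16 ≤ O := (Nat.le_mul_of_pos_left _ (by lia)).trans hX
  rw [Nat.le_div_iff_mul_le (by positivity)] at hlow
  rw [Nat.div_lt_iff_lt_mul (by positivity)] at hhigh
  have hO' : (0 : ℝ) < O ^ 2 := by positivity
  constructor <;> refine le_of_mul_le_mul_left ?_ hO'
  · have hpow := abs_le.1 (isFixedPoint_fixedPow_sub (by lia : X ≤ O) hk)
    set q : ℝ := (1 - X / O) ^ k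
    calc (O : ℝ) ^ 2 * (2 ^ (k + 1) * (X / O * q)) = X * (O * q) * 2 ^ (k + 1) := by field_simp
      _ ≤ X * (fixedPow O (O - X) 12 k + 3 * k) * 2 ^ (k + 1) := by gcongr; linarith
      _ ≤ O ^ 2 * 1 := by rw [mul_one]; exact_mod_cast hlow
  · have hpow := abs_le.1 (isFixedPoint_fixedPow_sub hXO hk)
    set q : ℝ := (1 - (X + 16 : ℕ) / O) ^ k
    have hq₀ : 0 ≤ q := pow_nonneg (sub_nonneg.2 (div_le_one_of_le₀ (mod_cast hXO) (by simp))) k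
    have hsub : ((fixedPow O (O - (X + 16)) 12 k - 3 * k : ℕ) : ℝ) ≤ O * q := by
      rcases le_total (3 * k) (fixedPow O (O - (X + 16)) 12 k) with h | h
      · rw [Nat.cast_sub h]
        push_cast
        linarith
      · rw [Nat.sub_eq_zero_of_le h, Nat.cast_zero]
        positivity
    calc (O : ℝ) ^ 2 * 1
        ≤ (X + 16 : ℕ) * (fixedPow O (O - (X + 16)) 12 k - 3 * k : ℕ) * 2 ^ (k + 1) := by
          rw [mul_one]; exact_mod_cast hhigh.le
      _ ≤ (X + 16 : ℕ) * (O * q) * 2 ^ (k + 1) := by gcongr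
      _ = (O : ℝ) ^ 2 * (2 ^ (k + 1) * ((X + 16 : ℕ) / O * q)) := by field_simp

theorem IsDominantRoot.isFixedPoint (hα : IsDominantRoot k α) (hO : 0 < O) (hk₀ : 0 < k)
    (hk : k < 2 ^ 12) (h : isRoot O k (O ^ 2 / 2 ^ (k + 1)) X = true) :
    IsFixedPoint O 16 X (1 - α / 2) := by
  have hX : 2 * (k + 1) * (X + 16) ≤ O := by
    simp only [isRoot, Bool.and_eq_true, Nat.ble_eq] at h
    exact h.1.1
  have hO' : (0 : ℝ) < O := mod_cast hO
  obtain ⟨hlow, hhigh⟩ := mul_one_sub_pow_le_of_isRoot hO hk h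
  have hroot := hα.mul_one_sub_pow
  replace hlow := le_of_mul_le_mul_left (hlow.trans_eq hroot.symm) (by positivity)
  replace hhigh := le_of_mul_le_mul_left (hroot.trans_le hhigh) (by positivity)
  have hα₁ := hα.mul_le_one
  have hα₂ := hα.lt_two
  have : (1 : ℝ) ≤ k := mod_cast hk₀
  have hXk : ((k : ℝ) + 1) * (X / O) ≤ 1 / 2 := by
    rw [← mul_div_assoc, div_le_div_iff₀ hO' two_pos]
    exact_mod_cast (by lia : (k + 1) * X * 2 ≤ 1 * O)
  have hXO : 0 ≤ (X / O : ℝ) := by positivity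
  have hbelow : X / O ≤ 1 - α / 2 :=
    le_of_mul_one_sub_pow_le (by linarith) (by linarith) (by nlinarith) hlow
  have habove : 1 - α / 2 ≤ (X + 16 : ℕ) / O :=
    le_of_mul_one_sub_pow_le (by positivity) (by linarith) (by nlinarith) hhigh
  rw [div_le_iff₀ hO'] at hbelow
  rw [le_div_iff₀ hO'] at habove
  push_cast at habove
  rw [IsFixedPoint, abs_le]
  constructor <;> linarith

end Root

section PrimeLogs

variable {O l₂ l₃ l₅ l₇ : ℕ}

/-- Fixed-point values of the logarithms of the primes below ten, with enough accuracy for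
`checkRoot` and `checkTwo`. -/
structure IsPrimeLogs (O l₂ l₃ l₅ l₇ : ℕ) : Prop where
  two : IsFixedPoint O (2 ^ 16) l₂ (log 2)
  three : IsFixedPoint O (2 ^ 16) l₃ (log 3)
  five : IsFixedPoint O (2 ^ 16) l₅ (log 5)
  seven : IsFixedPoint O (2 ^ 16) l₇ (log 7)

theorem IsPrimeLogs.ten (h : IsPrimeLogs O l₂ l₃ l₅ l₇) :
    IsFixedPoint O (2 ^ 17) (l₂ + l₅) (log 10) := by
  refine ((h.two.add h.five).mono (by norm_num)).congr ?_
  rw [← log_mul (by simp) (by simp)]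
  norm_num

theorem IsPrimeLogs.isFixedPoint_digitLog (h : IsPrimeLogs O l₂ l₃ l₅ l₇) {b : ℕ} (hb₁ : 1 ≤ b)
    (hb₉ : b ≤ 9) : IsFixedPoint O (3 * 2 ^ 16) (digitLog l₂ l₃ l₅ l₇ b) (log b) := by
  have hlog_pow (p j : ℕ) : j * log p = log (p ^ j : ℕ) := by rw [Nat.cast_pow, log_pow]
  interval_cases b
  · simp [digitLog, IsFixedPoint]
  · exact h.two.mono (by norm_num)
  · exact h.three.mono (by norm_num)
  · exact ((h.two.natMul 2).mono (by norm_num)).congr (hlog_pow 2 2)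
  · exact h.five.mono (by norm_num)
  · refine ((h.two.add h.three).mono (by norm_num)).congr ?_
    rw [← log_mul (by simp) (by simp)]
    norm_num
  · exact h.seven.mono (by norm_num)
  · exact ((h.two.natMul 3).mono (by norm_num)).congr (hlog_pow 2 3)
  · exact ((h.three.natMul 2).mono (by norm_num)).congr (hlog_pow 3 2)

theorem isFixedPoint_fixedLog_natDiv (hO₀ : 0 < O) (hO : O ≤ 2 ^ 1900) {c : ℕ} (hc : 2 ≤ c) :
    IsFixedPoint O 3803 (fixedLog O (O / c)) (-log (1 - 1 / c)) := by
  have hc' : (2 : ℝ) ≤ c := mod_cast hc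
  have hinv : (1 / c : ℝ) ≤ 1 / 2 := by gcongr
  have hX : 2 * (O / c) ≤ O := (Nat.mul_le_mul_right _ hc).trans (Nat.mul_div_le O c)
  exact (IsFixedPoint.neg_log_one_sub hO₀ hO hX hinv (IsFixedPoint.one.natDiv c)).mono
    (by norm_num)

theorem exists_isPrimeLogs_of_withPrimeLogs {test : ℕ → ℕ → ℕ → ℕ → Bool} (hO₀ : 0 < O)
    (hO : O ≤ 2 ^ 1900) (h : withPrimeLogs O test = true) :
    ∃ l₂ l₃ l₅ l₇, IsPrimeLogs O l₂ l₃ l₅ l₇ ∧ test l₂ l₃ l₅ l₇ = true := by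
  simp only [withPrimeLogs, force_eq] at h
  refine ⟨_, _, _, _, ?_, h⟩
  have hlog₃ : -log (1 - 1 / (3 : ℕ)) = log 3 - log 2 := by
    rw [← log_inv, ← log_div (by simp) (by simp)]; norm_num
  have hlog₉ : -log (1 - 1 / (9 : ℕ)) = 2 * log 3 - 3 * log 2 := by
    rw [← log_inv, ← log_rpow (by simp), ← log_rpow (by simp), ← log_div (by simp) (by simp)]
    norm_num
  have hlog₁₀ : -log (1 - 1 / (10 : ℕ)) = log 2 + log 5 - 2 * log 3 := by
    rw [← log_inv, ← log_mul (by simp) (by simp), ← log_rpow (by simp),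
      ← log_div (by simp) (by simp)]
    norm_num
  have hlog₇ : -log (1 - 1 / (7 : ℕ)) = log 7 - (log 2 + log 3) := by
    rw [← log_inv, ← log_mul (by simp) (by simp), ← log_div (by simp) (by simp)]; norm_num
  have hlog_two : 0 ≤ log 2 := log_nonneg (by simp)
  have hlog_mono : log 2 ≤ log 3 := log_le_log (by simp) (by norm_num)
  have h₃ := (isFixedPoint_fixedLog_natDiv hO₀ hO (c := 3) (by simp)).congr hlog₃
  have h₉ := (isFixedPoint_fixedLog_natDiv hO₀ hO (c := 9) (by simp)).congr hlog₉
  have h₁₀ := (isFixedPoint_fixedLog_natDiv hO₀ hO (c := 10) (by simp)).congr hlog₁₀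
  have h₇ := (isFixedPoint_fixedLog_natDiv hO₀ hO (c := 7) (by simp)).congr hlog₇
  have htwo := ((h₃.natMul 2).sub h₉ (by push_cast; linarith)).congr
    (by push_cast; ring : _ = log 2)
  have hthree := (htwo.add h₃).congr (add_sub_cancel (log 2) (log 3))
  have hfive := (((hthree.natMul 2).sub htwo (by push_cast; linarith)).add h₁₀).congr
    (by push_cast; ring : _ = log 5)
  have hseven := ((htwo.add hthree).add h₇).congr (add_sub_cancel _ _)
  exact ⟨htwo.mono (by norm_num), hthree.mono (by norm_num), hfive.mono (by norm_num),
    hseven.mono (by norm_num)⟩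

end PrimeLogs

section Transport

variable {O L₁ L₂ G N W m z : ℕ} {l₁ l₂ g : ℝ}

theorem lt_mul_abs_of_isFixedPoint (h₁ : IsFixedPoint O (2 ^ 20) L₁ l₁)
    (h₂ : IsFixedPoint O (2 ^ 20) L₂ l₂) (hg : IsFixedPoint O (2 ^ 20) G g) (hm : m ≤ N)
    (hz : z ≤ N + 1)
    (h : ((W + (2 * N + 2) * 2 ^ 20 : ℕ) : ℤ) < |(G : ℤ) + m * L₂ - (z : ℤ) * L₁|) :
    W < O * |g + m * l₂ - z * l₁| := by
  have hint : (W : ℝ) + (2 * N + 2) * 2 ^ 20 < |(G : ℝ) + m * L₂ - z * L₁| := by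
    exact_mod_cast h
  have hm' : (m : ℝ) ≤ N := mod_cast hm
  have hz' : (z : ℝ) ≤ N + 1 := mod_cast hz
  have herror : |(O * g - G) + m * (O * l₂ - L₂) - z * (O * l₁ - L₁)| ≤
      (2 * N + 2) * 2 ^ 20 := by
    calc |(O * g - G) + m * (O * l₂ - L₂) - z * (O * l₁ - L₁)|
        ≤ |O * g - G| + |m * (O * l₂ - L₂)| + |z * (O * l₁ - L₁)| := by
          grw [abs_sub, abs_add_le]
      _ = |O * g - G| + m * |O * l₂ - L₂| + z * |O * l₁ - L₁| := by simp [abs_mul]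
      _ ≤ 2 ^ 20 + N * 2 ^ 20 + (N + 1) * 2 ^ 20 := by gcongr <;> assumption
      _ = (2 * N + 2) * 2 ^ 20 := by ring
  calc (W : ℝ) < |(G : ℝ) + m * L₂ - z * L₁| -
        |(O * g - G) + m * (O * l₂ - L₂) - z * (O * l₁ - L₁)| := by linarith
    _ ≤ |(G + m * L₂ - z * L₁) + ((O * g - G) + m * (O * l₂ - L₂) - z * (O * l₁ - L₁))| := by
        have := abs_sub_abs_le_abs_sub ((G : ℝ) + m * L₂ - z * L₁)
          (-((O * g - G) + m * (O * l₂ - L₂) - z * (O * l₁ - L₁)))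
        rwa [abs_neg, sub_neg_eq_add] at this
    _ = |O * (g + m * l₂ - z * l₁)| := by ring_nf
    _ = O * |g + m * l₂ - z * l₁| := by rw [abs_mul, Nat.abs_cast]

end Transport

section BinetCoeff

variable {k : ℕ} {α : ℝ}

/-- The coefficient of the dominant term `α ^ (n - 1)` in the Binet-type formula for the
`k`-generalized Lucas numbers. -/
noncomputable def binetCoeff (k : ℕ) (α : ℝ) : ℝ :=
  (2 * α - 1) * (α - 1) / ((k + 1) * α - 2 * k)

theorem IsDominantRoot.add_one_mul_le_half (hα : IsDominantRoot k α) :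
    (k + 1) * (1 - α / 2) ≤ 1 / 2 := by
  linarith [hα.mul_le_one]

theorem IsDominantRoot.one_sub_half_pos (hα : IsDominantRoot k α) : 0 < 1 - α / 2 := by
  linarith [hα.lt_two]

theorem IsDominantRoot.one_sub_half_le (hα : IsDominantRoot k α) (hk : 3 ≤ k) :
    1 - α / 2 ≤ 1 / 8 := by
  have hk' : (3 : ℝ) ≤ k := mod_cast hk
  nlinarith [hα.add_one_mul_le_half, hα.one_sub_half_pos]

theorem binetCoeff_eq (k : ℕ) (α : ℝ) : binetCoeff k α =
    3 * (1 - 4 * (1 - α / 2) / 3) * (1 - 2 * (1 - α / 2)) / (2 * (1 - (k + 1) * (1 - α / 2))) := by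
  rw [binetCoeff]
  congr 1 <;> ring

theorem IsDominantRoot.three_halves_le_binetCoeff (hα : IsDominantRoot k α) (hk : 3 ≤ k) :
    3 / 2 ≤ binetCoeff k α := by
  have hk' : (3 : ℝ) ≤ k := mod_cast hk
  rw [binetCoeff_eq, div_le_div_iff₀ two_pos (by linarith [hα.add_one_mul_le_half])]
  nlinarith [hα.one_sub_half_pos]

theorem IsDominantRoot.binetCoeff_le_three (hα : IsDominantRoot k α) (hk : 3 ≤ k) :
    binetCoeff k α ≤ 3 := by
  rw [binetCoeff_eq, div_le_iff₀ (by linarith [hα.add_one_mul_le_half])]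
  nlinarith [hα.one_sub_half_pos, hα.one_sub_half_le hk, hα.add_one_mul_le_half]

theorem IsDominantRoot.log_binetCoeff (hα : IsDominantRoot k α) (hk : 3 ≤ k) :
    log (binetCoeff k α) = log 3 + -log (1 - (k + 1) * (1 - α / 2)) -
      (-log (1 - 4 * (1 - α / 2) / 3) + -log (1 - 2 * (1 - α / 2)) + log 2) := by
  have hle := hα.one_sub_half_le hk
  have hlin := hα.add_one_mul_le_half
  have h₁ : 0 < 1 - 4 * (1 - α / 2) / 3 := by linarith
  have h₂ : 0 < 1 - 2 * (1 - α / 2) := by linarith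
  have h₃ : 0 < 1 - (k + 1) * (1 - α / 2) := by linarith
  rw [binetCoeff_eq, log_div (by positivity) (by positivity), log_mul (by positivity) h₂.ne',
    log_mul three_ne_zero h₁.ne', log_mul two_ne_zero h₃.ne']
  ring

end BinetCoeff

section Checks

variable {O S L₁ L₂ l₂ l₃ l₅ l₇ t N W k X a b d m : ℕ} {α g : ℝ}

theorem IsDominantRoot.isFixedPoint_log (hα : IsDominantRoot k α) (hk : 3 ≤ k) (hO₀ : 0 < O)
    (hO : O ≤ 2 ^ 1900) (hX : 2 * (k + 1) * (X + 16) ≤ O) (hroot : IsFixedPoint O 16 X (1 - α / 2))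
    (hl : IsPrimeLogs O l₂ l₃ l₅ l₇) : IsFixedPoint O (2 ^ 20) (l₂ - fixedLog O X) (log α) := by
  have hle := hα.one_sub_half_le hk
  have hX₈ : 8 * X ≤ O := (Nat.mul_le_mul (by lia) (by lia)).trans hX
  have hlog := IsFixedPoint.neg_log_one_sub hO₀ hO (by lia) (hle.trans (by norm_num)) hroot
  have hα₀ : 0 < α := by linarith
  have heq : log 2 - -log (1 - (1 - α / 2)) = log α := by
    rw [sub_sub_self, log_div hα₀.ne' two_ne_zero]; ring
  have hlog_nonneg : 0 ≤ log α := log_nonneg (by linarith)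
  exact ((hl.two.sub hlog (by linarith)).mono (by norm_num)).congr heq

theorem IsDominantRoot.isFixedPoint_log_binetCoeff (hα : IsDominantRoot k α) (hk : 3 ≤ k)
    (hk' : k < 2 ^ 12) (hO₀ : 0 < O) (hO : O ≤ 2 ^ 1900) (hX : 2 * (k + 1) * (X + 16) ≤ O)
    (hroot : IsFixedPoint O 16 X (1 - α / 2)) (hl : IsPrimeLogs O l₂ l₃ l₅ l₇) :
    IsFixedPoint O (2 ^ 19 + 2 ^ 18) (l₂ + l₅ + l₃ + fixedLog O ((k + 1) * X) -
      (fixedLog O (4 * X / 3) + fixedLog O (2 * X) + l₂)) (log 10 + log (binetCoeff k α)) := by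
  have hle := hα.one_sub_half_le hk
  have hX₈ : 8 * X ≤ O := (Nat.mul_le_mul (by lia) (by lia)).trans hX
  have hX_k : 2 * ((k + 1) * X) ≤ O := by
    rw [← mul_assoc]
    exact (Nat.mul_le_mul_left _ (Nat.le_add_right X 16)).trans hX
  have hk_root := hroot.natMul (k + 1)
  have hlog_k := IsFixedPoint.neg_log_one_sub hO₀ hO hX_k
    (by exact_mod_cast hα.add_one_mul_le_half) hk_root
  have hlog₂ := IsFixedPoint.neg_log_one_sub hO₀ hO (by lia) (by push_cast; linarith)
    (hroot.natMul 2)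
  have hlog₃ := IsFixedPoint.neg_log_one_sub hO₀ hO (by lia) (by push_cast; linarith)
    ((hroot.natMul 4).natDiv 3)
  have hnonneg : 0 ≤ log 10 + log (binetCoeff k α) := add_nonneg (log_nonneg (by simp))
    (log_nonneg (by linarith [hα.three_halves_le_binetCoeff hk]))
  have heq := hα.log_binetCoeff hk
  refine ((((hl.ten.add hl.three).add hlog_k).sub ((hlog₃.add hlog₂).add hl.two) ?_).mono
    ?_).congr ?_
  · push_cast
    linarith
  · have : (k : ℝ) ≤ 2 ^ 12 := mod_cast hk'.le
    push_cast
    linarith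
  · push_cast
    linarith

theorem lt_mul_abs_of_reductionTest (hl : IsPrimeLogs O l₂ l₃ l₅ l₇) (hb₁ : 1 ≤ b) (hb₉ : b ≤ 9)
    {α γ : ℝ} (hα : IsFixedPoint O (2 ^ 20) L₂ (log α)) {n : ℕ}
    (hγ : IsFixedPoint O (2 ^ 19 + 2 ^ 18) n (log 10 + log γ)) (hγ₁ : 1 ≤ γ) {Q : ℕ}
    (h : reductionTest (l₂ + l₅) L₂ (n - digitLog l₂ l₃ l₅ l₇ b) N (W + (2 * N + 2) * 2 ^ 20) Q =
      true) (hd : d ≤ m) (hm : m ≤ N) :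
    W < O * |log (γ / b) - (d * log 10 - m * log α)| := by
  have hb₀ : (0 : ℝ) < b := mod_cast hb₁
  have hlog_le : log b ≤ log 10 + log γ :=
    (log_le_log hb₀ (by exact_mod_cast (by lia : b ≤ 10))).trans
      (le_add_of_nonneg_right (log_nonneg hγ₁))
  have hlt := lt_mul_abs_of_isFixedPoint (z := d + 1) (hl.ten.mono (by norm_num)) hα
    ((hγ.sub (hl.isFixedPoint_digitLog hb₁ hb₉) hlog_le).mono (by norm_num)) hm (by lia)
    (lt_abs_of_reductionTest h hm _)
  convert hlt using 3
  rw [log_div (by linarith) hb₀.ne']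
  push_cast
  ring

theorem lt_mul_abs_of_checkRoot (hα : IsDominantRoot k α) (hk : 3 ≤ k) (hk' : k < 2 ^ 12)
    (hO₀ : 0 < O) (hO : O ≤ 2 ^ 1900) (hl : IsPrimeLogs O l₂ l₃ l₅ l₇)
    (h : checkRoot O S l₂ l₃ l₅ l₇ t N (W + (2 * N + 2) * 2 ^ 20) k = true)
    (hb₁ : 1 ≤ b) (hb₉ : b ≤ 9) (hd : d ≤ m) (hm : m ≤ N) :
    W < O * |log (binetCoeff k α / b) - (d * log 10 - m * log α)| := by
  simp only [checkRoot, force_eq] at h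
  generalize rootSearch O k (O ^ 2 / 2 ^ (k + 1)) 1000 0 - 4 = X at h
  rw [Bool.and_eq_true] at h
  obtain ⟨hisRoot, h⟩ := h
  have hroot := hα.isFixedPoint hO₀ (by lia) hk' hisRoot
  have hX : 2 * (k + 1) * (X + 16) ≤ O := by
    simp only [isRoot, Bool.and_eq_true, Nat.ble_eq] at hisRoot
    exact hisRoot.1.1
  have hlog := hα.isFixedPoint_log hk hO₀ hO hX hroot hl
  have hcoeff := hα.isFixedPoint_log_binetCoeff hk hk' hO₀ hO hX hroot hl
  have hone : 1 ≤ binetCoeff k α := by linarith [hα.three_halves_le_binetCoeff hk]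
  obtain ⟨_, _, h⟩ := exists_of_euclidUntil h
  rw [Bool.and_eq_true] at h
  obtain ⟨hdigits, hthree_six⟩ := h
  obtain ⟨_, _, hthree_six⟩ := exists_of_euclidUntil hthree_six
  rw [List.all_eq_true] at hdigits hthree_six
  obtain hb | hb : b ∈ [1, 2, 4, 5, 7, 8, 9] ∨ b ∈ [3, 6] := by
    simp only [List.mem_cons, List.not_mem_nil]; lia
  · obtain ⟨Q, hQ⟩ := exists_of_euclidSearch (hdigits b hb)
    exact lt_mul_abs_of_reductionTest hl hb₁ hb₉ hlog hcoeff hone hQ hd hm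
  · obtain ⟨Q, hQ⟩ := exists_of_euclidSearch (hthree_six b hb)
    exact lt_mul_abs_of_reductionTest hl hb₁ hb₉ hlog hcoeff hone hQ hd hm

theorem lt_mul_abs_of_homogeneousTest (hl : IsPrimeLogs O l₂ l₃ l₅ l₇) {Q : ℕ}
    (h : homogeneousTest (l₂ + l₅) l₂ N (W + (2 * N + 2) * 2 ^ 20) Q = true) (hd : d ≤ m)
    (hm₀ : 0 < m) (hm : m ≤ N) : W < O * |m * log 2 - d * log 10| := by
  have hlt := lt_mul_abs_of_isFixedPoint (G := 0) (g := 0) (z := d)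
    (hl.ten.mono (by norm_num)) (hl.two.mono (by norm_num)) (by simp [IsFixedPoint]) hm
    (by lia) (by simpa using lt_abs_of_homogeneousTest h hm₀ hm d)
  rwa [zero_add] at hlt

end Checks

section Bounds

variable {t N W k f b d m : ℕ} {α : ℝ}

theorem fixedPointScale_pos : 0 < fixedPointScale :=
  pow_pos two_pos 1900

theorem lt_mul_abs_of_checkRoots (hα : IsDominantRoot k α) (hk : 3 ≤ k) (hk' : k < 2 ^ 12) {k₀ : ℕ}
    (hk₀ : k₀ ≤ k) (hkf : k < k₀ + f) (h : checkRoots t N W k₀ f = true)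
    (hb₁ : 1 ≤ b) (hb₉ : b ≤ 9) (hd : d ≤ m) (hm : m ≤ N) :
    (W : ℝ) < fixedPointScale * |log (binetCoeff k α / b) - (d * log 10 - m * log α)| := by
  rw [checkRoots] at h
  generalize 2 ^ 1400 = S at h
  simp only [force_eq] at h
  obtain ⟨l₂, l₃, l₅, l₇, hl, h⟩ :=
    exists_isPrimeLogs_of_withPrimeLogs fixedPointScale_pos (Nat.le_of_eq rfl) h
  have hcheck := List.all_eq_true.1 h (k - k₀) (List.mem_range.2 (by lia))
  rw [Nat.add_sub_cancel' hk₀] at hcheck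
  exact lt_mul_abs_of_checkRoot hα hk hk' fixedPointScale_pos (Nat.le_of_eq rfl) hl hcheck hb₁ hb₉
    hd hm

theorem lt_mul_abs_of_checkTwo (h : checkTwo t N W = true)
    (hb₁ : 1 ≤ b) (hb₉ : b ≤ 9) (hd : d < m) (hm₂ : 2 ≤ m) (hm : m ≤ N) :
    (W : ℝ) < fixedPointScale * |log (3 / b) - (d * log 10 - m * log 2)| := by
  rw [checkTwo] at h
  generalize 2 ^ 1400 = S at h
  simp only [force_eq] at h
  obtain ⟨l₂, l₃, l₅, l₇, hl, h⟩ :=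
    exists_isPrimeLogs_of_withPrimeLogs fixedPointScale_pos (Nat.le_of_eq rfl) h
  obtain ⟨_, _, h⟩ := exists_of_euclidUntil h
  rw [Bool.and_eq_true, List.all_eq_true] at h
  obtain ⟨hdigits, hhomogeneous⟩ := h
  obtain ⟨Q, hQ⟩ := exists_of_euclidSearch hhomogeneous
  obtain rfl | rfl | hb : b = 3 ∨ b = 6 ∨ b ∈ [1, 2, 4, 5, 7, 8, 9] := by
    simp only [List.mem_cons, List.not_mem_nil]; lia
  · have hlt := lt_mul_abs_of_homogeneousTest hl hQ hd.le (by lia) hm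
    convert hlt using 3
    simp
  · have hlt := lt_mul_abs_of_homogeneousTest (m := m - 1) hl hQ (Nat.le_sub_one_of_lt hd)
      (by lia) ((Nat.sub_le m 1).trans hm)
    convert hlt using 3
    rw [show (3 / (6 : ℕ) : ℝ) = 2⁻¹ by norm_num, log_inv, Nat.cast_pred (by lia)]
    ring
  · obtain ⟨Q, hQ⟩ := exists_of_euclidSearch (hdigits b hb)
    exact lt_mul_abs_of_reductionTest hl hb₁ hb₉ (hl.two.mono (by norm_num))
      ((hl.ten.add hl.three).mono (by norm_num)) (by norm_num) hQ hd.le hm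

theorem one_div_two_pow_lt (i : ℕ) {e : ℕ} (hie : i + e = 1900) {x : ℝ}
    (h : ((2 ^ i : ℕ) : ℝ) < fixedPointScale * x) : 1 / 2 ^ e < x := by
  rw [fixedPointScale, ← hie] at h
  push_cast [pow_add, mul_assoc] at h
  rw [div_lt_iff₀' (by positivity)]
  exact (lt_mul_iff_one_lt_right (by positivity)).1 h

theorem IsDominantRoot.lt_abs_linear_form_of_le_two_pow (hα : IsDominantRoot k α) (hk : 3 ≤ k)
    (hk' : k < 1233) (hb₁ : 1 ≤ b) (hb₉ : b ≤ 9) (hd : d ≤ m) (hm : m ≤ 2 ^ 601) :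
    1 / 2 ^ 1300 < |log (binetCoeff k α / b) - (d * log 10 - m * log α)| :=
  one_div_two_pow_lt 600 rfl (lt_mul_abs_of_checkRoots hα hk (by lia) (by lia) (by lia)
    (checkRoots_large (j := (k - 3) / 30) (by lia)) hb₁ hb₉ hd hm)

theorem IsDominantRoot.lt_abs_linear_form_of_le (hα : IsDominantRoot k α) (hk : 3 ≤ k)
    (hk' : k < 43) (hb₁ : 1 ≤ b) (hb₉ : b ≤ 9) (hd : d ≤ m) (hm : m ≤ 1700) :
    1 / 2 ^ 80 < |log (binetCoeff k α / b) - (d * log 10 - m * log α)| :=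
  one_div_two_pow_lt 1820 rfl (lt_mul_abs_of_checkRoots hα hk (by lia) hk (by lia)
    checkRoots_small hb₁ hb₉ hd hm)

theorem lt_abs_linear_form_two_of_le_two_pow (hb₁ : 1 ≤ b) (hb₉ : b ≤ 9) (hd : d < m)
    (hm₂ : 2 ≤ m) (hm : m ≤ 2 ^ 601) :
    1 / 2 ^ 620 < |log (3 / b) - (d * log 10 - m * log 2)| :=
  one_div_two_pow_lt 1280 rfl (lt_mul_abs_of_checkTwo checkTwo_large hb₁ hb₉ hd hm₂ hm)

theorem lt_abs_linear_form_two_of_le (hb₁ : 1 ≤ b) (hb₉ : b ≤ 9) (hd : d < m)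
    (hm₂ : 2 ≤ m) (hm : m ≤ 1700) :
    1 / 2 ^ 24 < |log (3 / b) - (d * log 10 - m * log 2)| :=
  one_div_two_pow_lt 1876 rfl (lt_mul_abs_of_checkTwo checkTwo_small hb₁ hb₉ hd hm₂ hm)

end Bounds

/-! ### Generalized Lucas numbers -/

section KStep

/-- The `k`-step recurrence: each term of `u` from index `k` on is the sum of the `k` preceding
terms. -/
def IsKStep {R : Type*} [AddCommMonoid R] (k : ℕ) (u : ℕ → R) : Prop :=
  ∀ m, u (m + k) = ∑ i ∈ range k, u (m + i)

theorem IsKStep.map {R S : Type*} [AddCommMonoid R] [AddCommMonoid S] {k : ℕ} {u : ℕ → R}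
    (hu : IsKStep k u) (f : R →+ S) : IsKStep k fun m ↦ f (u m) := fun m ↦
  (congrArg f (hu m)).trans (map_sum f _ _)

theorem IsKStep.apply_add_add_one {R : Type*} [CommRing R] {k : ℕ} {u : ℕ → R}
    (hu : IsKStep k u) (m : ℕ) : u (m + k + 1) = 2 * u (m + k) - u m := by
  have hshift : ∑ i ∈ range k, u (m + 1 + i) + u m = ∑ i ∈ range k, u (m + i) + u (m + k) := by
    rw [← sum_range_succ (fun i ↦ u (m + i)), sum_range_succ', add_zero]
    simp only [add_assoc, add_comm 1]
  rw [← hu m, ← hu (m + 1), add_right_comm] at hshift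
  linear_combination hshift

end KStep

section GenLucas

variable {k : ℕ}

theorem genLucas_of_lt {m : ℕ} (h : m < k - 2) : genLucas k m = 0 := by
  rw [genLucas, dif_pos h]

theorem genLucas_sub_two (k : ℕ) : genLucas k (k - 2) = 2 := by
  rw [genLucas, dif_neg (lt_irrefl _), dif_pos rfl]

theorem genLucas_sub_one (hk : 2 ≤ k) : genLucas k (k - 1) = 1 := by
  rw [genLucas, dif_neg (by lia), dif_neg (by lia), dif_pos rfl]

theorem isKStep_genLucas (hk : 2 ≤ k) : IsKStep k (genLucas k) := fun m ↦ by
  rw [genLucas, dif_neg (by lia), dif_neg (by lia), dif_neg (by lia), ← sum_range_reflect]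
  refine sum_congr rfl fun i hi ↦ congrArg _ ?_
  have := mem_range.1 hi
  lia

theorem sum_range_mul_genLucas {R : Type*} [CommRing R] (hk : 2 ≤ k) (c : ℕ → R) :
    ∑ i ∈ range k, c i * (genLucas k i : R) = 2 * c (k - 2) + c (k - 1) := by
  obtain ⟨j, rfl⟩ := Nat.exists_eq_add_of_le' hk
  have hone := genLucas_sub_one hk
  have htwo := genLucas_sub_two (j + 2)
  rw [Nat.add_sub_cancel] at htwo
  rw [Nat.add_sub_cancel, sum_range_succ, sum_range_succ, sum_eq_zero, htwo]
  · rw [show j + 2 - 1 = j + 1 from rfl] at hone ⊢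
    rw [hone]
    push_cast
    ring
  · intro i hi
    rw [genLucas_of_lt (mem_range.1 hi), Int.cast_zero, mul_zero]

theorem genLucas_self (hk : 2 ≤ k) : genLucas k k = 3 := by
  calc genLucas k k = ∑ i ∈ range k, 1 * genLucas k i := by
        simpa using isKStep_genLucas hk 0
    _ = 3 := by simpa using sum_range_mul_genLucas hk fun _ ↦ (1 : ℤ)

theorem genLucas_nonneg (hk : 2 ≤ k) (m : ℕ) : 0 ≤ genLucas k m := by
  induction m using Nat.strong_induction_on with
  | _ m ih =>
    obtain hm | rfl | rfl | hm : m < k - 2 ∨ m = k - 2 ∨ m = k - 1 ∨ k ≤ m := by lia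
    · rw [genLucas_of_lt hm]
    · rw [genLucas_sub_two]; exact two_pos.le
    · rw [genLucas_sub_one hk]; exact one_pos.le
    · obtain ⟨j, rfl⟩ := Nat.exists_eq_add_of_le' hm
      rw [isKStep_genLucas hk]
      exact sum_nonneg fun i hi ↦ ih _ (Nat.add_lt_add_left (mem_range.1 hi) j)

theorem lucasL_zero (k : ℕ) : lucasL k 0 = 2 := by
  rw [lucasL, zero_add, genLucas_sub_two]

theorem lucasL_one (hk : 2 ≤ k) : lucasL k 1 = 1 := by
  rw [lucasL, show 1 + k - 2 = k - 1 by lia, genLucas_sub_one hk]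

theorem lucasL_two (hk : 2 ≤ k) : lucasL k 2 = 3 := by
  rw [lucasL, Nat.add_sub_cancel_left, genLucas_self hk]

theorem lucasL_nonneg (hk : 2 ≤ k) (n : ℕ) : 0 ≤ lucasL k n := genLucas_nonneg hk _

theorem lucasL_add_three (hk : 2 ≤ k) (n : ℕ) :
    lucasL k (n + 3) = 2 * lucasL k (n + 2) - genLucas k n := by
  have h := (isKStep_genLucas hk).apply_add_add_one n
  rwa [lucasL, lucasL, show n + 3 + k - 2 = n + k + 1 by lia, show n + 2 + k - 2 = n + k by lia]

theorem lucasL_succ_of_lt {n : ℕ} (hk : 2 ≤ k) (hn : 2 ≤ n) (hnk : n < k) :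
    lucasL k (n + 1) = 2 * lucasL k n := by
  obtain ⟨n, rfl⟩ := Nat.exists_eq_add_of_le' hn
  rw [lucasL_add_three hk, genLucas_of_lt (by lia), sub_zero]

theorem lucasL_succ_of_le {n : ℕ} (hk : 2 ≤ k) (hnk : k ≤ n) :
    lucasL k (n + 1) = 2 * lucasL k n - lucasL k (n - k) := by
  obtain ⟨n, rfl⟩ := Nat.exists_eq_add_of_le' (hk.trans hnk)
  rw [lucasL_add_three hk, lucasL.eq_def k (n + 2 - k)]
  congr 2
  lia

theorem lucasL_eq_of_le {n : ℕ} (hk : 2 ≤ k) (hn : 2 ≤ n) (hnk : n ≤ k) :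
    lucasL k n = 3 * 2 ^ (n - 2) := by
  induction n, hn using Nat.le_induction with
  | base => rw [lucasL_two hk]; rfl
  | succ n hn ih =>
    rw [lucasL_succ_of_lt hk hn hnk, ih (by lia), Nat.sub_add_comm hn, pow_succ]
    ring

theorem lucasL_le {n : ℕ} (hk : 2 ≤ k) (hn : 2 ≤ n) : lucasL k n ≤ 3 * 2 ^ (n - 2) := by
  induction n, hn using Nat.le_induction with
  | base => rw [lucasL_two hk]; rfl
  | succ n hn ih =>
    rw [Nat.sub_add_comm hn, pow_succ]
    rcases lt_or_ge n k with h | h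
    · rw [lucasL_succ_of_lt hk hn h]; linarith
    · rw [lucasL_succ_of_le hk h]; linarith [lucasL_nonneg hk (n - k)]

theorem lucasL_le_two_pow (hk : 2 ≤ k) (n : ℕ) : lucasL k n ≤ 2 ^ (n + 1) := by
  rcases n with _ | _ | n
  · rw [lucasL_zero]; rfl
  · rw [lucasL_one hk]; decide
  · calc lucasL k (n + 2) ≤ 3 * 2 ^ n := lucasL_le hk (Nat.le_add_left 2 n)
      _ ≤ 2 ^ (n + 2 + 1) := by rw [pow_add _ (n + 2), pow_add]; lia

theorem le_lucasL_add {n : ℕ} (hk : 2 ≤ k) (hnk : k ≤ n) :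
    3 * 2 ^ (n - 2) ≤ lucasL k n + (n - k) * 2 ^ (n - k) := by
  induction n, hnk using Nat.le_induction with
  | base => simp [lucasL_eq_of_le hk hk le_rfl]
  | succ n hn ih =>
    have hle := lucasL_le_two_pow hk (n - k)
    rw [pow_succ] at hle
    rw [lucasL_succ_of_le hk hn, Nat.sub_add_comm (hk.trans hn), Nat.sub_add_comm hn, pow_succ,
      pow_succ]
    push_cast
    linear_combination 2 * ih + hle

end GenLucas

section DominantRoot

variable {k : ℕ} {α : ℝ}

theorem exists_isDominantRoot (hk : 3 ≤ k) : ∃ α, IsDominantRoot k α := by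
  have hpow : 2 * (k + 1 : ℝ) ≤ 2 ^ k := by
    have : 2 * (k + 1) ≤ 2 ^ k := by
      induction k, hk using Nat.le_induction with
      | base => decide
      | succ n hn ih => rw [pow_succ]; lia
    exact_mod_cast this
  have hk₀ : (0 : ℝ) < k + 1 := by positivity
  set β : ℝ := 2 - 1 / (k + 1)
  have hβ : β ≤ 2 := sub_le_self 2 (by positivity)
  have hβ_pow : 1 ≤ β ^ k * (2 - β) := by
    have hbernoulli : 1 / 2 ≤ (β / 2) ^ k := by
      have hhalf : k * (1 / (2 * (k + 1 : ℝ))) ≤ 1 / 2 := by field_simp; linarith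
      have hsmall : 1 / (2 * (k + 1 : ℝ)) ≤ 1 := by
        rw [div_le_one (by positivity)]; linarith [k.cast_nonneg (α := ℝ)]
      have hle := one_add_mul_le_pow (a := -(1 / (2 * (k + 1 : ℝ)))) (by linarith) k
      rw [show β / 2 = 1 + -(1 / (2 * (k + 1 : ℝ))) by simp only [β]; field_simp; ring]
      linarith
    calc (1 : ℝ) = 2 * (k + 1) * (1 / 2) * (1 / (k + 1)) := by field_simp
      _ ≤ 2 ^ k * (β / 2) ^ k * (1 / (k + 1)) := by gcongr
      _ = β ^ k * (2 - β) := by rw [← mul_pow, mul_div_cancel₀ _ two_ne_zero, sub_sub_cancel]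
  have hcont : ContinuousOn (fun z : ℝ ↦ z ^ k * (2 - z)) (Set.Icc β 2) := by fun_prop
  obtain ⟨α, ⟨hβα, hα₂⟩, hα : α ^ k * (2 - α) = 1⟩ :=
    intermediate_value_Icc' hβ hcont ⟨by simp, hβ_pow⟩
  refine ⟨α, hα, hα₂.lt_of_ne ?_, ?_⟩
  · rintro rfl
    simp at hα
  · rw [← le_div_iff₀' hk₀]
    linarith

namespace IsDominantRoot

variable (hα : IsDominantRoot k α)
include hα

theorem one_lt (hk : 0 < k) : 1 < α := by
  have : (1 : ℝ) ≤ k := mod_cast hk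
  nlinarith [hα.mul_le_one, hα.lt_two]

theorem one_le_denominator : 1 ≤ (k + 1) * α - 2 * k := by
  linarith [hα.mul_le_one]

theorem inv_pow_eq : α⁻¹ ^ k = 2 - α := by
  rw [inv_pow, inv_eq_of_mul_eq_one_right hα.pow_mul_eq]

theorem sum_inv_pow_succ (hk : 0 < k) : ∑ i ∈ range k, α⁻¹ ^ (i + 1) = 1 := by
  have h₁ := hα.one_lt hk
  have h₀ : α ≠ 0 := by positivity
  have hne : 1 - α ≠ 0 := by linarith
  simp only [pow_succ]
  rw [← sum_mul, geom_sum_eq (inv_eq_one.not.2 h₁.ne'), hα.inv_pow_eq,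
    show α⁻¹ - 1 = (1 - α) / α by field_simp]
  field_simp
  ring

end IsDominantRoot

end DominantRoot

section Binet

variable {k : ℕ} {α C : ℝ} {u : ℕ → ℝ}

theorem sum_inv_pow_mul_sub (hα : α ≠ 0) (u : ℕ → ℝ) (j i : ℕ) :
    ∑ l ∈ range i, α⁻¹ ^ (l + 1) * (u (j + l + 1) - α * u (j + l)) =
      α⁻¹ ^ i * u (j + i) - u j := by
  induction i with
  | zero => simp
  | succ i ih =>
    rw [sum_range_succ, ih, ← add_assoc, pow_succ]
    field_simp
    ring

namespace IsDominantRoot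

variable (hα : IsDominantRoot k α) (hk : 0 < k)
include hα hk

/- The sequence `v j = u (j + 1) - α * u j` satisfies a recurrence whose coefficients are positive
with sum `1`, so it is bounded by its initial values. -/
theorem abs_succ_sub_mul_le (hu : IsKStep k u) (hC : ∀ j < k, |u (j + 1) - α * u j| ≤ C) (j : ℕ) :
    |u (j + 1) - α * u j| ≤ C := by
  have hα₀ : 0 < α := one_pos.trans (hα.one_lt hk)
  induction j using Nat.strong_induction_on with
  | _ j ih =>
    rcases lt_or_ge j k with hj | hj
    · exact hC j hj
    obtain ⟨m, rfl⟩ := Nat.exists_eq_add_of_le' hj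
    have hconvex : u (m + k + 1) - α * u (m + k) =
        ∑ l ∈ range k, α⁻¹ ^ (l + 1) * (u (m + l + 1) - α * u (m + l)) := by
      rw [sum_inv_pow_mul_sub hα₀.ne', hα.inv_pow_eq, hu.apply_add_add_one]
      ring
    calc |u (m + k + 1) - α * u (m + k)|
        ≤ ∑ l ∈ range k, |α⁻¹ ^ (l + 1) * (u (m + l + 1) - α * u (m + l))| :=
          hconvex ▸ abs_sum_le_sum_abs _ _
      _ ≤ ∑ l ∈ range k, α⁻¹ ^ (l + 1) * C := by
          refine sum_le_sum fun l hl ↦ ?_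
          rw [abs_mul, abs_of_pos (by positivity)]
          gcongr
          exact ih _ (Nat.add_lt_add_left (mem_range.1 hl) m)
      _ = C := by rw [← sum_mul, hα.sum_inv_pow_succ hk, one_mul]

theorem abs_add_sub_pow_mul_le (hC : ∀ j, |u (j + 1) - α * u j| ≤ C) (j : ℕ) {i : ℕ}
    (hi : i ≤ k) : |u (j + i) - α ^ i * u j| ≤ α ^ i * C := by
  have hα₀ : 0 < α := one_pos.trans (hα.one_lt hk)
  have hC₀ : 0 ≤ C := (abs_nonneg _).trans (hC 0)
  calc |u (j + i) - α ^ i * u j| = α ^ i * |α⁻¹ ^ i * u (j + i) - u j| := by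
        rw [← abs_of_pos (pow_pos hα₀ i), ← abs_mul, abs_of_pos (pow_pos hα₀ i), inv_pow]
        field_simp
    _ ≤ α ^ i * ∑ l ∈ range i, α⁻¹ ^ (l + 1) * C := by
        rw [← sum_inv_pow_mul_sub hα₀.ne' u j i]
        gcongr
        refine (abs_sum_le_sum_abs _ _).trans (sum_le_sum fun l _ ↦ ?_)
        rw [abs_mul, abs_of_pos (by positivity)]
        gcongr
        exact hC _
    _ ≤ α ^ i * ∑ l ∈ range k, α⁻¹ ^ (l + 1) * C := by gcongr
    _ = α ^ i * C := by rw [← sum_mul, hα.sum_inv_pow_succ hk, one_mul]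

/- The weights `1 - α⁻¹ ^ (i + 1)` are the coefficients of the characteristic polynomial divided by
`z - α`, up to a power of `α`. -/
theorem sum_weight_mul (hu : IsKStep k u) (j : ℕ) :
    ∑ i ∈ range k, (1 - α⁻¹ ^ (i + 1)) * u (j + i) =
      α ^ j * ∑ i ∈ range k, (1 - α⁻¹ ^ (i + 1)) * u i := by
  have hα₀ : 0 < α := one_pos.trans (hα.one_lt hk)
  induction j with
  | zero => simp
  | succ j ih =>
    have hshift : ∑ i ∈ range k, (1 - α⁻¹ ^ (i + 1)) * u (j + 1 + i) =
        ∑ i ∈ range k, (1 - α⁻¹ ^ i) * u (j + i) + (1 - α⁻¹ ^ k) * u (j + k) := by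
      rw [← sum_range_succ fun i ↦ (1 - α⁻¹ ^ i) * u (j + i), sum_range_succ']
      simp only [add_assoc, add_comm 1, pow_zero, sub_self, zero_mul, add_zero]
    have hscale : ∑ i ∈ range k, (1 - α⁻¹ ^ i) * u (j + i) =
        α * ∑ i ∈ range k, (1 - α⁻¹ ^ (i + 1)) * u (j + i) - (α - 1) * u (j + k) := by
      rw [hu j, mul_sum, mul_sum, ← sum_sub_distrib]
      refine sum_congr rfl fun i _ ↦ ?_
      rw [pow_succ]
      field_simp
      ring
    rw [hshift, hscale, ih, hα.inv_pow_eq, pow_succ]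
    ring

theorem sum_weight_mul_pow : ∑ i ∈ range k, (1 - α⁻¹ ^ (i + 1)) * α ^ i =
    α ^ (k - 1) * ((k + 1) * α - 2 * k) := by
  have h₁ := hα.one_lt hk
  have h₀ : α ≠ 0 := by positivity
  have hne : α - 1 ≠ 0 := by linarith
  have hterm : ∀ i, (1 - α⁻¹ ^ (i + 1)) * α ^ i = α ^ i - α⁻¹ := fun i ↦ by
    rw [pow_succ, inv_pow]
    field_simp
  have hroot := hα.pow_mul_eq
  obtain ⟨m, rfl⟩ := Nat.exists_eq_add_of_le' hk
  rw [sum_congr rfl fun i _ ↦ hterm i, sum_sub_distrib, geom_sum_eq h₁.ne', sum_const, card_range,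
    nsmul_eq_mul, Nat.add_sub_cancel]
  rw [pow_succ] at hroot ⊢
  field_simp
  push_cast
  linear_combination (α + (m + 1) * (α - 1)) * hroot

theorem abs_sub_mul_pow_le (hu : IsKStep k u) (hC : ∀ j < k, |u (j + 1) - α * u j| ≤ C) (m : ℕ) :
    |u (m + (k - 1)) -
      (∑ i ∈ range k, (1 - α⁻¹ ^ (i + 1)) * u i) / ((k + 1) * α - 2 * k) * α ^ m| ≤ C := by
  have h₁ := hα.one_lt hk
  have hE : 0 < (k + 1) * α - 2 * k := one_pos.trans_le hα.one_le_denominator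
  set E := (k + 1) * α - 2 * k
  set J := ∑ i ∈ range k, (1 - α⁻¹ ^ (i + 1)) * u i
  set j := m + (k - 1)
  have hweight : ∀ i, 0 ≤ 1 - α⁻¹ ^ (i + 1) := fun i ↦
    sub_nonneg.2 (pow_le_one₀ (by positivity) (inv_le_one_of_one_le₀ h₁.le))
  have hsum : α ^ (k - 1) * E * u j - J * α ^ j =
      ∑ i ∈ range k, (1 - α⁻¹ ^ (i + 1)) * (α ^ i * u j - u (j + i)) := by
    simp only [mul_sub, sum_sub_distrib, hα.sum_weight_mul hk hu, ← mul_assoc, ← sum_mul,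
      hα.sum_weight_mul_pow hk, J]
    ring
  have hbound : |α ^ (k - 1) * E * u j - J * α ^ j| ≤ α ^ (k - 1) * E * C := by
    rw [hsum, ← hα.sum_weight_mul_pow hk, sum_mul]
    refine (abs_sum_le_sum_abs _ _).trans (sum_le_sum fun i hi ↦ ?_)
    rw [abs_mul, abs_of_nonneg (hweight i), mul_assoc, abs_sub_comm]
    gcongr
    · exact hweight i
    · exact hα.abs_add_sub_pow_mul_le hk (hα.abs_succ_sub_mul_le hk hu hC) j (mem_range.1 hi).le
  have hfactor : α ^ (k - 1) * E * u j - J * α ^ j =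
      α ^ (k - 1) * E * (u j - J / E * α ^ m) := by
    rw [show α ^ j = α ^ m * α ^ (k - 1) from pow_add ..]
    field_simp
  have hpos : 0 < α ^ (k - 1) * E := by positivity
  rwa [hfactor, abs_mul, abs_of_pos hpos, mul_le_mul_iff_right₀ hpos] at hbound

end IsDominantRoot

end Binet

section LucasBinet

variable {k : ℕ} {α : ℝ}

theorem IsDominantRoot.abs_genLucas_succ_sub_le (hα : IsDominantRoot k α) (hk : 2 ≤ k) {j : ℕ}
    (hj : j < k) : |(genLucas k (j + 1) : ℝ) - α * genLucas k j| ≤ 3 := by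
  have h₁ := hα.one_lt (by lia)
  have h₂ := hα.lt_two
  obtain hj | hj | rfl | rfl : j + 1 < k - 2 ∨ j + 1 = k - 2 ∨ j = k - 2 ∨ j = k - 1 := by lia
  · rw [genLucas_of_lt hj, genLucas_of_lt (by lia)]
    norm_num
  · rw [hj, genLucas_sub_two, genLucas_of_lt (by lia)]
    norm_num
  · rw [show k - 2 + 1 = k - 1 by lia, genLucas_sub_one hk, genLucas_sub_two, abs_le]
    push_cast
    constructor <;> linarith
  · rw [Nat.sub_add_cancel (by lia), genLucas_self hk, genLucas_sub_one hk, abs_le]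
    push_cast
    constructor <;> linarith

theorem IsDominantRoot.sum_weight_mul_genLucas (hα : IsDominantRoot k α) (hk : 2 ≤ k) :
    ∑ i ∈ range k, (1 - α⁻¹ ^ (i + 1)) * (genLucas k i : ℝ) = (2 * α - 1) * (α - 1) := by
  have hα₀ : 0 < α := one_pos.trans (hα.one_lt (by lia))
  have hpow : α⁻¹ ^ (k - 1) = α * (2 - α) := by
    rw [← hα.inv_pow_eq, ← pow_sub_one_mul (by lia : k ≠ 0)]
    field_simp
  rw [sum_range_mul_genLucas hk, show k - 2 + 1 = k - 1 by lia, Nat.sub_add_cancel (by lia), hpow,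
    hα.inv_pow_eq]
  ring

theorem IsDominantRoot.abs_lucasL_sub_le (hα : IsDominantRoot k α) (hk : 2 ≤ k) {n : ℕ}
    (hn : 1 ≤ n) : |lucasL k n - binetCoeff k α * α ^ (n - 1)| ≤ 3 := by
  have h := hα.abs_sub_mul_pow_le (by lia) ((isKStep_genLucas hk).map (Int.castAddHom ℝ))
    (fun j hj ↦ hα.abs_genLucas_succ_sub_le hk hj) (n - 1)
  simp only [Int.coe_castAddHom, hα.sum_weight_mul_genLucas hk] at h
  rwa [show n - 1 + (k - 1) = n + k - 2 by lia] at h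

end LucasBinet

section FiniteCheck

variable {k m f v : ℕ} {l : List ℕ}

/-- Excludes that `v` has the form `b * 10 ^ d` with `b ≤ 9` and `2 ≤ d`, provided that `v` ends in
at most five zeros. -/
def isNotDigitMulTenPow (v : ℕ) : Bool :=
  !(v % 10 ^ 6).beq 0 && [2, 3, 4, 5].all fun d ↦ !(v % 10 ^ d).beq 0 || (9 * 10 ^ d).blt v

theorem ne_digit_mul_ten_pow (hv : isNotDigitMulTenPow v = true) {b d : ℕ} (hb : b ≤ 9)
    (hd : 2 ≤ d) : v ≠ b * 10 ^ d := by
  rintro rfl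
  simp only [isNotDigitMulTenPow, Bool.and_eq_true, Bool.not_eq_true', List.all_eq_true,
    Bool.or_eq_true, Nat.blt_eq] at hv
  obtain ⟨hsix, hv⟩ := hv
  have hmod : ∀ e ≤ d, (b * 10 ^ d % 10 ^ e).beq 0 = true := fun e he ↦
    (Nat.beq_eq ..).mpr (Nat.mod_eq_zero_of_dvd ((pow_dvd_pow 10 he).mul_left b))
  rcases le_or_gt 6 d with hd₆ | hd₆
  · exact Bool.false_ne_true (hsix.symm.trans (hmod 6 hd₆))
  · rcases hv d (by simp; lia) with h | h
    · exact Bool.false_ne_true (h.symm.trans (hmod d le_rfl))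
    · exact h.not_ge (Nat.mul_le_mul_right _ hb)

/-- Extends the list `l`, which holds the generalized Lucas numbers computed so far with the most
recent one first, by `f` terms and tests all of these. -/
def checkTerms (k : ℕ) : ℕ → List ℕ → Bool
  | 0, _ => true
  | f + 1, l => force (2 * l.getD 0 0 - l.getD k 0) fun v ↦
      isNotDigitMulTenPow v && checkTerms k f (v :: l)

theorem checkTerms_eq_true {j : ℕ} (hj : j < 40) : checkTerms (j + 3) 103 [3, 1, 2] = true := by
  revert j
  decide +kernel

theorem genLucas_ne_of_checkTerms (hk : 2 ≤ k) (hm : k ≤ m) (h : checkTerms k f l = true)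
    (hl : ∀ i ≤ m, (l.getD i 0 : ℤ) = genLucas k (m - i)) {j b d : ℕ} (hmj : m < j)
    (hjf : j ≤ m + f) (hb : b ≤ 9) (hd : 2 ≤ d) : genLucas k j ≠ b * 10 ^ d := by
  induction f generalizing m l with
  | zero => lia
  | succ f ih =>
    rw [checkTerms, force_eq, Bool.and_eq_true] at h
    obtain ⟨hv, hrest⟩ := h
    set v := 2 * l.getD 0 0 - l.getD k 0
    have hnext : (v : ℤ) = genLucas k (m + 1) := by
      have hrec := (isKStep_genLucas hk).apply_add_add_one (m - k)
      rw [Nat.sub_add_cancel hm, ← hl k hm] at hrec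
      have := hl 0 m.zero_le
      have := genLucas_nonneg hk (m + 1)
      grind
    rcases eq_or_lt_of_le (Nat.succ_le_of_lt hmj) with rfl | hmj
    · rw [Nat.succ_eq_add_one, ← hnext]
      exact_mod_cast ne_digit_mul_ten_pow hv hb hd
    · refine ih (hm.trans m.le_succ) hrest (fun i hi ↦ ?_) hmj (by lia)
      rcases i with _ | i
      · exact hnext
      · rw [List.getD_cons_succ, hl i (by lia), Nat.succ_sub_succ]

theorem lucasL_ne_of_le (hk : 3 ≤ k) (hk' : k < 43) {n b d : ℕ} (hn : 2 < n) (hn' : n ≤ 105)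
    (hb : b ≤ 9) (hd : 2 ≤ d) : lucasL k n ≠ b * 10 ^ d := by
  obtain ⟨j, rfl⟩ := Nat.exists_eq_add_of_le' hk
  refine genLucas_ne_of_checkTerms (by lia) le_rfl (checkTerms_eq_true (by lia)) ?_ (by lia)
    (by lia) hb hd
  rintro (_ | _ | _ | i) _
  · exact (genLucas_self (by lia)).symm
  · exact (genLucas_sub_one (by lia)).symm
  · exact (genLucas_sub_two _).symm
  · rw [genLucas_of_lt (by lia)]
    simp

end FiniteCheck

section LinearForm

variable {k n b d m : ℕ} {α : ℝ}

theorem abs_log_le_two_mul {t : ℝ} (ht : |t - 1| ≤ 1 / 2) : |log t| ≤ 2 * |t - 1| := by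
  have h := abs_log_sub_log_le one_half_pos (by linarith [(abs_le.1 ht).1] : 1 / 2 ≤ t)
    one_half_lt_one.le
  rwa [log_one, sub_zero, div_div_eq_mul_div, div_one, mul_comm] at h

theorem abs_linear_form_le {b c ε : ℝ} (hb : 0 < b) (hc : 0 < c) (hα : 0 < α) (hε : ε ≤ 1 / 2)
    (h : |b * 10 ^ d - c * α ^ m| ≤ ε * (c * α ^ m)) :
    |log (c / b) - (d * log 10 - m * log α)| ≤ 2 * ε := by
  have hform : log (c / b) - (d * log 10 - m * log α) = -log (b * 10 ^ d / (c * α ^ m)) := by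
    rw [log_div (by positivity) (by positivity), log_div (by positivity) (by positivity),
      log_mul (by positivity) (by positivity), log_mul (by positivity) (by positivity), log_pow,
      log_pow]
    ring
  have hquot : |b * 10 ^ d / (c * α ^ m) - 1| ≤ ε := by
    have hpos : 0 < c * α ^ m := by positivity
    rwa [div_sub_one hpos.ne', abs_div, abs_of_pos hpos, div_le_iff₀ hpos]
  rw [hform, abs_neg]
  exact (abs_log_le_two_mul (hquot.trans hε)).trans (by gcongr)

theorem three_mul_lt_of_lucasL_eq (hk : 2 ≤ k) (hn : 2 ≤ n) (hb : 1 ≤ b)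
    (h : lucasL k n = b * 10 ^ d) : 3 * d < n := by
  obtain ⟨n, rfl⟩ := Nat.exists_eq_add_of_le' hn
  have hle : b * 10 ^ d ≤ 3 * 2 ^ n := by exact_mod_cast h ▸ lucasL_le hk hn
  refine (Nat.pow_lt_pow_iff_right one_lt_two).1 ?_
  calc 2 ^ (3 * d) = 8 ^ d := pow_mul 2 3 d
    _ ≤ b * 10 ^ d := (Nat.pow_le_pow_left (by decide) d).trans (Nat.le_mul_of_pos_left _ hb)
    _ < 2 ^ (n + 2) := by rw [pow_add]; linarith [n.two_pow_pos]

theorem abs_linear_form_two_le (hk : 2 ≤ k) (hkn : k ≤ n) (hb : 1 ≤ b) (hnk : 3 * n ≤ 2 ^ k)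
    (h : lucasL k n = b * 10 ^ d) :
    |log (3 / b) - (d * log 10 - (n - 2 : ℕ) * log 2)| ≤ 3 * n / 2 ^ k := by
  have hnk' : 3 * (n : ℝ) ≤ 2 ^ k := mod_cast hnk
  have hup : (b : ℝ) * 10 ^ d ≤ 3 * 2 ^ (n - 2) := by
    exact_mod_cast h ▸ lucasL_le hk (hk.trans hkn)
  have hlow : 3 * 2 ^ (n - 2) ≤ (b : ℝ) * 10 ^ d + (n - k) * 2 ^ (n - k) := by
    exact_mod_cast h ▸ le_lucasL_add hk hkn
  have hpow : (2 : ℝ) ^ (n - 2) = 2 ^ k * 2 ^ (n - k) / 4 := by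
    rw [← pow_add, Nat.add_sub_cancel' hkn, ← Nat.sub_add_cancel (hk.trans hkn), pow_add,
      Nat.add_sub_cancel]
    ring
  have hb₀ : (0 : ℝ) < b := mod_cast hb
  refine (abs_linear_form_le (ε := 3 * n / 2 ^ k / 2) hb₀ three_pos two_pos ?_ ?_).trans_eq
    (mul_div_cancel₀ _ two_ne_zero)
  · rw [div_le_div_iff_of_pos_right two_pos, div_le_one (by positivity)]
    exact hnk'
  · rw [abs_sub_comm, abs_of_nonneg (by linarith)]
    calc 3 * 2 ^ (n - 2) - (b : ℝ) * 10 ^ d ≤ (n - k) * 2 ^ (n - k) := by linarith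
      _ ≤ 9 / 8 * n * 2 ^ (n - k) := by gcongr; linarith [k.cast_nonneg (α := ℝ)]
      _ = 3 * n / 2 ^ k / 2 * (3 * 2 ^ (n - 2)) := by rw [hpow]; field_simp; ring

theorem IsDominantRoot.seven_fourths_le (hα : IsDominantRoot k α) (hk : 3 ≤ k) : 7 / 4 ≤ α := by
  linarith [hα.one_sub_half_le hk]

theorem IsDominantRoot.two_pow_le_pow (hα : IsDominantRoot k α) (hk : 3 ≤ k) (m : ℕ) :
    2 ^ (4 * (m / 5)) ≤ α ^ m := by
  have h := hα.seven_fourths_le hk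
  calc (2 : ℝ) ^ (4 * (m / 5)) = (2 ^ 4) ^ (m / 5) := pow_mul ..
    _ ≤ ((7 / 4) ^ 5) ^ (m / 5) := by gcongr; norm_num
    _ ≤ (α ^ 5) ^ (m / 5) := by gcongr
    _ = α ^ (5 * (m / 5)) := (pow_mul ..).symm
    _ ≤ α ^ m := pow_le_pow_right₀ (by linarith) (Nat.mul_div_le m 5)

theorem IsDominantRoot.abs_linear_form_le (hα : IsDominantRoot k α) (hk : 3 ≤ k) (hn : 6 ≤ n)
    (hb : 1 ≤ b) (h : lucasL k n = b * 10 ^ d) :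
    |log (binetCoeff k α / b) - (d * log 10 - (n - 1 : ℕ) * log α)| ≤ 4 / α ^ (n - 1) := by
  have hG := hα.three_halves_le_binetCoeff hk
  have hα₀ : 0 < α := by linarith [hα.seven_fourths_le hk]
  have hpow : 4 ≤ α ^ (n - 1) := by
    calc (4 : ℝ) ≤ 2 ^ (4 * ((n - 1) / 5)) := by
          rw [show (4 : ℝ) = 2 ^ 2 by norm_num]
          exact pow_le_pow_right₀ one_le_two (by lia)
      _ ≤ α ^ (n - 1) := hα.two_pow_le_pow hk _
  have hb₀ : (0 : ℝ) < b := mod_cast hb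
  refine (_root_.abs_linear_form_le (ε := 2 / α ^ (n - 1)) hb₀ (by linarith) hα₀ ?_ ?_).trans_eq
    (by ring)
  · rw [div_le_div_iff₀ (by positivity) two_pos]
    linarith
  · have hbinet := hα.abs_lucasL_sub_le (by lia) (by lia : 1 ≤ n)
    rw [h] at hbinet
    push_cast at hbinet
    refine hbinet.trans ?_
    field_simp
    linarith

theorem IsDominantRoot.four_mul_lt_of_lt_abs_linear_form (hα : IsDominantRoot k α) (hk : 3 ≤ k)
    (hn : 6 ≤ n) (hb : 1 ≤ b) (h : lucasL k n = b * 10 ^ d) {e : ℕ}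
    (he : 1 / 2 ^ e < |log (binetCoeff k α / b) - (d * log 10 - (n - 1 : ℕ) * log α)|) :
    4 * ((n - 1) / 5) < e + 2 := by
  have hlt := he.trans_le (hα.abs_linear_form_le hk hn hb h)
  have hpos : 0 < α ^ (n - 1) := pow_pos (by linarith [hα.seven_fourths_le hk]) _
  rw [div_lt_div_iff₀ (by positivity) hpos] at hlt
  refine (pow_lt_pow_iff_right₀ (one_lt_two : (1 : ℝ) < 2)).1 ?_
  calc (2 : ℝ) ^ (4 * ((n - 1) / 5)) ≤ α ^ (n - 1) := hα.two_pow_le_pow hk _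
    _ < 2 ^ (e + 2) := by rw [pow_add]; linarith

end LinearForm

section SmallIndex

variable {k n b d : ℕ}

theorem lucasL_ne_of_lt_abs_linear_form_two (hk : 2 ≤ k) (hkn : k ≤ n) (hb : 1 ≤ b) {e : ℕ}
    (he : 3 * n * 2 ^ e ≤ 2 ^ k)
    (hlow : 1 / 2 ^ e < |log (3 / b) - (d * log 10 - (n - 2 : ℕ) * log 2)|) :
    lucasL k n ≠ b * 10 ^ d := fun h ↦ by
  have hnk := (Nat.le_mul_of_pos_right (3 * n) e.two_pow_pos).trans he
  have hup := abs_linear_form_two_le hk hkn hb hnk h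
  refine hlow.not_ge (hup.trans ?_)
  rw [div_le_div_iff₀ (by positivity) (by positivity), one_mul]
  exact_mod_cast he

theorem le_of_lucasL_eq_of_lt (hk : 3 ≤ k) (hk' : k < 1233) (hn : 6 ≤ n) (hn' : n ≤ 2 ^ 601)
    (hb : 1 ≤ b) (hb' : b ≤ 9) (h : lucasL k n = b * 10 ^ d) : n ≤ 1650 := by
  obtain ⟨α, hα⟩ := exists_isDominantRoot hk
  have hd := three_mul_lt_of_lucasL_eq (by lia) (by lia) hb h
  have := hα.four_mul_lt_of_lt_abs_linear_form hk hn hb h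
    (hα.lt_abs_linear_form_of_le_two_pow hk hk' hb hb' (by lia) ((n.sub_le 1).trans hn'))
  clear hn'
  lia

theorem lucasL_ne_of_le_of_lt (hk : 3 ≤ k) (hk' : k < 43) (hn : 6 ≤ n) (hn' : n ≤ 1650)
    (hb : 1 ≤ b) (hb' : b ≤ 9) (hd : 2 ≤ d) : lucasL k n ≠ b * 10 ^ d := fun h ↦ by
  obtain ⟨α, hα⟩ := exists_isDominantRoot hk
  have hdn := three_mul_lt_of_lucasL_eq (by lia) (by lia) hb h
  have := hα.four_mul_lt_of_lt_abs_linear_form hk hn hb h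
    (hα.lt_abs_linear_form_of_le hk hk' hb hb' (by lia) (by lia))
  exact lucasL_ne_of_le hk hk' (by lia) (by lia) hb' hd h

theorem lucasL_ne_of_le_two_pow (hk : 3 ≤ k) (hkn : k ≤ n) (hn : 6 ≤ n) (hn' : n ≤ 2 ^ 601)
    (hb : 1 ≤ b) (hb' : b ≤ 9) (hd : 2 ≤ d) : lucasL k n ≠ b * 10 ^ d := fun h ↦ by
  have hdn := three_mul_lt_of_lucasL_eq (by lia) (by lia) hb h
  have hd_lt : d < n - 2 := by lia
  rcases lt_or_ge k 1233 with hk' | hk'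
  · have hn₁ := le_of_lucasL_eq_of_lt hk hk' hn hn' hb hb' h
    clear hn'
    rcases lt_or_ge k 43 with hk₁ | hk₁
    · exact lucasL_ne_of_le_of_lt hk hk₁ hn hn₁ hb hb' hd h
    · refine lucasL_ne_of_lt_abs_linear_form_two (by lia) hkn hb ?_
        (lt_abs_linear_form_two_of_le hb hb' hd_lt (by lia) (by lia)) h
      calc 3 * n * 2 ^ 24 ≤ 3 * 1650 * 2 ^ 24 := by gcongr
        _ ≤ 2 ^ 43 := by norm_num
        _ ≤ 2 ^ k := Nat.pow_le_pow_right two_pos hk₁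
  · have hn₂ : 2 ≤ n - 2 := Nat.le_sub_of_add_le (hn.trans' (by decide))
    refine lucasL_ne_of_lt_abs_linear_form_two (by lia) hkn hb ?_
      (lt_abs_linear_form_two_of_le_two_pow hb hb' hd_lt hn₂ ((n.sub_le 2).trans hn')) h
    calc 3 * n * 2 ^ 620 ≤ 2 ^ 2 * 2 ^ 601 * 2 ^ 620 := by gcongr; decide
      _ ≤ 2 ^ k := by
        rw [← pow_add, ← pow_add]
        gcongr
        · exact one_le_two
        · lia

end SmallIndex

/-! ### Large indices -/

section Conjugates

open IntermediateField Polynomial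

/-- The embedding of `ℚ(α)` into `ℂ` given by the inclusions `ℚ(α) ⊆ ℝ ⊆ ℂ`. -/
noncomputable def realEmbedding (α : ℝ) : ℚ⟮α⟯ →ₐ[ℚ] ℂ :=
  (Complex.ofRealAm.restrictScalars ℚ).comp (ℚ⟮α⟯).val

/-- `x` is an algebraic integer of `ℚ(α)` whose conjugates other than `x` itself have absolute
value at most `a`. The conjugates are indexed by the embeddings of `ℚ(α)` into `ℂ`, and `x` is the
one given by `realEmbedding α`. -/
def IsConjugateBound (α x a : ℝ) : Prop :=
  0 ≤ a ∧ ∃ y : ℚ⟮α⟯, IsIntegral ℤ y ∧ (y : ℝ) = x ∧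
    ∀ σ : ℚ⟮α⟯ →ₐ[ℚ] ℂ, σ ≠ realEmbedding α → ‖σ y‖ ≤ a

variable {α x y a b : ℝ}

theorem isConjugateBound_intCast (α : ℝ) (z : ℤ) : IsConjugateBound α z |(z : ℝ)| :=
  ⟨abs_nonneg _, z, isIntegral_algebraMap, by simp, fun σ _ ↦ by
    rw [map_intCast, Complex.norm_intCast]⟩

namespace IsConjugateBound

theorem mono (hx : IsConjugateBound α x a) (hab : a ≤ b) : IsConjugateBound α x b :=
  let ⟨ha, y, hy, hyx, hσ⟩ := hx
  ⟨ha.trans hab, y, hy, hyx, fun σ h ↦ (hσ σ h).trans hab⟩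

theorem add (hx : IsConjugateBound α x a) (hy : IsConjugateBound α y b) :
    IsConjugateBound α (x + y) (a + b) := by
  obtain ⟨ha, u, hu, rfl, hσu⟩ := hx
  obtain ⟨hb, v, hv, rfl, hσv⟩ := hy
  refine ⟨add_nonneg ha hb, u + v, hu.add hv, by push_cast; rfl, fun σ h ↦ ?_⟩
  rw [map_add]
  exact (norm_add_le _ _).trans (add_le_add (hσu σ h) (hσv σ h))

theorem mul (hx : IsConjugateBound α x a) (hy : IsConjugateBound α y b) :
    IsConjugateBound α (x * y) (a * b) := by
  obtain ⟨ha, u, hu, rfl, hσu⟩ := hx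
  obtain ⟨hb, v, hv, rfl, hσv⟩ := hy
  refine ⟨mul_nonneg ha hb, u * v, hu.mul hv, by push_cast; rfl, fun σ h ↦ ?_⟩
  rw [map_mul, norm_mul]
  exact mul_le_mul (hσu σ h) (hσv σ h) (norm_nonneg _) ha

end IsConjugateBound

theorem isConjugateBound_generator {p : ℤ[X]} (hp : p.Monic) (hα : aeval α p = 0)
    (hroot : ∀ z : ℂ, aeval z p = 0 → z ≠ α → ‖z‖ ≤ 1) : IsConjugateBound α α 1 := by
  have hgen : aeval (AdjoinSimple.gen ℚ α) p = 0 :=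
    Subtype.ext <| by simpa using (aeval_algebraMap_apply ℝ (AdjoinSimple.gen ℚ α) p).symm.trans hα
  refine ⟨zero_le_one, AdjoinSimple.gen ℚ α, ⟨p, hp, hgen⟩, AdjoinSimple.coe_gen ℚ α,
    fun σ hσ ↦ hroot _ ?_ fun h ↦ hσ (adjoin_algHom_ext ℚ fun x hx ↦ ?_)⟩
  · rw [← AlgHom.restrictScalars_apply ℤ σ, aeval_algHom_apply, hgen, map_zero]
  · obtain rfl := Set.mem_singleton_iff.1 hx
    exact h

theorem one_le_norm_prod_embeddings {K : Type*} [Field K] [Algebra ℚ K] [FiniteDimensional ℚ K]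
    {y : K} (hy : IsIntegral ℤ y) (hy₀ : y ≠ 0) : 1 ≤ ‖∏ σ : K →ₐ[ℚ] ℂ, σ y‖ := by
  obtain ⟨N, hN⟩ := IsIntegrallyClosed.isIntegral_iff.1 (Algebra.isIntegral_norm ℚ hy)
  have hN₀ : N ≠ 0 := by
    rintro rfl
    exact Algebra.norm_ne_zero_iff.2 hy₀ (hN.symm.trans (map_zero _))
  rw [← Algebra.norm_eq_prod_embeddings, ← hN, eq_intCast, map_intCast, Complex.norm_intCast]
  exact_mod_cast Int.one_le_abs hN₀

theorem card_embeddings_le {p : ℤ[X]} (hp : p.Monic) (hα : aeval α p = 0)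
    [FiniteDimensional ℚ ℚ⟮α⟯] :
    Fintype.card (ℚ⟮α⟯ →ₐ[ℚ] ℂ) ≤ p.natDegree := by
  have hα' : IsIntegral ℤ α := ⟨p, hp, hα⟩
  have hint : IsIntegral ℚ α := hα'.tower_top
  rw [AlgHom.card, adjoin.finrank hint, ← hp.natDegree_map (algebraMap ℤ ℚ)]
  refine natDegree_le_of_dvd (minpoly.dvd ℚ α ?_) (hp.map _).ne_zero
  rwa [aeval_map_algebraMap]

/-- The product of all conjugates of a nonzero algebraic integer is a nonzero integer. -/
theorem sizeBound_isConjugateBound {p : ℤ[X]} (hp : p.Monic) (hα : aeval α p = 0)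
    (hroot : ∀ z : ℂ, aeval z p = 0 → z ≠ α → ‖z‖ ≤ 1) :
    SizeBound (IsConjugateBound α) α (p.natDegree - 1) where
  intCast := isConjugateBound_intCast α
  add := .add
  mul := .mul
  generator := isConjugateBound_generator hp hα hroot
  mono := .mono
  liouville := by
    classical
    rintro x a ⟨-, y, hy, rfl, hσ⟩ ha hx
    have hα' : IsIntegral ℤ α := ⟨p, hp, hα⟩
    have : FiniteDimensional ℚ ℚ⟮α⟯ := adjoin.finiteDimensional hα'.tower_top
    have hnorm := one_le_norm_prod_embeddings hy (by rintro rfl; exact hx rfl)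
    rw [norm_prod, ← Finset.mul_prod_erase _ _ (Finset.mem_univ (realEmbedding α))] at hnorm
    have hself : ‖realEmbedding α y‖ = |(y : ℝ)| := Complex.norm_real _
    rw [hself] at hnorm
    refine hnorm.trans (mul_le_mul_of_nonneg_left ?_ (abs_nonneg _))
    calc ∏ σ ∈ Finset.univ.erase (realEmbedding α), ‖σ y‖
        ≤ ∏ _σ ∈ Finset.univ.erase (realEmbedding α), a :=
          Finset.prod_le_prod (fun _ _ ↦ norm_nonneg _) fun σ h ↦ hσ σ (Finset.ne_of_mem_erase h)
      _ = a ^ (Fintype.card (ℚ⟮α⟯ →ₐ[ℚ] ℂ) - 1) := by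
        rw [Finset.prod_const, Finset.card_erase_of_mem (Finset.mem_univ _), Finset.card_univ]
      _ ≤ a ^ (p.natDegree - 1) :=
        pow_le_pow_right₀ ha (Nat.sub_le_sub_right (card_embeddings_le hp hα) 1)

theorem sizeBound_two : SizeBound (IsConjugateBound 2) 2 0 := by
  have h := sizeBound_isConjugateBound (α := 2) (monic_X_sub_C (2 : ℤ)) (by simp [map_ofNat])
    fun z hz hz₂ ↦ (hz₂ (by simpa [sub_eq_zero, map_ofNat] using hz)).elim
  rwa [natDegree_X_sub_C] at h

end Conjugates

section DominantRootIntegrality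

open Polynomial

variable {k : ℕ} {α : ℝ}

/-- The polynomial `X ^ (k + 1) - 2 * X ^ k + 1`, of which `α` is a root exactly when
`α ^ k * (2 - α) = 1`. It is `X - 1` times the characteristic polynomial of the `k`-step
recurrence. -/
noncomputable def recurrencePoly (k : ℕ) : ℤ[X] := X ^ (k + 1) - 2 * X ^ k + 1

theorem recurrencePoly_natDegree (k : ℕ) : (recurrencePoly k).natDegree = k + 1 := by
  rw [recurrencePoly]
  compute_degree!

theorem recurrencePoly_monic (k : ℕ) : (recurrencePoly k).Monic := by
  rw [recurrencePoly]
  monicity!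

theorem aeval_recurrencePoly {R : Type*} [CommRing R] (k : ℕ) (z : R) :
    aeval z (recurrencePoly k) = 1 - z ^ k * (2 - z) := by
  rw [recurrencePoly]
  simp only [map_add, map_sub, map_mul, map_pow, aeval_X, map_one, map_ofNat]
  ring

namespace IsDominantRoot

variable (hα : IsDominantRoot k α)

include hα

theorem aeval_recurrencePoly_eq_zero : aeval α (recurrencePoly k) = 0 := by
  rw [aeval_recurrencePoly, hα.pow_mul_eq, sub_self]

theorem pow_eq_sum_of_ne (hk : 0 < k) {z : ℂ} (hz : z ^ k * (2 - z) = 1) (hne : z ≠ α) :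
    z ^ k = ∑ i ∈ Finset.range k, (α : ℂ)⁻¹ ^ (i + 1) * z ^ i := by
  have hα₀ : (α : ℂ) ≠ 0 := mod_cast (zero_lt_one.trans (hα.one_lt hk)).ne'
  have hinv : (α : ℂ)⁻¹ ^ k = 2 - α := mod_cast congrArg ((↑) : ℝ → ℂ) hα.inv_pow_eq
  refine mul_left_cancel₀ (sub_ne_zero.2 hne) ?_
  calc (z - α) * z ^ k = ((α : ℂ)⁻¹ * z) ^ k - 1 := by
        rw [mul_pow, hinv]
        linear_combination -hz
    _ = ((α : ℂ)⁻¹ * z - 1) * ∑ i ∈ Finset.range k, ((α : ℂ)⁻¹ * z) ^ i := (mul_geom_sum _ k).symm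
    _ = (z - α) * ∑ i ∈ Finset.range k, (α : ℂ)⁻¹ ^ (i + 1) * z ^ i := by
        rw [Finset.mul_sum, Finset.mul_sum]
        refine Finset.sum_congr rfl fun i _ ↦ ?_
        rw [mul_pow, pow_succ]
        field_simp

theorem norm_le_one_of_ne (hk : 0 < k) {z : ℂ} (hz : z ^ k * (2 - z) = 1) (hne : z ≠ α) :
    ‖z‖ ≤ 1 := by
  by_contra! hgt
  obtain ⟨j, rfl⟩ := Nat.exists_eq_add_of_le' hk
  have hα₀ : 0 < α := zero_lt_one.trans (hα.one_lt hk)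
  refine (pow_lt_pow_right₀ hgt j.lt_succ_self).not_ge ?_
  calc ‖z‖ ^ (j + 1) = ‖∑ i ∈ Finset.range (j + 1), (α : ℂ)⁻¹ ^ (i + 1) * z ^ i‖ := by
        rw [← norm_pow, hα.pow_eq_sum_of_ne hk hz hne]
    _ ≤ ∑ i ∈ Finset.range (j + 1), α⁻¹ ^ (i + 1) * ‖z‖ ^ j := by
        refine (norm_sum_le _ _).trans (Finset.sum_le_sum fun i hi ↦ ?_)
        rw [norm_mul, norm_pow, norm_pow, norm_inv, Complex.norm_of_nonneg hα₀.le]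
        gcongr
        · exact hgt.le
        · exact Nat.lt_succ_iff.1 (Finset.mem_range.1 hi)
    _ = ‖z‖ ^ j := by rw [← Finset.sum_mul, hα.sum_inv_pow_succ hk, one_mul]

theorem sizeBound (hk : 0 < k) : SizeBound (IsConjugateBound α) α k := by
  have h := sizeBound_isConjugateBound (recurrencePoly_monic k) hα.aeval_recurrencePoly_eq_zero
    fun z hz hne ↦ hα.norm_le_one_of_ne hk ?_ hne
  · rwa [recurrencePoly_natDegree] at h
  · rwa [aeval_recurrencePoly, sub_eq_zero, eq_comm] at hz

theorem isIntegral_inv (hk : 0 < k) : IsIntegral ℤ α⁻¹ := by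
  have hint : IsIntegral ℤ α := ⟨_, recurrencePoly_monic k, hα.aeval_recurrencePoly_eq_zero⟩
  have hinv : α⁻¹ = α ^ (k - 1) * (2 - α) := inv_eq_of_mul_eq_one_right <| by
    rw [← mul_assoc, mul_pow_sub_one hk.ne', hα.pow_mul_eq]
  rw [hinv]
  exact (hint.pow _).mul (isIntegral_algebraMap (x := (2 : ℤ)) |>.sub hint)

end IsDominantRoot

theorem pow_ne_pow_of_isIntegral_inv (hα : IsIntegral ℤ α⁻¹) {A : ℕ} (hA : 1 < A) {x : ℕ}
    (hx : 0 < x) (y : ℕ) : (A : ℝ) ^ x ≠ α ^ y := fun h ↦ by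
  have hint : IsIntegral ℤ (algebraMap ℚ ℝ (A ^ x)⁻¹) := by
    have hpow := hα.pow y
    rwa [inv_pow, ← h, ← Nat.cast_pow, ← map_natCast (algebraMap ℚ ℝ), ← map_inv₀,
      Nat.cast_pow] at hpow
  rw [isIntegral_algebraMap_iff (algebraMap ℚ ℝ).injective] at hint
  obtain ⟨N, hN⟩ := IsIntegrallyClosed.isIntegral_iff.1 hint
  have hA₀ : (A ^ x : ℚ) ≠ 0 := pow_ne_zero _ (by positivity)
  have hunit : N * A ^ x = 1 := by
    have hN' : (N : ℚ) * A ^ x = 1 := by rw [← eq_intCast (algebraMap ℤ ℚ), hN, inv_mul_cancel₀ hA₀]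
    exact_mod_cast hN'
  have hdvd : A ^ x ∣ 1 := by exact_mod_cast Dvd.intro_left N hunit
  exact (Nat.one_lt_pow hx.ne' hA).ne' (Nat.dvd_one.1 hdvd)

theorem five_pow_ne_two_pow {x : ℕ} (hx : 0 < x) (y : ℕ) : ((5 : ℕ) : ℝ) ^ x ≠ 2 ^ y := fun h ↦ by
  have h' : 5 ^ x = 2 ^ y := mod_cast h
  have hone := Nat.Coprime.eq_one_of_dvd (Nat.Coprime.pow x y (by decide : Nat.Coprime 5 2))
    h'.dvd
  exact (Nat.one_lt_pow hx.ne' (by decide)).ne' hone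

end DominantRootIntegrality

section TwoAdic

/-- The cofactor of `2 ^ m` in `blockTerm i (m + 2)`. -/
def blockCofactor (i m : ℕ) : ℤ :=
  8 * (m + 2 + i).choose i - 6 * (m + 1 + i).choose i + (m + i).choose i

/-- The value of `(-1) ^ i * lucasL k (i * (k + 1) + m)` modulo `2 ^ (m + k - 1)` for `m ≤ k`, that
is, in the `i`-th block of `k + 1` consecutive terms. It does not depend on `k`. -/
def blockTerm (i : ℕ) : ℕ → ℤ
  | 0 => 2
  | 1 => 4 * i + 1
  | m + 2 => 2 ^ m * blockCofactor i m

theorem blockCofactor_succ_zero (i : ℕ) :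
    blockCofactor (i + 1) 0 = 2 * (4 * i + 5) + blockCofactor i 0 := by
  simp only [blockCofactor, zero_add, Nat.choose_self, show 2 + (i + 1) = i + 2 + 1 by lia,
    show 1 + (i + 1) = i + 1 + 1 by lia, Nat.choose_succ_self_right, Nat.choose_succ_succ (i + 2) i,
    add_comm 2 i, add_comm 1 i]
  push_cast
  ring

theorem blockCofactor_succ_succ (i m : ℕ) :
    blockCofactor (i + 1) (m + 1) = blockCofactor (i + 1) m + blockCofactor i (m + 1) := by
  have pascal (l : ℕ) : ((l + 1 + (i + 1)).choose (i + 1) : ℤ) =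
      (l + (i + 1)).choose (i + 1) + (l + 1 + i).choose i := by
    rw [show l + 1 + (i + 1) = l + 1 + i + 1 by lia, Nat.choose_succ_succ, add_comm,
      show l + (i + 1) = l + 1 + i by lia, Nat.cast_add]
  simp only [blockCofactor, pascal]
  ring

theorem blockTerm_succ_succ (i m : ℕ) :
    blockTerm (i + 1) (m + 1) = 2 * blockTerm (i + 1) m + blockTerm i (m + 1) := by
  match m with
  | 0 =>
    simp only [blockTerm]
    push_cast
    ring
  | 1 =>
    simp only [blockTerm, blockCofactor_succ_zero]
    push_cast
    ring
  | m + 2 =>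
    simp only [blockTerm, blockCofactor_succ_succ]
    ring

theorem two_pow_dvd_blockTerm (i : ℕ) : ∀ m, 2 ^ (m - 2) ∣ blockTerm i m
  | 0 => one_dvd _
  | 1 => one_dvd _
  | _ + 2 => Int.dvd_mul_right _ _

theorem blockTerm_zero_left {k m : ℕ} (hk : 2 ≤ k) (hm : m ≤ k) : blockTerm 0 m = lucasL k m := by
  match m with
  | 0 => rw [lucasL_zero, blockTerm]
  | 1 => simp [lucasL_one hk, blockTerm]
  | m + 2 =>
    rw [lucasL_eq_of_le hk (by lia) hm, blockTerm, blockCofactor]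
    norm_num
    ring

theorem lucasL_succ_mul_add {k : ℕ} (hk : 2 ≤ k) (i m : ℕ) :
    lucasL k ((i + 1) * (k + 1) + m) =
      2 * lucasL k (i * (k + 1) + (k + m)) - lucasL k (i * (k + 1) + m) := by
  rw [show (i + 1) * (k + 1) + m = i * (k + 1) + (k + m) + 1 by ring,
    lucasL_succ_of_le hk (by lia), show i * (k + 1) + (k + m) - k = i * (k + 1) + m by lia]

theorem lucasL_mul_add_modEq {k : ℕ} (hk : 2 ≤ k) (i : ℕ) {m : ℕ} (hm : m ≤ k) :
    lucasL k (i * (k + 1) + m) ≡ (-1) ^ i * blockTerm i m [ZMOD 2 ^ (m + k - 1)] := by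
  induction i generalizing m with
  | zero => rw [zero_mul, zero_add, pow_zero, one_mul, blockTerm_zero_left hk hm]
  | succ i ih =>
    induction m with
    | zero =>
      have hlast : 2 * lucasL k (i * (k + 1) + k) ≡ 0 [ZMOD 2 ^ (k - 1)] := by
        obtain ⟨c, hc⟩ := two_pow_dvd_blockTerm i k
        refine (((ih le_rfl).of_dvd (pow_dvd_pow 2 (by lia))).mul_left 2).trans ?_
        rw [Int.modEq_zero_iff_dvd, hc, show k - 1 = k - 2 + 1 by lia, pow_succ]
        exact ⟨(-1) ^ i * c, by ring⟩
      have hfirst := (ih k.zero_le).of_dvd (pow_dvd_pow 2 (by lia : k - 1 ≤ 0 + k - 1))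
      rw [lucasL_succ_mul_add hk, zero_add]
      refine (hlast.sub hfirst).trans (congrArg (· % _) ?_)
      rw [blockTerm, blockTerm]
      ring
    | succ m ihm =>
      have hpred := (ihm (m.le_succ.trans hm)).mul_left' (c := 2)
      rw [← pow_succ', show m + k - 1 + 1 = m + 1 + k - 1 by lia] at hpred
      rw [lucasL_succ_mul_add hk,
        show i * (k + 1) + (k + (m + 1)) = (i + 1) * (k + 1) + m by ring, blockTerm_succ_succ]
      refine (hpred.sub (ih hm)).trans (congrArg (· % _) ?_)
      ring

theorem blockCofactor_mul (i m : ℕ) : blockCofactor i m * ((m + 2) * (m + 1)) =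
    (m + i).choose i * (8 * i ^ 2 + (10 * m + 12) * i + 3 * (m + 2) * (m + 1)) := by
  have habsorb (l : ℕ) :
      ((l + 1 + i).choose i : ℤ) * (l + 1) = (l + i).choose i * (l + 1 + i) := by
    have h := Nat.choose_mul_succ_eq (l + i) i
    rw [show l + i + 1 - i = l + 1 by lia, show l + i + 1 = l + 1 + i by lia] at h
    exact_mod_cast h.symm
  have h₁ := habsorb m
  have h₂ := habsorb (m + 1)
  rw [blockCofactor]
  push_cast at h₂ ⊢
  linear_combination 8 * (m + 1 : ℤ) * h₂ + (8 * (m + 2 + i : ℤ) - 6 * (m + 2 : ℤ)) * h₁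

theorem pow_le_of_dvd_choose_mul {p e n i Q : ℕ} (hp : p.Prime) (hi : i ≤ n) (hQ : Q ≠ 0)
    (h : p ^ e ∣ n.choose i * Q) : p ^ e ≤ (n + 1) * Q := by
  have hchoose : n.choose i ≠ 0 := (Nat.choose_pos hi).ne'
  rw [hp.pow_dvd_iff_le_factorization (mul_ne_zero hchoose hQ),
    Nat.factorization_mul hchoose hQ, Finsupp.add_apply] at h
  have hlog : p ^ (n.choose i).factorization p ≤ n + 1 := by
    rcases n.eq_zero_or_pos with rfl | hn
    · simp [Nat.le_zero.1 hi]
    · exact (Nat.pow_factorization_choose_le hn).trans n.le_succ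
  calc p ^ e ≤ p ^ ((n.choose i).factorization p + Q.factorization p) :=
        Nat.pow_le_pow_right hp.pos h
    _ = p ^ (n.choose i).factorization p * p ^ Q.factorization p := pow_add ..
    _ ≤ (n + 1) * Q := Nat.mul_le_mul hlog (Nat.ordProj_le p hQ)

theorem two_pow_le_of_dvd_blockCofactor {e i m N : ℕ} (hN : i + m + 2 ≤ N)
    (h : 2 ^ e ∣ blockCofactor i m) : 2 ^ e ≤ 21 * N ^ 3 := by
  set Q := 8 * i ^ 2 + (10 * m + 12) * i + 3 * (m + 2) * (m + 1) with hQ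
  have hdvd : 2 ^ e ∣ (m + i).choose i * Q := by
    have hmul := h.mul_right ((m + 2) * (m + 1) : ℤ)
    rw [blockCofactor_mul] at hmul
    exact_mod_cast hmul
  have hQN : Q ≤ 21 * N ^ 2 := by
    calc Q ≤ 21 * (i + m + 2) ^ 2 := by rw [hQ]; nlinarith
      _ ≤ 21 * N ^ 2 := by gcongr
  calc 2 ^ e ≤ (m + i + 1) * Q :=
        pow_le_of_dvd_choose_mul Nat.prime_two (by lia) (by positivity) hdvd
    _ ≤ N * (21 * N ^ 2) := Nat.mul_le_mul (by lia) hQN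
    _ = 21 * N ^ 3 := by ring

theorem not_two_pow_dvd_lucasL {k n : ℕ} (hk : 4 ≤ k) (hn : 21 * n ^ 3 < 2 ^ k) :
    ¬ 2 ^ (2 * k - 2) ∣ lucasL k n := fun h ↦ by
  obtain ⟨i, m, hm, rfl⟩ : ∃ i m, m ≤ k ∧ n = i * (k + 1) + m :=
    ⟨n / (k + 1), n % (k + 1), Nat.lt_succ_iff.1 (n.mod_lt k.succ_pos),
      (Nat.div_add_mod' n (k + 1)).symm⟩
  have hdvd : 2 ^ (m + k - 2) ∣ blockTerm i m := by
    have hmod := (lucasL_mul_add_modEq (by lia) i hm).of_dvd 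
      (pow_dvd_pow 2 (by lia : m + k - 2 ≤ m + k - 1))
    have hzero := (Int.modEq_zero_iff_dvd.2 ((pow_dvd_pow 2 (by lia)).trans h)).symm.trans hmod
    exact (isUnit_neg_one.pow i).dvd_mul_left.1 (Int.modEq_zero_iff_dvd.1 hzero.symm)
  match m with
  | 0 =>
    have := (pow_dvd_pow (2 : ℤ) (by lia : 2 ≤ 0 + k - 2)).trans hdvd
    rw [blockTerm] at this
    lia
  | 1 =>
    have := (pow_dvd_pow (2 : ℤ) (by lia : 1 ≤ 1 + k - 2)).trans hdvd
    rw [blockTerm] at this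
    lia
  | m + 2 =>
    rw [blockTerm, show m + 2 + k - 2 = m + k by lia, pow_add] at hdvd
    refine hn.not_ge (two_pow_le_of_dvd_blockCofactor ?_
      ((mul_dvd_mul_iff_left (by positivity)).1 hdvd))
    nlinarith

end TwoAdic

section LargeIndex

variable {k n b d : ℕ} {α : ℝ}

theorem mul_succ_le_two_pow {t : ℕ} (ht : 11 ≤ t) : 96 * (t + 1) ≤ 2 ^ t := by
  induction t, ht using Nat.le_induction with
  | base => decide
  | succ t _ ih => rw [pow_succ]; lia

theorem le_four_mul_of_two_pow_le {q : ℕ} (hb : b ≤ 9) (h : 2 ^ q ≤ b * 10 ^ d) :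
    q ≤ 4 * (d + 1) := by
  refine (Nat.pow_le_pow_iff_right one_lt_two).1 (h.trans ?_)
  calc b * 10 ^ d ≤ 16 * 16 ^ d := by gcongr <;> lia
    _ = 2 ^ (4 * (d + 1)) := by rw [pow_mul, mul_comm 16, ← pow_succ]; rfl

theorem abs_log_div_le {c : ℝ} (hc : 1 ≤ c) (hc' : c ≤ 3) (hb : 1 ≤ b) (hb' : b ≤ 9) :
    |log (c / b)| ≤ 4 := by
  have hb₁ : (1 : ℝ) ≤ b := mod_cast hb
  have hlogc := log_le_sub_one_of_pos (by linarith : 0 < c)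
  have hlogb : log b ≤ 2 * log 3 := by
    rw [← Nat.cast_two, ← log_pow]
    exact log_le_log (by linarith) (by norm_num; exact_mod_cast hb')
  have hlog₃ := log_le_sub_one_of_pos (three_pos (α := ℝ))
  rw [log_div (by linarith) (by linarith), abs_le]
  constructor <;> linarith [log_nonneg hc, log_nonneg hb₁]

theorem bakerParameters_log {A N : ℕ} {γ : ℝ} (hM : 600 ≤ Nat.log 2 N) (hA : 2 ≤ A) (hA' : A ≤ 10)
    (hα : 1 < α) (hα' : α ≤ 2) (hγ : 0 < γ) (hγ' : |log γ| ≤ 4) (hd : d ≤ N) (hd' : N ≤ 8 * d) :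
    BakerParameters (Nat.log 2 N) A N d α γ where
  le_M := hM
  two_le_A := hA
  A_le_ten := hA'
  one_lt_α := hα
  α_le_two := hα'
  γ_pos := hγ
  abs_log_γ_le := hγ'
  n_lt := Nat.lt_pow_succ_log_self one_lt_two N
  d_le := hd
  le_d := (Nat.pow_log_le_self 2 (by rintro rfl; simp at hM)).trans hd'

theorem isSizedQuotient_three_div {P : ℝ → ℝ → Prop} {D : ℕ} {c : ℝ} (hP : SizeBound P α D)
    (hb : 1 ≤ b) (hb' : b ≤ 9) (hc : 9 ≤ c) : IsSizedQuotient P c (3 / b) := by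
  have hbc : (b : ℝ) ≤ c := hc.trans' (mod_cast hb')
  refine ⟨3, b, by positivity, rfl, hP.mono (hP.intCast 3) ?_, hP.mono (hP.intCast b) ?_, ?_⟩
  · norm_num
    linarith
  · simpa using hbc
  · simpa using hbc

theorem IsDominantRoot.isSizedQuotient_binetCoeff_div {P : ℝ → ℝ → Prop} {D : ℕ} {c : ℝ}
    (hα : IsDominantRoot k α) (hP : SizeBound P α D) (hk : 3 ≤ k) (hb : 1 ≤ b) (hb' : b ≤ 9)
    (hc : 27 * k + 9 ≤ c) : IsSizedQuotient P c (binetCoeff k α / b) := by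
  have hk' : (3 : ℝ) ≤ k := mod_cast hk
  have hb₉ : (b : ℝ) ≤ 9 := mod_cast hb'
  have hden := hα.one_le_denominator
  have hnum : P ((2 * α - 1) * (α - 1)) ((2 * 1 + 1) * (1 + 1)) := by
    have h := hP.mul (hP.add (hP.mul (hP.intCast 2) hP.generator) (hP.intCast (-1)))
      (hP.add hP.generator (hP.intCast (-1)))
    norm_num at h ⊢
    exact h
  have hdenom : P (b * ((k + 1) * α - 2 * k)) (b * ((k + 1) * 1 + 2 * k)) := by
    have h := hP.mul (hP.intCast b)
      (hP.add (hP.mul (hP.intCast (k + 1)) hP.generator) (hP.intCast (-(2 * k))))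
    push_cast at h
    rwa [abs_neg, abs_of_nonneg (by positivity), abs_of_nonneg (by positivity),
      abs_of_nonneg (by positivity), ← sub_eq_add_neg] at h
  refine ⟨_, _, by positivity, by rw [binetCoeff, div_div, mul_comm (b : ℝ)], hP.mono hnum ?_,
    hP.mono hdenom (hc.trans' ?_), ?_⟩
  · linarith
  · nlinarith
  · rw [abs_of_nonneg (by positivity)]
    nlinarith [hα.lt_two]

theorem two_pow_le_of_lucasL_eq (hk : 2 ≤ k) (hkn : k ≤ n) (hnk : 8 * n ≤ 3 * 2 ^ k)
    (h : lucasL k n = b * 10 ^ d) : 2 ^ (n - 2) ≤ b * 10 ^ d := by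
  have hlow : 3 * 2 ^ (n - 2) ≤ b * 10 ^ d + (n - k) * 2 ^ (n - k) := by
    zify [hkn]
    exact_mod_cast h ▸ le_lucasL_add hk hkn
  have hpow : 2 ^ k * 2 ^ (n - k) = 2 ^ (n - 2) * 4 := by
    rw [← pow_add, Nat.add_sub_cancel' hkn, ← Nat.sub_add_cancel (hk.trans hkn), pow_add,
      Nat.add_sub_cancel]
    rfl
  have hsmall : 8 * ((n - k) * 2 ^ (n - k)) ≤ 3 * (2 ^ (n - 2) * 4) := by
    calc 8 * ((n - k) * 2 ^ (n - k)) ≤ 8 * (n * 2 ^ (n - k)) := by gcongr; exact n.sub_le k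
      _ = 8 * n * 2 ^ (n - k) := (mul_assoc ..).symm
      _ ≤ 3 * 2 ^ k * 2 ^ (n - k) := by gcongr
      _ = 3 * (2 ^ (n - 2) * 4) := by rw [mul_assoc, hpow]
  lia

theorem le_log_two_add_one {m N : ℕ} (hn : 2 ^ m ≤ n) (hN : n ≤ 2 * N) :
    m ≤ Nat.log 2 N + 1 := by
  refine Nat.le_of_lt_succ ((Nat.pow_lt_pow_iff_right one_lt_two).1 ?_)
  calc 2 ^ m ≤ 2 * N := hn.trans hN
    _ < 2 * 2 ^ (Nat.log 2 N + 1) := by gcongr; exact Nat.lt_pow_succ_log_self one_lt_two N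
    _ = 2 ^ (Nat.log 2 N + 2) := (pow_succ' ..).symm

theorem three_mul_mul_two_pow_le (hn : 176 ≤ n) (hnk : n ≤ 8 * k) :
    3 * n * 2 ^ (n / 16 + 1) ≤ 2 ^ k := by
  calc 3 * n * 2 ^ (n / 16 + 1) ≤ 48 * (n / 16 + 1) * 2 ^ (n / 16 + 1) :=
        Nat.mul_le_mul_right _ (by lia)
    _ = 96 * (n / 16 + 1) * 2 ^ (n / 16) := by ring
    _ ≤ 2 ^ (n / 16) * 2 ^ (n / 16) := by gcongr; exact mul_succ_le_two_pow (by lia)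
    _ = 2 ^ (n / 16 + n / 16) := (pow_add ..).symm
    _ ≤ 2 ^ k := Nat.pow_le_pow_right two_pos (by lia)

theorem lucasL_ne_of_le_eight_mul (hkn : k ≤ n) (hn : 2 ^ 601 ≤ n) (hnk : n ≤ 8 * k)
    (hb : 1 ≤ b) (hb' : b ≤ 9) : lucasL k n ≠ b * 10 ^ d := fun h ↦ by
  have hn₀ : 2 ^ 10 ≤ n := (pow_le_pow_right₀ one_le_two (by decide : 10 ≤ 601)).trans hn
  have hlog (N : ℕ) : n ≤ 2 * N → 601 ≤ Nat.log 2 N + 1 := le_log_two_add_one hn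
  clear hn
  have hsmall := three_mul_mul_two_pow_le (by lia) hnk
  have hdn := three_mul_lt_of_lucasL_eq (by lia) (by lia) hb h
  have hnd : n - 2 ≤ 4 * (d + 1) := by
    refine le_four_mul_of_two_pow_le hb' (two_pow_le_of_lucasL_eq (by lia) hkn ?_ h)
    have hpow : 2 ^ 3 ≤ 2 ^ (n / 16 + 1) := Nat.pow_le_pow_right two_pos (by lia)
    nlinarith
  have hM : 600 ≤ Nat.log 2 (n - 2 - d) := Nat.le_of_succ_le_succ (hlog _ (by lia))
  have hγ : IsSizedQuotient (IsConjugateBound 2) (2 ^ Nat.log 2 (n - 2 - d)) (3 / b) :=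
    isSizedQuotient_three_div sizeBound_two hb hb' <| by
      calc (9 : ℝ) ≤ 2 ^ 4 := by norm_num
        _ ≤ 2 ^ Nat.log 2 (n - 2 - d) := pow_le_pow_right₀ one_le_two (by lia)
  have hbaker := (bakerParameters_log hM (A := 5) (by decide) (by decide) one_lt_two le_rfl
    (by positivity) (abs_log_div_le (c := 3) (by norm_num) le_rfl hb hb') (d := d) (by lia)
    (by lia)).lt_abs_linear_form sizeBound_two (Nat.zero_le _) hγ
    (fun x y hx ↦ five_pow_ne_two_pow hx y) (e := n / 16 + 1) ?_
  · refine lucasL_ne_of_lt_abs_linear_form_two (by lia) hkn hb hsmall (hbaker.trans_eq ?_) h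
    rw [show (10 : ℝ) = 5 * 2 by norm_num, log_mul (by norm_num) two_ne_zero,
      Nat.cast_sub (by lia : d ≤ n - 2)]
    congr 1
    push_cast
    ring
  · exact (Nat.pow_log_le_self 2 (by lia)).trans (by lia)

theorem IsDominantRoot.two_pow_le_of_lucasL_eq (hα : IsDominantRoot k α) (hk : 3 ≤ k)
    (hn : 6 ≤ n) (h : lucasL k n = b * 10 ^ d) : 2 ^ (4 * ((n - 1) / 5)) ≤ b * 10 ^ d := by
  have hbinet := hα.abs_lucasL_sub_le (by lia) (by lia : 1 ≤ n)
  rw [h] at hbinet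
  push_cast at hbinet
  have hpow := hα.two_pow_le_pow hk (n - 1)
  have hG := hα.three_halves_le_binetCoeff hk
  have hpow₁ : (2 : ℝ) ^ 4 ≤ 2 ^ (4 * ((n - 1) / 5)) := pow_le_pow_right₀ one_le_two (by lia)
  have hreal : (2 : ℝ) ^ (4 * ((n - 1) / 5)) ≤ b * 10 ^ d := by
    nlinarith [(abs_le.1 hbinet).1]
  exact_mod_cast hreal

theorem lt_three_mul_log_add (hkn : 2 ^ k ≤ 21 * (n + 1) ^ 3) :
    k < 3 * Nat.log 2 n + 8 := by
  refine (Nat.pow_lt_pow_iff_right one_lt_two).1 (hkn.trans_lt ?_)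
  calc 21 * (n + 1) ^ 3 ≤ 21 * (2 ^ (Nat.log 2 n + 1)) ^ 3 := by
        gcongr
        exact Nat.lt_pow_succ_log_self one_lt_two n
    _ < 2 ^ 5 * (2 ^ (Nat.log 2 n + 1)) ^ 3 := by gcongr; decide
    _ = 2 ^ (3 * Nat.log 2 n + 8) := by rw [← pow_mul, ← pow_add]; congr 1; lia

theorem lucasL_ne_of_two_pow_le (hk : 3 ≤ k) (hn : 2 ^ 601 ≤ n) (hkn : 2 ^ k ≤ 21 * n ^ 3)
    (hb : 1 ≤ b) (hb' : b ≤ 9) : lucasL k n ≠ b * 10 ^ d := fun h ↦ by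
  have hn₀ : 2 ^ 10 ≤ n := (pow_le_pow_right₀ one_le_two (by decide : 10 ≤ 601)).trans hn
  have hlog : 601 ≤ Nat.log 2 (n - 1) + 1 := le_log_two_add_one hn (by lia)
  have hM : 600 ≤ Nat.log 2 (n - 1) := Nat.le_of_succ_le_succ hlog
  clear hn
  obtain ⟨α, hα⟩ := exists_isDominantRoot hk
  have hk₀ : 0 < k := by lia
  have hdn := three_mul_lt_of_lucasL_eq (by lia) (by lia) hb h
  have hnd := le_four_mul_of_two_pow_le hb' (hα.two_pow_le_of_lucasL_eq hk (by lia) h)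
  have hkM : k < 3 * Nat.log 2 (n - 1) + 8 :=
    lt_three_mul_log_add (by rwa [Nat.sub_add_cancel (by lia)])
  have hγ : IsSizedQuotient (IsConjugateBound α) (2 ^ Nat.log 2 (n - 1)) (binetCoeff k α / b) := by
    refine hα.isSizedQuotient_binetCoeff_div (hα.sizeBound hk₀) hk hb hb' ?_
    have hpow := mul_succ_le_two_pow (by lia : 11 ≤ Nat.log 2 (n - 1))
    have hle : 27 * k + 9 ≤ 2 ^ Nat.log 2 (n - 1) := by lia
    exact_mod_cast hle
  have hG := hα.three_halves_le_binetCoeff hk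
  have hbaker := (bakerParameters_log hM (A := 10) (by decide) le_rfl (hα.one_lt hk₀) hα.lt_two.le
    (by positivity) (abs_log_div_le (by linarith) (hα.binetCoeff_le_three hk) hb hb') (d := d)
    (by lia) (by lia)).lt_abs_linear_form (hα.sizeBound hk₀) (by lia) hγ
    (fun x y hx ↦ pow_ne_pow_of_isIntegral_inv (hα.isIntegral_inv hk₀) (by decide) hx y)
    (e := 4 * ((n - 1) / 5) - 2) ?_
  · have := hα.four_mul_lt_of_lt_abs_linear_form hk (by lia) hb h hbaker
    lia
  · exact (Nat.pow_log_le_self 2 (by lia)).trans (by lia)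

end LargeIndex

theorem lucasL_two_mod_five (n : ℕ) :
    (lucasL 2 n % 5, lucasL 2 (n + 1) % 5) ∈
      ({(2, 1), (1, 3), (3, 4), (4, 2)} : Finset (ℤ × ℤ)) := by
  simp only [Finset.mem_insert, Finset.mem_singleton, Prod.mk.injEq]
  induction n with
  | zero => left; rw [lucasL_zero, lucasL_one le_rfl]; decide
  | succ n ih =>
    have h : lucasL 2 (n + 2) = lucasL 2 n + lucasL 2 (n + 1) :=
      (isKStep_genLucas le_rfl n).trans (Finset.sum_range_succ ..|>.trans (by simp [lucasL]))
    rw [add_assoc, one_add_one_eq_two, h]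
    lia

theorem not_five_dvd_lucasL_two (n : ℕ) : ¬ 5 ∣ lucasL 2 n := by
  have h := lucasL_two_mod_five n
  simp only [Finset.mem_insert, Finset.mem_singleton, Prod.mk.injEq] at h
  lia

theorem not_five_dvd_lucasL_of_le {k n : ℕ} (hk : 2 ≤ k) (hn : 2 ≤ n) (hnk : n ≤ k) :
    ¬ 5 ∣ lucasL k n := by
  have h5 : Prime (5 : ℤ) := Int.prime_ofNat_iff.2 Nat.prime_five
  rw [lucasL_eq_of_le hk hn hnk, h5.dvd_mul]
  rintro (h | h)
  · exact absurd h (by decide)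
  · exact absurd (h5.dvd_of_dvd_pow h) (by decide)

theorem le_eight_mul_of_lucasL_eq {k n b d : ℕ} (hk : 4 ≤ k) (hkn : k ≤ n)
    (hnk : 21 * n ^ 3 < 2 ^ k) (hb : b ≤ 9) (h : lucasL k n = b * 10 ^ d) : n ≤ 8 * k := by
  by_contra! hlt
  have hcube : n ≤ n ^ 3 := Nat.le_self_pow three_ne_zero n
  have hnd := le_four_mul_of_two_pow_le hb (two_pow_le_of_lucasL_eq (by lia) hkn (by lia) h)
  refine not_two_pow_dvd_lucasL hk hnk (h ▸ Dvd.dvd.mul_left ?_ _)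
  calc (2 : ℤ) ^ (2 * k - 2) ∣ 2 ^ d := pow_dvd_pow 2 (by lia)
    _ ∣ 10 ^ d := pow_dvd_pow_of_dvd (by decide) d

theorem lucasL_ne_of_lt {k n b d : ℕ} (hk : 3 ≤ k) (hkn : k ≤ n) (hn : 6 ≤ n) (hb : 1 ≤ b)
    (hb' : b ≤ 9) (hd : 2 ≤ d) : lucasL k n ≠ b * 10 ^ d := fun h ↦ by
  rcases le_total n (2 ^ 601) with hsmall | hlarge
  · exact lucasL_ne_of_le_two_pow hk hkn hn hsmall hb hb' hd h
  rcases le_or_gt (2 ^ k) (21 * n ^ 3) with hkn₂ | hnk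
  · exact lucasL_ne_of_two_pow_le hk hlarge hkn₂ hb hb' h
  have hk₄ : k ≠ 3 := by
    rintro rfl
    have : 1 ≤ n ^ 3 := Nat.one_le_pow _ _ (by lia)
    lia
  exact lucasL_ne_of_le_eight_mul hkn hlarge
    (le_eight_mul_of_lucasL_eq (by lia) hkn hnk hb' h) hb hb' h

/-- No `k`-generalized Lucas number with at least three decimal digits is of the form
`b * 10 ^ d` with `1 ≤ b ≤ 9` and `d ≥ 2`; in particular none is a power of `10`. -/
theorem lucas_not_digit_times_power_of_ten (k : ℕ) (hk : 2 ≤ k) :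
    ¬ ∃ (n d : ℕ) (b : ℤ), 5 < n ∧ 1 ≤ b ∧ b ≤ 9 ∧ 2 ≤ d ∧
      lucasL k n = b * 10 ^ d := by
  rintro ⟨n, d, b, hn, hb, hb', hd, h⟩
  have hfive : 5 ∣ lucasL k n :=
    h ▸ Dvd.dvd.mul_left (dvd_pow (by decide) (by lia)) b
  rcases hk.eq_or_lt with rfl | hk₃
  · exact not_five_dvd_lucasL_two n hfive
  rcases le_total n k with hnk | hkn
  · exact not_five_dvd_lucasL_of_le hk (by lia) hnk hfive
  lift b to ℕ using by lia
  exact lucasL_ne_of_lt hk₃ hkn hn (mod_cast hb) (mod_cast hb') hd h
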